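/- arXiv:1306.3910 — 2 statements merged into one kernel-verified Lean document; each statement's English description precedes it below -/
import Mathlib

section
/- Let r > 1/√2 be a real number and let X be a finite set of n points in Euclidean 4-space, each of norm r (i.e., X lies on the sphere S³_r of radius r centered at the origin), such that ‖x − y‖ ≤ 1 for all x, y ∈ X. Then the number of unordered pairs {x, y} ⊆ X with ‖x − y‖ = 1 is at most 2n − 2. -/
attribute [local instance] Classical.propDecidable

/-- The set of unordered pairs of points of `X` at distance exactly `1`
(the edges of the diameter graph of `X`, when `X` has diameter at most `1`). -/
noncomputable def unitPairs (X : Finset (EuclideanSpace ℝ (Fin 4))) :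
    Finset (Finset (EuclideanSpace ℝ (Fin 4))) :=
  (X.powersetCard 2).filter (fun s => ∀ x ∈ s, ∀ y ∈ s, x ≠ y → ‖x - y‖ = 1)

set_option maxHeartbeats 400000

structure DGFlow {V : Type*} [Fintype V] (Adj : V → V → Prop) (c : V → V → ℝ) : Prop where
  anti : ∀ a b, c b a = - c a b
  supp : ∀ a b, ¬ Adj a b → c a b = 0
  div : ∀ a, ∑ b, c a b = 0


theorem dg_count_dim {V : Type} [Fintype V] [LinearOrder V] [Nonempty V] (Adj : V → V → Prop)
    (hs : ∀ a b, Adj a b → Adj b a) (hi : ∀ a, ¬ Adj a a) :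
    ∃ F : Submodule ℝ (V → V → ℝ), (∀ c ∈ F, DGFlow Adj c) ∧
      Nat.card {p : V × V // p.1 < p.2 ∧ Adj p.1 p.2} + 1 ≤ Module.finrank ℝ F + Fintype.card V := by
  set E := {p : V × V // p.1 < p.2 ∧ Adj p.1 p.2} with hE
  let ext : (E → ℝ) →ₗ[ℝ] (V → V → ℝ) :=
    { toFun := fun c a b => if h : a < b ∧ Adj a b then c ⟨(a,b),h⟩ else
        if h : b < a ∧ Adj b a then - c ⟨(b,a),h⟩ else 0
      map_add' := by
        intro c d; ext a b; simp only [Pi.add_apply]; split_ifs <;> ring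
      map_smul' := by
        intro c d; ext a b; simp only [Pi.smul_apply, smul_eq_mul, RingHom.id_apply]; split_ifs <;> ring }
  have hanti : ∀ c a b, ext c b a = - ext c a b := by
    intro c a b
    simp only [ext, LinearMap.coe_mk, AddHom.coe_mk]
    by_cases h1 : a < b ∧ Adj a b
    · have h2 : ¬ (b < a ∧ Adj b a) := fun h => lt_asymm h.1 h1.1
      simp [h1, h2]
    · by_cases h2 : b < a ∧ Adj b a
      · simp [h1, h2]
      · simp [h1, h2]
  have hsupp : ∀ c a b, ¬ Adj a b → ext c a b = 0 := by
    intro c a b h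
    have h' : ¬ Adj b a := fun q => h (hs _ _ q)
    simp [ext, h, h']
  have hinj : Function.Injective ext := by
    intro c d h
    ext ⟨⟨a, b⟩, hp⟩
    have := congrFun (congrFun h a) b
    simpa [ext, hp] using this
  let dv : (E → ℝ) →ₗ[ℝ] (V → ℝ) :=
    { toFun := fun c a => ∑ b, ext c a b
      map_add' := by intro c d; ext a; simp [Finset.sum_add_distrib]
      map_smul' := by intro c d; ext a; simp [Finset.mul_sum] }
  have hrange : LinearMap.range dv ≤ LinearMap.ker (∑ a : V, LinearMap.proj (R := ℝ) (φ := fun _ => ℝ) a) := by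
    rintro _ ⟨c, rfl⟩
    simp only [LinearMap.mem_ker, LinearMap.coe_sum, Finset.sum_apply, LinearMap.proj_apply]
    have : ∑ a, dv c a = - ∑ a, dv c a := by
      conv_rhs => simp only [dv, LinearMap.coe_mk, AddHom.coe_mk]
      rw [Finset.sum_comm, ← Finset.sum_neg_distrib]
      simp only [dv, LinearMap.coe_mk, AddHom.coe_mk]
      refine Finset.sum_congr rfl fun a _ => ?_
      rw [← Finset.sum_neg_distrib]
      refine Finset.sum_congr rfl fun b _ => ?_
      rw [hanti c b a]
    linarith
  have hker : Module.finrank ℝ (LinearMap.ker (∑ a : V, LinearMap.proj (R := ℝ) (φ := fun _ => ℝ) a)) + 1 ≤ Fintype.card V := by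
    have h := Submodule.finrank_lt (s := LinearMap.ker (∑ a : V, LinearMap.proj (R := ℝ) (φ := fun _ => ℝ) a)) ?_
    · simpa using h
    · intro h
      have h2 : Pi.single (Classical.arbitrary V) (1:ℝ) ∈ LinearMap.ker (∑ a : V, LinearMap.proj (R := ℝ) (φ := fun _ => ℝ) a) := by rw [h]; trivial
      simp [LinearMap.mem_ker, LinearMap.coe_sum, Finset.sum_apply] at h2
  have h3 := LinearMap.finrank_range_add_finrank_ker dv
  have h4 := Submodule.finrank_mono hrange
  refine ⟨(LinearMap.ker dv).map ext, ?_, ?_⟩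
  · rintro _ ⟨c, hc, rfl⟩
    exact ⟨hanti c, hsupp c, fun a => congrFun hc a⟩
  · rw [← LinearEquiv.finrank_eq (Submodule.equivMapOfInjective ext hinj (LinearMap.ker dv))]
    simp only [Module.finrank_fintype_fun_eq_card] at h3
    have h6 : Nat.card E = Fintype.card E := Nat.card_eq_fintype_card
    omega

abbrev DGDart {V : Type} (Adj : V → V → Prop) := {p : V × V // Adj p.1 p.2} × Bool

theorem dg_count_darts {V : Type} [Fintype V] [LinearOrder V] (Adj : V → V → Prop)
    (hs : ∀ a b, Adj a b → Adj b a) (hi : ∀ a, ¬ Adj a a) :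
    Fintype.card (DGDart Adj) =
      4 * Nat.card {p : V × V // p.1 < p.2 ∧ Adj p.1 p.2} := by
  have e : {p : V × V // Adj p.1 p.2} ≃ {p : V × V // p.1 < p.2 ∧ Adj p.1 p.2} × Bool :=
    { toFun := fun p => if h : p.1.1 < p.1.2 then (⟨p.1, h, p.2⟩, true) else
        (⟨(p.1.2, p.1.1), lt_of_le_of_ne (not_lt.1 h) (fun q => hi p.1.1 (by have := p.2; change p.1.2 = p.1.1 at q; rw [q] at this; exact this)), hs _ _ p.2⟩, false)
      invFun := fun q => if q.2 then ⟨q.1.1, q.1.2.2⟩ else ⟨(q.1.1.2, q.1.1.1), hs _ _ q.1.2.2⟩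
      left_inv := by
        rintro ⟨⟨a, b⟩, h⟩
        by_cases hab : a < b <;> simp [hab]
      right_inv := by
        rintro ⟨⟨⟨a, b⟩, h⟩, t⟩
        have h1 : a < b := h.1
        have h2 : ¬ b < a := not_lt.2 h1.le
        cases t <;> simp [h1, h2] }
  rw [← Nat.card_eq_fintype_card, Nat.card_prod, Nat.card_congr e, Nat.card_prod]
  simp only [Nat.card_eq_fintype_card, Fintype.card_bool]
  ring

theorem dg_count {V : Type} [Fintype V] [LinearOrder V] [Nonempty V] (Adj : V → V → Prop)
    (hs : ∀ a b, Adj a b → Adj b a) (hi : ∀ a, ¬ Adj a a)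
    (w : V → V → Bool → (V → V → ℝ) →ₗ[ℝ] ℝ) (κ : ℝ) (hκ : κ ≠ 0)
    (hJ : ∀ x y, Adj x y → ∀ c, DGFlow Adj c → w x y true c - w x y false c = κ * c x y)
    (hN : ∀ x y s, Adj x y → ∀ c, DGFlow Adj c → w y x s c = - w x y s c)
    (hC : ∀ x y s, Adj x y → ∃ y', Adj x y' ∧ y' ≠ y ∧ ∀ c, DGFlow Adj c → w x y s c = w x y' (!s) c) :
    Nat.card {p : V × V // p.1 < p.2 ∧ Adj p.1 p.2} + 2 ≤ 2 * Fintype.card V := by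
  obtain ⟨F, hF, hdim⟩ := dg_count_dim Adj hs hi
  let f : DGDart Adj → Module.Dual ℝ F := fun d => (w d.1.1.1 d.1.1.2 d.2).comp F.subtype
  have hcardD : Fintype.card (DGDart Adj) = _ := dg_count_darts Adj hs hi
  obtain ⟨B, hB1, hB2, hB3⟩ := exists_linearIndependent ℝ (Set.range f)
  have hBfin : B.Finite := (Set.finite_range f).subset hB1
  have : Fintype B := hBfin.fintype
  -- the span is everything
  have hk : Module.finrank ℝ F ≤ Fintype.card B := by
    let g : F →ₗ[ℝ] (B → ℝ) := LinearMap.pi fun b => b.1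
    have hg : Function.Injective g := by
      rw [← LinearMap.ker_eq_bot, LinearMap.ker_eq_bot']
      intro c hc
      have h1 : ∀ φ ∈ Submodule.span ℝ B, φ c = 0 := by
        intro φ hφ
        induction hφ using Submodule.span_induction with
        | mem φ h => exact congrFun hc ⟨φ, h⟩
        | zero => simp
        | add a b _ _ ha hb => simp [ha, hb]
        | smul t a _ ha => simp [ha]
      have h2 : ∀ d, f d c = 0 := fun d => h1 _ (by rw [hB2]; exact Submodule.subset_span ⟨d, rfl⟩)
      ext x y
      by_cases hxy : Adj x y
      · have h3 := h2 (⟨(x, y), hxy⟩, true)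
        have h4 := h2 (⟨(x, y), hxy⟩, false)
        have h5 := hJ x y hxy c.1 (hF _ c.2)
        simp only [f, LinearMap.comp_apply, Submodule.subtype_apply] at h3 h4
        rw [h3, h4] at h5
        simp at h5
        simpa [hκ] using h5
      · simpa using (hF _ c.2).supp x y hxy
    simpa using LinearMap.finrank_le_finrank_of_injective hg
  -- fibers
  have hC' : ∀ (x y) (s) (h : Adj x y), ∃ y', ∃ h' : Adj x y', y' ≠ y ∧ f (⟨(x, y), h⟩, s) = f (⟨(x, y'), h'⟩, !s) := by
    intro x y s h
    obtain ⟨y', h', hne, he⟩ := hC x y s h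
    exact ⟨y', h', hne, by ext c; exact he c.1 (hF _ c.2)⟩
  have hN' : ∀ (x y) (s) (h : Adj x y), f (⟨(y, x), hs _ _ h⟩, s) = - f (⟨(x, y), h⟩, s) := by
    intro x y s h
    ext c; exact hN x y s h c.1 (hF _ c.2)
  have four : ∀ d : DGDart Adj, 4 ≤ (Finset.univ.filter fun d' : DGDart Adj => f d' = f d).card := by
    rintro ⟨⟨⟨x, y⟩, h⟩, s⟩
    change Adj x y at h
    obtain ⟨y', h', hy, e1⟩ := hC' x y s h
    obtain ⟨x0, h0, hx0, e2⟩ := hC' y x s (hs _ _ h)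
    obtain ⟨x1, h1, hx1, e3⟩ := hC' y' x (!s) (hs _ _ h')
    rw [Bool.not_not] at e3
    have k2 := hN' y x0 (!s) h0
    have k3 := hN' y' x1 s h1
    rw [← e2, hN' x y s h, neg_neg] at k2
    rw [← e3, hN' x y' (!s) h', neg_neg, ← e1] at k3
    have hsub : ({(⟨(x, y), h⟩, s), (⟨(x, y'), h'⟩, !s), (⟨(x0, y), hs _ _ h0⟩, !s), (⟨(x1, y'), hs _ _ h1⟩, s)} : Finset (DGDart Adj)) ⊆
        (Finset.univ.filter fun d' : DGDart Adj => f d' = f (⟨(x, y), h⟩, s)) := by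
      intro d hd
      simp only [Finset.mem_insert, Finset.mem_singleton] at hd
      rw [Finset.mem_filter]
      refine ⟨Finset.mem_univ _, ?_⟩
      rcases hd with rfl | rfl | rfl | rfl
      · rfl
      · exact e1.symm
      · exact k2
      · exact k3
    refine le_trans (le_of_eq ?_) (Finset.card_le_card hsub)
    have hy2 := hy.symm
    rw [Finset.card_insert_of_notMem, Finset.card_insert_of_notMem, Finset.card_insert_of_notMem,
      Finset.card_singleton]
    all_goals cases s <;> simp [hy, hy2]
  have eight : ∀ b : B, 8 ≤ (Finset.univ.filter fun d' : DGDart Adj => f d' = b.1 ∨ f d' = - b.1).card := by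
    intro b
    obtain ⟨d, hd⟩ := hB1 b.2
    obtain ⟨⟨⟨x, y⟩, h⟩, s⟩ := d
    rw [Finset.filter_or, Finset.card_union_of_disjoint]
    · have h1 := four (⟨(x, y), h⟩, s)
      have h2 := four (⟨(y, x), hs _ _ h⟩, s)
      rw [hN' x y s h] at h2
      rw [hd] at h1 h2
      omega
    · rw [Finset.disjoint_filter]
      intro d _ e1 e2
      have h0 : b.1 ≠ 0 := hB3.ne_zero b
      rw [e1] at e2
      have e3 : (2:ℝ) • b.1 = 0 := by rw [two_smul]; nth_rw 2 [e2]; simp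
      exact h0 ((smul_eq_zero.1 e3).resolve_left two_ne_zero)
  have hdisj : ∀ b ∈ (Finset.univ : Finset B), ∀ b' ∈ (Finset.univ : Finset B), b ≠ b' →
      Disjoint (Finset.univ.filter fun d' : DGDart Adj => f d' = b.1 ∨ f d' = - b.1)
       (Finset.univ.filter fun d' : DGDart Adj => f d' = b'.1 ∨ f d' = - b'.1) := by
    intro b _ b' _ hne
    rw [Finset.disjoint_filter]
    intro d _ e1 e2
    have h0 : b.1 = b'.1 ∨ b.1 = - b'.1 := by
      rcases e1 with e1 | e1 <;> rcases e2 with e2 | e2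
      · left; rw [← e1, e2]
      · right; rw [← e1, e2]
      · right; rw [← e2, e1, neg_neg]
      · left; exact neg_injective (by rw [← e1, e2])
    rcases h0 with h0 | h0
    · exact hne (Subtype.ext h0)
    · have h9 := Fintype.linearIndependent_iff.1 hB3 (Pi.single b 1 + Pi.single b' 1) (by
        simp [add_smul, Finset.sum_add_distrib, Pi.single_apply, h0]) b
      simp [hne] at h9
  have h8 : 8 * Fintype.card B ≤ Fintype.card (DGDart Adj) := by
    calc 8 * Fintype.card B = ∑ b : B, 8 := by simp [mul_comm]
      _ ≤ ∑ b : B, (Finset.univ.filter fun d' : DGDart Adj => f d' = b.1 ∨ f d' = - b.1).card :=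
          Finset.sum_le_sum fun b _ => eight b
      _ = _ := (Finset.card_biUnion hdisj).symm
      _ ≤ _ := Finset.card_le_univ _
  omega

def DGK {V M : Type} [Fintype V] [AddCommGroup M] [Module ℝ M] (Adj : V → V → Prop) (u : V → V → M)
    (x : V) (p : M) : Prop :=
  ∃ a : V → ℝ, (∀ b, 0 ≤ a b) ∧ (∀ b, ¬ Adj x b → a b = 0) ∧ p = ∑ b, a b • u x b

structure DGConf {V : Type} [Fintype V] (Adj : V → V → Prop) (u : V → V → (Fin 3 → ℝ)) : Prop where
  symm : ∀ a b, Adj a b → Adj b a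
  irr : ∀ a, ¬ Adj a a
  anti : ∀ a b, u b a = - u a b
  pointed : ∀ x (a : V → ℝ), (∀ b, 0 ≤ a b) → (∀ b, ¬ Adj x b → a b = 0) →
    ∑ b, a b • u x b = 0 → ∀ b, a b = 0
  disj : ∀ x y p, x ≠ y → DGK Adj u x p → DGK Adj u y p → p = 0
  opp : ∀ x y p, x ≠ y → DGK Adj u x p → DGK Adj u y (-p) → p = 0 ∨
    (Adj x y ∧ ∃ t : ℝ, 0 ≤ t ∧ p = t • u x y)
  extr : ∀ x y (a : V → ℝ), Adj x y → (∀ b, 0 ≤ a b) → (∀ b, ¬ Adj x b → a b = 0) →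
    a y = 0 → u x y ≠ ∑ b, a b • u x b
  deg : ∀ x y z, ∃ b, Adj x b ∧ b ≠ y ∧ b ≠ z

section geom
set_option linter.unusedSectionVars false
variable {V E : Type} [Fintype V] [NormedAddCommGroup E] [InnerProductSpace ℝ E]

structure DGSys (Adj : V → V → Prop) (e : V → E) (c : ℝ) : Prop where
  pos : 0 < c
  lt : c < 1
  one : ∀ a, inner ℝ (e a) (e a) = (1:ℝ)
  ge : ∀ a b, c ≤ inner ℝ (e a) (e b)
  lt1 : ∀ a b, a ≠ b → inner ℝ (e a) (e b) < (1:ℝ)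
  adj : ∀ a b, Adj a b ↔ a ≠ b ∧ inner ℝ (e a) (e b) = c

variable {Adj : V → V → Prop} {e : V → E} {c : ℝ}

theorem dg_in_adj (h : DGSys Adj e c) {x : V} {a : V → ℝ}
    (hs : ∀ b, ¬ Adj x b → a b = 0) : inner ℝ (∑ b, a b • e b) (e x) = c * ∑ b, a b := by
  rw [sum_inner, Finset.mul_sum]
  refine Finset.sum_congr rfl fun b _ => ?_
  rw [real_inner_smul_left]
  by_cases hb : Adj x b
  · rw [real_inner_comm, ((h.adj x b).1 hb).2]; ring
  · rw [hs b hb]; ring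

theorem dg_in_ge (h : DGSys Adj e c) (x : V) {a : V → ℝ}
    (ha : ∀ b, 0 ≤ a b) : c * ∑ b, a b ≤ inner ℝ (∑ b, a b • e b) (e x) := by
  rw [sum_inner, Finset.mul_sum]
  refine Finset.sum_le_sum fun b _ => ?_
  rw [real_inner_smul_left, mul_comm]
  exact mul_le_mul_of_nonneg_left (h.ge b x) (ha b)

theorem dg_le1 (h : DGSys Adj e c) (x y : V) : inner ℝ (e x) (e y) ≤ (1:ℝ) := by
  by_cases hxy : x = y
  · rw [hxy, h.one]
  · exact (h.lt1 x y hxy).le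

theorem dg_in_le (h : DGSys Adj e c) (x : V) {a : V → ℝ}
    (ha : ∀ b, 0 ≤ a b) : inner ℝ (∑ b, a b • e b) (e x) ≤ ∑ b, a b := by
  rw [sum_inner]
  refine Finset.sum_le_sum fun b _ => ?_
  rw [real_inner_smul_left]
  exact mul_le_of_le_one_right (ha b) (dg_le1 h b x)

theorem dg_in_eq (h : DGSys Adj e c) (x : V) {a : V → ℝ}
    (ha : ∀ b, 0 ≤ a b) (he : ∑ b, a b ≤ inner ℝ (∑ b, a b • e b) (e x)) :
    ∀ b, b ≠ x → a b = 0 := by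
  have h1 : ∑ b, a b * (1 - inner ℝ (e b) (e x)) ≤ 0 := by
    rw [sum_inner] at he
    simp only [real_inner_smul_left] at he
    simp only [mul_sub, mul_one, Finset.sum_sub_distrib]
    linarith
  have h2 : ∀ b ∈ Finset.univ, 0 ≤ a b * (1 - inner ℝ (e b) (e x)) := fun b _ =>
    mul_nonneg (ha b) (by linarith [dg_le1 h b x])
  have h3 := (Finset.sum_eq_zero_iff_of_nonneg h2).1 (le_antisymm h1 (Finset.sum_nonneg h2))
  intro b hb
  have h4 := h3 b (Finset.mem_univ _)
  rcases mul_eq_zero.1 h4 with h5 | h5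
  · exact h5
  · exact absurd (h.lt1 b x hb) (by linarith)

theorem dg_in2 (h : DGSys Adj e c) {a a' : V → ℝ} (ha : ∀ b, 0 ≤ a b) (ha' : ∀ b, 0 ≤ a' b) :
    c * (∑ b, a b) * (∑ b, a' b) ≤ inner ℝ (∑ b, a b • e b) (∑ b, a' b • e b) := by
  rw [inner_sum, Finset.mul_sum]
  refine Finset.sum_le_sum fun b _ => ?_
  rw [real_inner_smul_right, mul_comm]
  exact mul_le_mul_of_nonneg_left (dg_in_ge h b ha) (ha' b)

theorem dg_zero {a : V → ℝ} (ha : ∀ b, 0 ≤ a b) (hA : ∑ b, a b ≤ 0) : ∀ b, a b = 0 := fun b =>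
  (Finset.sum_eq_zero_iff_of_nonneg fun b _ => ha b).1
    (le_antisymm hA (Finset.sum_nonneg fun b _ => ha b)) b (Finset.mem_univ _)

theorem dg_i (h : DGSys Adj e c) {x : V} {a : V → ℝ} {s : ℝ} (ha : ∀ b, 0 ≤ a b)
    (hs : ∀ b, ¬ Adj x b → a b = 0) (he : ∑ b, a b • e b = s • e x) : ∀ b, a b = 0 := by
  have h1 := dg_in_adj h hs
  have h2 := dg_in2 h ha ha
  rw [he] at h1 h2
  simp only [real_inner_smul_left, real_inner_smul_right, h.one] at h1 h2
  have hA : 0 ≤ ∑ b, a b := Finset.sum_nonneg fun b _ => ha b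
  apply dg_zero ha
  by_contra hlt
  push Not at hlt
  have h3 : s = c * ∑ b, a b := by linarith
  rw [h3] at h2
  have := mul_pos (mul_pos h.pos (sub_pos.2 h.lt)) (mul_pos hlt hlt)
  nlinarith

theorem dg_ii (h : DGSys Adj e c) {x x' : V} (hx : x ≠ x') {a a' : V → ℝ} {s s' : ℝ} (hs0 : 0 ≤ s)
    (hs0' : 0 ≤ s')
    (ha : ∀ b, 0 ≤ a b) (hs : ∀ b, ¬ Adj x b → a b = 0)
    (ha' : ∀ b, 0 ≤ a' b) (hs' : ∀ b, ¬ Adj x' b → a' b = 0)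
    (he : ∑ b, a b • e b - s • e x = ∑ b, a' b • e b - s' • e x') : s = 0 := by
  have h1 := congrArg (fun v => inner ℝ v (e x)) he
  have h2 := congrArg (fun v => inner ℝ v (e x')) he
  simp only [inner_sub_left, real_inner_smul_left, h.one] at h1 h2
  rw [dg_in_adj h hs] at h1
  rw [dg_in_adj h hs'] at h2
  rw [real_inner_comm (e x) (e x')] at h1
  have h3 := dg_in_ge h x ha'
  have h4 := dg_in_ge h x' ha
  have h5 := h.lt1 x x' hx
  have h6 : (s + s') * (1 - inner ℝ (e x) (e x')) ≤ 0 := by linarith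
  have h7 : s + s' ≤ 0 := by
    by_contra hh; push Not at hh
    have := mul_pos hh (sub_pos.2 h5)
    linarith
  linarith

theorem dg_iii (h : DGSys Adj e c) {x y : V} (hx : x ≠ y) {a b : V → ℝ} {s s' : ℝ}
    (ha : ∀ b, 0 ≤ a b) (hs : ∀ b, ¬ Adj x b → a b = 0)
    (hb : ∀ k, 0 ≤ b k) (hs' : ∀ k, ¬ Adj y k → b k = 0)
    (he : ∑ k, a k • e k + ∑ k, b k • e k = s' • e y + s • e x) :
    (∀ k, a k = 0) ∨ (∀ k, b k = 0) ∨ (Adj x y ∧ ((∀ k, k ≠ y → a k = 0) ∨ (∀ k, k ≠ x → b k = 0))) := by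
  by_cases hA : ∑ k, a k ≤ 0
  · exact Or.inl (dg_zero ha hA)
  by_cases hB : ∑ k, b k ≤ 0
  · exact Or.inr (Or.inl (dg_zero hb hB))
  push Not at hA hB
  right; right
  have e1 := dg_in_adj h hs
  have e2 := dg_in_adj h hs'
  have e3 := dg_in_ge h y ha
  have e4 := dg_in_le h y ha
  have e5 := dg_in_ge h x hb
  have e6 := dg_in_le h x hb
  have e7 := dg_in2 h ha hb
  have e8 := dg_in_eq h y ha
  have e9 := dg_in_eq h x hb
  set U := ∑ k, a k • e k with hU
  set W := ∑ k, b k • e k with hW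
  set A := ∑ k, a k
  set B := ∑ k, b k
  set d : ℝ := inner ℝ (e x) (e y) with hd
  have hd1 : d < 1 := h.lt1 x y hx
  have hdc : c ≤ d := h.ge x y
  have hc0 := h.pos
  have hc1 := h.lt
  set α : ℝ := inner ℝ U (e y) with hα
  set β : ℝ := inner ℝ W (e x) with hβ
  have key : (1 - d^2) * inner ℝ U W ≤ c * A * β + α * (c * B) - d * (c * A * (c * B) + α * β) := by
    have hWe : W = s' • e y + s • e x - U := by rw [← he]; abel
    -- component orthogonal
    have h0 : (0:ℝ) ≤ inner ℝ ((1 - d^2) • U - (c*A - d*α) • e x - (α - d*(c*A)) • e y)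
      ((1 - d^2) • U - (c*A - d*α) • e x - (α - d*(c*A)) • e y) := real_inner_self_nonneg
    have f1 : inner ℝ (e x) (e x) = (1:ℝ) := h.one x
    have f2 : inner ℝ (e y) (e y) = (1:ℝ) := h.one y
    have f3 : inner ℝ (e y) (e x) = d := by rw [real_inner_comm]
    have f4 : inner ℝ (e x) U = c * A := by rw [real_inner_comm, e1]
    have f5 : inner ℝ (e y) U = α := by rw [real_inner_comm]
    have g1 : c * B = s' + s * d - α := by
      rw [← e2, hWe]
      simp only [inner_sub_left, inner_add_left, real_inner_smul_left, f2]
      rw [← hd, ← hα]; ring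
    have g2 : β = s' * d + s - c * A := by
      rw [hβ, hWe]
      simp only [inner_sub_left, inner_add_left, real_inner_smul_left, f1, f3, e1]; ring
    have g3 : inner ℝ U W = s' * α + s * (c*A) - inner ℝ U U := by
      rw [hWe]
      simp only [inner_sub_right, inner_add_right, real_inner_smul_right, e1]; rw [← hα]
    simp only [inner_sub_right, inner_sub_left, real_inner_smul_right, real_inner_smul_left, f1, f2, f3, f4, f5, e1] at h0
    rw [← hα, ← hd] at h0
    have hpos : 0 < 1 - d^2 := by nlinarith
    have h0' : 0 ≤ (1 - d^2) * ((1-d^2) * inner ℝ U U - (c*A)^2 - α^2 + 2 * d * (c*A) * α) := by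
      linarith
    have h00 := nonneg_of_mul_nonneg_right h0' hpos
    rw [g3, g1, g2]
    nlinarith
  have hpos : 0 < 1 - d^2 := by nlinarith
  have key2 : (1 - d^2) * (c * A * B) ≤ c * A * β + α * (c * B) - d * (c * A * (c * B) + α * β) :=
    le_trans (mul_le_mul_of_nonneg_left e7 hpos.le) key
  -- normalise
  obtain ⟨p, hp⟩ : ∃ p, α = A * p := ⟨α / A, by field_simp⟩
  obtain ⟨q, hq⟩ : ∃ q, β = B * q := ⟨β / B, by field_simp⟩
  have hp1 : c ≤ p := by
    by_contra hh; push Not at hh; nlinarith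
  have hp2 : p ≤ 1 := by
    by_contra hh; push Not at hh; nlinarith
  have hq1 : c ≤ q := by
    by_contra hh; push Not at hh; nlinarith
  have hq2 : q ≤ 1 := by
    by_contra hh; push Not at hh; nlinarith
  have key3 : 0 ≤ c * (p + q) - d * c^2 - d * p * q - c * (1 - d^2) := by
    have : 0 ≤ (A * B) * (c * (p + q) - d * c^2 - d * p * q - c * (1 - d^2)) := by
      rw [hp, hq] at key2; nlinarith
    exact nonneg_of_mul_nonneg_right this (mul_pos hA hB)
  have hbil : (1 - c)^2 * (c * (p + q) - d * c^2 - d * p * q - c * (1 - d^2)) =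
      (1-p)*(1-q)*(c*(1-d)*(2*c-1-d)) + ((1-p)*(q-c) + (p-c)*(1-q)) * (c*(1-d)*(c-d))
       + (p-c)*(q-c)*((c-d)*(1-c*d)) := by ring
  rcases eq_or_lt_of_le hdc with hdc | hdc
  · refine ⟨(h.adj x y).2 ⟨hx, hdc.symm⟩, ?_⟩
    rw [← hdc] at key3
    have h6 : c * ((1 - p) * (1 - q)) ≤ 0 := by nlinarith
    have h7 : (1 - p) * (1 - q) ≤ 0 := by
      by_contra hh; push Not at hh; nlinarith
    have h8 : (1 - p) * (1 - q) = 0 := le_antisymm h7 (mul_nonneg (by linarith) (by linarith))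
    rcases mul_eq_zero.1 h8 with h9 | h9
    · left; apply e8; rw [hp]; have : p = 1 := by linarith
      rw [this]; linarith
    · right; apply e9; rw [hq]; have : q = 1 := by linarith
      rw [this]; linarith
  · exfalso
    have k1 : c*(1-d)*(2*c-1-d) < 0 := mul_neg_of_pos_of_neg (mul_pos hc0 (by linarith)) (by linarith)
    have k2 : c*(1-d)*(c-d) < 0 := mul_neg_of_pos_of_neg (mul_pos hc0 (by linarith)) (by linarith)
    have k3 : (c-d)*(1-c*d) < 0 := mul_neg_of_neg_of_pos (by linarith) (by nlinarith)
    have m1 : 0 ≤ (1-p)*(1-q) := mul_nonneg (by linarith) (by linarith)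
    have m2 : 0 ≤ (1-p)*(q-c) := mul_nonneg (by linarith) (by linarith)
    have m3 : 0 ≤ (p-c)*(1-q) := mul_nonneg (by linarith) (by linarith)
    have m4 : 0 ≤ (p-c)*(q-c) := mul_nonneg (by linarith) (by linarith)
    have m5 : 0 < (1-p)*(1-q) + ((1-p)*(q-c) + (p-c)*(1-q)) + (p-c)*(q-c) := by
      have : (1-p)*(1-q) + ((1-p)*(q-c) + (p-c)*(1-q)) + (p-c)*(q-c) = (1-c)*(1-c) := by ring
      rw [this]; exact mul_pos (by linarith) (by linarith)
    have n0 := mul_nonneg (sq_nonneg (1-c)) key3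
    rw [hbil] at n0
    set P1 := (1-p)*(1-q)
    set P2 := ((1-p)*(q-c) + (p-c)*(1-q))
    have m23 : 0 ≤ P2 := add_nonneg m2 m3
    set P4 := (p-c)*(q-c)
    have r1 := mul_nonpos_of_nonneg_of_nonpos m1 k1.le
    have r2 := mul_nonpos_of_nonneg_of_nonpos m23 k2.le
    have r3 := mul_nonpos_of_nonneg_of_nonpos m4 k3.le
    have z1 : P1 = 0 := by
      by_contra hh
      have := mul_neg_of_pos_of_neg (lt_of_le_of_ne m1 (Ne.symm hh)) k1
      linarith
    have z2 : P2 = 0 := by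
      by_contra hh
      have := mul_neg_of_pos_of_neg (lt_of_le_of_ne m23 (Ne.symm hh)) k2
      linarith
    have z3 : P4 = 0 := by
      by_contra hh
      have := mul_neg_of_pos_of_neg (lt_of_le_of_ne m4 (Ne.symm hh)) k3
      linarith
    linarith

theorem dg_iv (h : DGSys Adj e c) {x y x1 : V} (hxy : Adj x y) (hx1 : Adj y x1) (hne : x1 ≠ x)
    {a : V → ℝ} {s : ℝ} (ha : ∀ b, 0 ≤ a b) (hs : ∀ b, ¬ Adj x b → a b = 0) (hay : a y = 0)
    (he : e y = ∑ b, a b • e b - s • e x) : False := by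
  have h1 := congrArg (fun v => inner ℝ v (e x)) he
  have h2 := congrArg (fun v => inner ℝ v (e x1)) he
  have h3 := congrArg (fun v => inner ℝ v (e y)) he
  simp only [inner_sub_left, real_inner_smul_left, h.one] at h1 h2 h3
  rw [dg_in_adj h hs, real_inner_comm, ((h.adj x y).1 hxy).2] at h1
  rw [((h.adj y x1).1 hx1).2] at h2
  rw [((h.adj x y).1 hxy).2] at h3
  have h4 := dg_in_ge h x1 ha
  have h5 := h.lt1 x x1 hne.symm
  have h6 := dg_in_le h y ha
  have h7 := dg_in_eq h y ha
  set A := ∑ b, a b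
  have hc0 := h.pos
  have hc1 := h.lt
  have hsA : s = c * (A - 1) := by linarith
  have hA1 : A ≤ 1 := by
    by_contra hh; push Not at hh
    have : 0 < s := by rw [hsA]; exact mul_pos hc0 (by linarith)
    nlinarith
  have hA2 : A = 1 := by
    by_contra hh
    have : A < 1 := lt_of_le_of_ne hA1 hh
    rw [hsA] at h3
    nlinarith [mul_pos (sub_pos.2 this) (show 0 < 1 - c^2 by nlinarith)]
  have h8 := h7 (by rw [hsA, hA2] at h3; linarith)
  have h9 : A = 0 := Finset.sum_eq_zero fun b _ => by
    by_cases hb : b = y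
    · rw [hb, hay]
    · exact h8 b hb
  linarith

theorem dg_abel {P Q R S : E} (h : -(P - Q) = R - S) : P + R = S + Q := by
  have : R = -(P - Q) + S := by rw [h]; abel
  rw [this]; abel

theorem dg_conf (h : DGSys Adj e c) (hdim : Module.finrank ℝ E = 4) [Nonempty V]
    (hdeg : ∀ x y z, ∃ b, Adj x b ∧ b ≠ y ∧ b ≠ z) :
    ∃ u : V → V → (Fin 3 → ℝ), DGConf Adj u := by
  have : FiniteDimensional ℝ E := FiniteDimensional.of_finrank_pos (by omega)
  let o : E := e (Classical.arbitrary V)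
  have ho0 : o ≠ 0 := by
    intro h0
    have := h.one (Classical.arbitrary V)
    change inner ℝ o o = (1:ℝ) at this
    rw [h0] at this
    simp at this
  have ho : ∀ a, 0 < (inner ℝ o (e a) : ℝ) := fun a => lt_of_lt_of_le h.pos (h.ge _ a)
  have hfr : Module.finrank ℝ (ℝ ∙ o)ᗮ = Module.finrank ℝ (Fin 3 → ℝ) := by
    have h1 := Submodule.finrank_add_finrank_orthogonal (ℝ ∙ o)
    rw [finrank_span_singleton ho0] at h1
    simp
    omega
  let Φ := LinearEquiv.ofFinrankEq (R := ℝ) (ℝ ∙ o)ᗮ (Fin 3 → ℝ) hfr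
  let v : V → V → (ℝ ∙ o)ᗮ := fun a b =>
    ⟨(inner ℝ o (e a) : ℝ) • e b - (inner ℝ o (e b) : ℝ) • e a, by
      rw [Submodule.mem_orthogonal_singleton_iff_inner_right]
      simp only [inner_sub_right, real_inner_smul_right]; ring⟩
  let ψ : (Fin 3 → ℝ) →ₗ[ℝ] E := (Submodule.subtype _).comp Φ.symm.toLinearMap
  have hψ : ∀ a b, ψ (Φ (v a b)) = (inner ℝ o (e a) : ℝ) • e b - (inner ℝ o (e b) : ℝ) • e a := by
    intro a b
    simp [ψ, v]
  have hsum : ∀ x (a : V → ℝ), ψ (∑ b, a b • Φ (v x b)) =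
      ∑ b, (inner ℝ o (e x) * a b : ℝ) • e b - (∑ b, a b * inner ℝ o (e b) : ℝ) • e x := by
    intro x a
    simp only [map_sum, map_smul, hψ, smul_sub, Finset.sum_sub_distrib, Finset.sum_smul, smul_smul]
    simp only [mul_comm]
  have hs : ∀ a b, Adj a b → Adj b a := by
    intro a b hab
    rw [h.adj] at hab ⊢
    exact ⟨hab.1.symm, by rw [real_inner_comm]; exact hab.2⟩
  have hpos : ∀ (a : V → ℝ), (∀ b, 0 ≤ a b) → 0 ≤ (∑ b, a b * inner ℝ o (e b) : ℝ) := fun a ha =>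
    Finset.sum_nonneg fun b _ => mul_nonneg (ha b) (ho b).le
  have hz : ∀ (a : V → ℝ), (∀ b, 0 ≤ a b) → (∑ b, a b * inner ℝ o (e b) : ℝ) = 0 → ∀ b, a b = 0 := by
    intro a ha h0 b
    have := (Finset.sum_eq_zero_iff_of_nonneg fun b _ => mul_nonneg (ha b) (ho b).le).1 h0 b (Finset.mem_univ _)
    exact (mul_eq_zero.1 this).resolve_right (ho b).ne'
  have hn : ∀ (x : V) (a : V → ℝ), (∀ b, 0 ≤ a b) → ∀ b, 0 ≤ (inner ℝ o (e x) * a b : ℝ) :=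
    fun x a ha b => mul_nonneg (ho x).le (ha b)
  have hn0 : ∀ (x y : V) (a : V → ℝ), (∀ b, ¬ Adj x b → a b = 0) → ∀ b, ¬ Adj x b →
      (inner ℝ o (e y) * a b : ℝ) = 0 := by
    intro x y a ha b hb; rw [ha b hb, mul_zero]
  have anti : ∀ a b, Φ (v b a) = - Φ (v a b) := by
    intro a b
    rw [← map_neg]
    congr 1
    ext1
    simp [v]
  refine ⟨fun a b => Φ (v a b), hs, ?_, anti, ?_, ?_, ?_, ?_, hdeg⟩
  · intro a ha
    exact ((h.adj a a).1 ha).1 rfl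
  · intro x a ha hsup h0 b
    have h1 := hsum x a
    rw [h0, map_zero] at h1
    have := dg_i h (hn x a ha) (hn0 x x a hsup) (sub_eq_zero.1 h1.symm) b
    exact (mul_eq_zero.1 this).resolve_left (ho x).ne'
  · rintro x y p hxy ⟨a, ha, hsa, hpa⟩ ⟨b, hb, hsb, hpb⟩
    have h1 := hsum x a
    have h2 := hsum y b
    rw [← hpa] at h1
    rw [← hpb] at h2
    have h3 := dg_ii h hxy (hpos a ha) (hpos b hb) (hn x a ha) (hn0 x x a hsa) (hn y b hb)
      (hn0 y y b hsb) (h1.symm.trans h2)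
    rw [hpa]
    exact Finset.sum_eq_zero fun k _ => by rw [hz a ha h3 k, zero_smul]
  · rintro x y p hxy ⟨a, ha, hsa, hpa⟩ ⟨b, hb, hsb, hpb⟩
    have h1 := hsum x a
    have h2 := hsum y b
    rw [← hpa] at h1
    rw [← hpb, map_neg] at h2
    have h3 := dg_iii h hxy (hn x a ha) (hn0 x x a hsa) (hn y b hb)
      (hn0 y y b hsb) (s := (∑ b, a b * inner ℝ o (e b) : ℝ)) (s' := (∑ k, b k * inner ℝ o (e k) : ℝ)) (by
        rw [h1] at h2
        exact dg_abel h2)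
    rcases h3 with h3 | h3 | ⟨hadj, h3 | h3⟩
    · left
      rw [hpa]
      refine Finset.sum_eq_zero fun k _ => ?_
      rw [(mul_eq_zero.1 (h3 k)).resolve_left (ho x).ne', zero_smul]
    · left
      rw [← neg_eq_zero, hpb]
      refine Finset.sum_eq_zero fun k _ => ?_
      rw [(mul_eq_zero.1 (h3 k)).resolve_left (ho y).ne', zero_smul]
    · right
      refine ⟨hadj, a y, ha y, ?_⟩
      rw [hpa]
      refine Finset.sum_eq_single y (fun k _ hk => ?_) (by simp)
      rw [(mul_eq_zero.1 (h3 k hk)).resolve_left (ho x).ne', zero_smul]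
    · right
      refine ⟨hadj, b x, hb x, ?_⟩
      rw [← neg_inj, hpb, ← smul_neg, ← anti]
      refine Finset.sum_eq_single x (fun k _ hk => ?_) (by simp)
      rw [(mul_eq_zero.1 (h3 k hk)).resolve_left (ho y).ne', zero_smul]
  · intro x y a hxy ha hsa hay he
    obtain ⟨x1, hx1, hne, -⟩ := hdeg y x x
    have h1 := congrArg ψ he
    rw [hsum, hψ] at h1
    have hox := (ho x).ne'
    refine dg_iv h hxy hx1 hne ha hsa hay (s := ((∑ b, a b * inner ℝ o (e b) : ℝ) - inner ℝ o (e y)) / inner ℝ o (e x)) ?_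
    have h2 : (inner ℝ o (e x) : ℝ) • e y = (inner ℝ o (e x) : ℝ) • (∑ b, a b • e b) -
        ((∑ b, a b * inner ℝ o (e b) : ℝ) - inner ℝ o (e y)) • e x := by
      rw [Finset.smul_sum, sub_smul]
      simp only [smul_smul]
      rw [eq_sub_iff_add_eq, ← add_sub_assoc, sub_eq_iff_eq_add]
      rw [sub_eq_iff_eq_add] at h1
      rw [h1]; abel
    refine smul_right_injective E hox ?_
    change (inner ℝ o (e x) : ℝ) • e y = (inner ℝ o (e x) : ℝ) • (_ - _)
    rw [h2, smul_sub, smul_smul, mul_div_cancel₀ _ hox]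
end geom

section topo
open Complex

def dgd (v w : Fin 3 → ℝ) : ℝ := v 0 * w 0 + v 1 * w 1 + v 2 * w 2

def dgt (p v w : Fin 3 → ℝ) : ℝ :=
  p 0 * (v 1 * w 2 - v 2 * w 1) + p 1 * (v 2 * w 0 - v 0 * w 2) + p 2 * (v 0 * w 1 - v 1 * w 0)

def dgx (v w : Fin 3 → ℝ) : Fin 3 → ℝ :=
  ![v 1 * w 2 - v 2 * w 1, v 2 * w 0 - v 0 * w 2, v 0 * w 1 - v 1 * w 0]

noncomputable def dgz (p v w : Fin 3 → ℝ) : ℂ :=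
  ⟨dgd v w * dgd p p - dgd v p * dgd w p, √(dgd p p) * dgt p v w⟩

theorem dgd_self_nonneg (v : Fin 3 → ℝ) : 0 ≤ dgd v v := by
  unfold dgd; nlinarith [sq_nonneg (v 0), sq_nonneg (v 1), sq_nonneg (v 2)]

theorem dgd_self_pos {v : Fin 3 → ℝ} (h : v ≠ 0) : 0 < dgd v v := by
  refine lt_of_le_of_ne (dgd_self_nonneg v) fun h0 => h ?_
  unfold dgd at h0
  have h1 : v 0 = 0 := by nlinarith [sq_nonneg (v 0), sq_nonneg (v 1), sq_nonneg (v 2)]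
  have h2 : v 1 = 0 := by nlinarith [sq_nonneg (v 0), sq_nonneg (v 1), sq_nonneg (v 2)]
  have h3 : v 2 = 0 := by nlinarith [sq_nonneg (v 0), sq_nonneg (v 1), sq_nonneg (v 2)]
  ext i; fin_cases i <;> simp [h1, h2, h3]

theorem dg_sqrt (p : Fin 3 → ℝ) : √(dgd p p) * √(dgd p p) = dgd p p :=
  Real.mul_self_sqrt (dgd_self_nonneg p)

theorem dgz_mul (p v w s : Fin 3 → ℝ) : dgz p v w * dgz p w s = dgz p w w * dgz p v s := by
  have h := dg_sqrt p
  apply Complex.ext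
  · simp only [dgz, Complex.mul_re]
    generalize √(dgd p p) = q at h
    have : q * dgt p v w * (q * dgt p w s) = dgd p p * dgt p v w * dgt p w s := by rw [← h]; ring
    rw [this]
    simp only [dgd, dgt]
    ring
  · simp only [dgz, Complex.mul_im]
    generalize √(dgd p p) = q at h
    have : (dgd v w * dgd p p - dgd v p * dgd w p) * dgt p w s + dgt p v w * (dgd w s * dgd p p - dgd w p * dgd s p)
      = (dgd w w * dgd p p - dgd w p * dgd w p) * dgt p v s := by
      simp only [dgd, dgt]; ring
    have h2 : dgt p w w = 0 := by simp only [dgt]; ring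
    rw [h2]
    linear_combination q * this

theorem dgz_comm (p v w : Fin 3 → ℝ) : dgz p w v = (starRingEnd ℂ) (dgz p v w) := by
  apply Complex.ext <;> simp [dgz, dgd, dgt] <;> ring

theorem dgz_negp (p v w : Fin 3 → ℝ) : dgz (-p) v w = (starRingEnd ℂ) (dgz p v w) := by
  have : dgd (-p) (-p) = dgd p p := by simp [dgd]
  apply Complex.ext
  · simp only [dgz, this, Complex.conj_re]; simp [dgd]; ring
  · simp only [dgz, this, Complex.conj_im]; simp [dgt]; ring

theorem dgz_negw (p v w : Fin 3 → ℝ) : dgz p v (-w) = - dgz p v w := by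
  apply Complex.ext <;> simp [dgz, dgd, dgt] <;> ring

theorem dgz_self (p w : Fin 3 → ℝ) : dgz p w w = ((dgd w w * dgd p p - dgd w p * dgd w p : ℝ) : ℂ) := by
  apply Complex.ext <;> simp [dgz, dgt]
  right; ring

theorem dgz_self_nonneg (p w : Fin 3 → ℝ) : 0 ≤ dgd w w * dgd p p - dgd w p * dgd w p := by
  have : dgd w w * dgd p p - dgd w p * dgd w p = dgd (dgx w p) (dgx w p) := by
    simp [dgd, dgx]; ring
  rw [this]; exact dgd_self_nonneg _

theorem dgz_ne {p v w : Fin 3 → ℝ} (h : dgz p v w ≠ 0) : dgz p v v ≠ 0 ∧ dgz p w w ≠ 0 := by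
  have h1 := dgz_mul p v w v
  have h2 : dgz p w v ≠ 0 := by rw [dgz_comm]; simpa using h
  have h3 := mul_ne_zero h h2
  rw [h1] at h3
  exact ⟨right_ne_zero_of_mul h3, left_ne_zero_of_mul h3⟩

theorem dgz_ne' {p v w : Fin 3 → ℝ} (h : dgz p v v ≠ 0) (h' : dgz p w w ≠ 0) : dgz p v w ≠ 0 := by
  have h1 := dgz_mul p v w v
  have h3 := mul_ne_zero h' h
  rw [← h1] at h3
  exact left_ne_zero_of_mul h3

theorem dg_arg1 {p e v w : Fin 3 → ℝ} (he : dgz p e e ≠ 0) (h : dgz p v w ≠ 0) :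
    ∃ k : ℤ, arg (dgz p v w) = arg (dgz p e w) - arg (dgz p e v) + 2 * Real.pi * k := by
  obtain ⟨hv, hw⟩ := dgz_ne h
  have h1 := dgz_mul p e v w
  have hpos : 0 < dgd v v * dgd p p - dgd v p * dgd v p := by
    refine lt_of_le_of_ne (dgz_self_nonneg p v) fun h0 => hv ?_
    rw [dgz_self, ← h0]; simp
  have h2 := congrArg (fun z => (arg z : Real.Angle)) h1
  rw [dgz_self, Complex.arg_real_mul _ hpos, Complex.arg_mul_coe_angle (dgz_ne' he hv) h,
    ← Real.Angle.coe_add, Real.Angle.angle_eq_iff_two_pi_dvd_sub] at h2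
  obtain ⟨k, hk⟩ := h2
  exact ⟨k, by linarith⟩

theorem dg_arg2 {p e w : Fin 3 → ℝ} (he : dgz p e e ≠ 0) (hw : dgz p w w ≠ 0) :
    ∃ k : ℤ, arg (dgz p e (-w)) = arg (dgz p e w) + Real.pi + 2 * Real.pi * k := by
  have h2 := Complex.arg_neg_coe_angle (dgz_ne' he hw)
  rw [← dgz_negw, ← Real.Angle.coe_add, Real.Angle.angle_eq_iff_two_pi_dvd_sub] at h2
  obtain ⟨k, hk⟩ := h2
  exact ⟨k, by linarith⟩

theorem dgz_cont (v w : Fin 3 → ℝ) : Continuous fun p => dgz p v w := by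
  have h : (fun p => dgz p v w) = fun p => ((dgd v w * dgd p p - dgd v p * dgd w p : ℝ) : ℂ) +
      ((√(dgd p p) * dgt p v w : ℝ) : ℂ) * I := by
    ext p; apply Complex.ext <;> simp [dgz]
  rw [h]
  have h1 : Continuous fun p : Fin 3 → ℝ => dgd p p := by unfold dgd; fun_prop
  have h2 : ∀ v, Continuous fun p : Fin 3 → ℝ => dgd v p := by intro v; unfold dgd; fun_prop
  have h3 : Continuous fun p : Fin 3 → ℝ => dgt p v w := by unfold dgt; fun_prop
  have h4 := h2 v
  have h5 := h2 w
  fun_prop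

/-- cone on two vectors -/
def DGC (v w p : Fin 3 → ℝ) : Prop := ∃ a b : ℝ, 0 ≤ a ∧ 0 ≤ b ∧ p = a • v + b • w

theorem dg_decomp (p v w : Fin 3 → ℝ) (h : dgt p v w = 0) (hn : dgd (dgx v w) (dgx v w) ≠ 0) :
    ∃ a b : ℝ, p = a • v + b • w := by
  refine ⟨dgt p w (dgx v w) / dgd (dgx v w) (dgx v w), dgt p (dgx v w) v / dgd (dgx v w) (dgx v w), ?_⟩
  have key : dgd (dgx v w) (dgx v w) • p = dgt p w (dgx v w) • v + dgt p (dgx v w) v • w + dgt p v w • dgx v w := by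
    ext i
    fin_cases i <;> simp [dgd, dgt, dgx] <;> ring
  rw [h, zero_smul, add_zero] at key
  refine smul_right_injective _ hn ?_
  change _ • p = _ • (_ + _)
  rw [key, smul_add, smul_smul, smul_smul, mul_div_cancel₀ _ hn, mul_div_cancel₀ _ hn]

theorem dg_slit {p v w : Fin 3 → ℝ} (hn : dgx v w ≠ 0) (h1 : ¬ DGC v w p) (h2 : ¬ DGC v w (-p)) :
    dgz p v w ∈ slitPlane := by
  have hp : p ≠ 0 := by
    rintro rfl; exact h1 ⟨0, 0, le_rfl, le_rfl, by simp⟩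
  have hpp := dgd_self_pos hp
  rw [mem_slitPlane_iff]
  by_cases ht : dgt p v w = 0
  · left
    have hnn := dgd_self_pos hn
    obtain ⟨a, b, hab⟩ := dg_decomp p v w ht hnn.ne'
    have hre : (dgz p v w).re = - (a * b) * dgd (dgx v w) (dgx v w) := by
      subst hab
      simp [dgz, dgd, dgx]; ring
    rw [hre]
    refine mul_pos ?_ hnn
    by_contra hneg
    have hneg : 0 ≤ a * b := by linarith
    rcases mul_nonneg_iff.1 hneg with ⟨ha, hb⟩ | ⟨ha, hb⟩
    · exact h1 ⟨a, b, ha, hb, hab⟩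
    · exact h2 ⟨-a, -b, by linarith, by linarith, by rw [hab]; simp; abel⟩
  · right
    simp only [dgz]
    exact mul_ne_zero (Real.sqrt_pos.2 hpp).ne' ht

variable {V : Type} [Fintype V]

noncomputable def dgr (Adj : V → V → Prop) (u : V → V → (Fin 3 → ℝ)) (a : V) : Fin 3 → ℝ :=
  ∑ b, (if Adj a b then (1:ℝ) else 0) • u a b

noncomputable def dgW (Adj : V → V → Prop) (u : V → V → (Fin 3 → ℝ)) (p : Fin 3 → ℝ) :
    (V → V → ℝ) →ₗ[ℝ] ℝ where
  toFun c := ∑ a, ∑ b, c a b * arg (dgz p (dgr Adj u a) (u a b))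
  map_add' c d := by simp [add_mul, Finset.sum_add_distrib]
  map_smul' t c := by simp [mul_assoc, Finset.mul_sum]

def DGGood (Adj : V → V → Prop) (u : V → V → (Fin 3 → ℝ)) (p : Fin 3 → ℝ) : Prop :=
  ∀ a b, Adj a b → dgz p (dgr Adj u a) (u a b) ∈ slitPlane

variable {Adj : V → V → Prop} {u : V → V → (Fin 3 → ℝ)}

theorem dgW_neg {p : Fin 3 → ℝ} {c : V → V → ℝ} (hc : DGFlow Adj c) (hp : DGGood Adj u p) :
    dgW Adj u (-p) c = - dgW Adj u p c := by
  simp only [dgW, LinearMap.coe_mk, AddHom.coe_mk]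
  rw [← Finset.sum_neg_distrib]
  refine Finset.sum_congr rfl fun a _ => ?_
  rw [← Finset.sum_neg_distrib]
  refine Finset.sum_congr rfl fun b _ => ?_
  by_cases hab : Adj a b
  · have h := hp a b hab
    rw [dgz_negp, Complex.arg_conj, if_neg (Complex.mem_slitPlane_iff_arg.1 h).1]; ring
  · rw [hc.supp a b hab]; ring

theorem dgW_vals {p : Fin 3 → ℝ} {c : V → V → ℝ} (hanti : ∀ a b, u b a = - u a b)
    (hc : DGFlow Adj c)
    (hp : DGGood Adj u p) : ∃ n : V → V → ℤ, dgW Adj u p c = ∑ a, ∑ b, c a b * (Real.pi / 2 * n a b) := by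
  by_cases hex : ∃ a0 b0, Adj a0 b0
  · obtain ⟨a0, b0, h0⟩ := hex
    set e := dgr Adj u a0
    have he : dgz p e e ≠ 0 := (dgz_ne (slitPlane_ne_zero (hp a0 b0 h0))).1
    have h1 : ∀ a b, ∃ k : ℤ, Adj a b → arg (dgz p (dgr Adj u a) (u a b)) =
        arg (dgz p e (u a b)) - arg (dgz p e (dgr Adj u a)) + 2 * Real.pi * k := by
      intro a b
      by_cases hab : Adj a b
      · obtain ⟨k, hk⟩ := dg_arg1 he (slitPlane_ne_zero (hp a b hab))
        exact ⟨k, fun _ => hk⟩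
      · exact ⟨0, fun h => absurd h hab⟩
    have h2 : ∀ a b, ∃ k : ℤ, Adj a b → arg (dgz p e (u b a)) =
        arg (dgz p e (u a b)) + Real.pi + 2 * Real.pi * k := by
      intro a b
      by_cases hab : Adj a b
      · obtain ⟨k, hk⟩ := dg_arg2 he (dgz_ne (slitPlane_ne_zero (hp a b hab))).2
        exact ⟨k, fun _ => by rw [hanti a b]; exact hk⟩
      · exact ⟨0, fun h => absurd h hab⟩
    choose k hk using h1
    choose m hm using h2
    refine ⟨fun a b => 4 * k a b - (1 + 2 * m a b), ?_⟩
    have e1 : dgW Adj u p c = ∑ a, ∑ b, c a b * arg (dgz p e (u a b)) +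
        ∑ a, ∑ b, c a b * (2 * Real.pi * k a b) := by
      have e0 : ∑ a, ∑ b, c a b * arg (dgz p e (dgr Adj u a)) = 0 := by
        refine Finset.sum_eq_zero fun a _ => ?_
        rw [← Finset.sum_mul, hc.div a, zero_mul]
      rw [← sub_zero (dgW Adj u p c), ← neg_zero, ← e0]
      simp only [dgW, LinearMap.coe_mk, AddHom.coe_mk, sub_neg_eq_add]
      simp only [← Finset.sum_add_distrib]
      refine Finset.sum_congr rfl fun a _ => Finset.sum_congr rfl fun b _ => ?_
      by_cases hab : Adj a b
      · rw [hk a b hab]; ring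
      · rw [hc.supp a b hab]; ring
    have e2 : ∑ a, ∑ b, c a b * arg (dgz p e (u a b)) = ∑ a, ∑ b, - (c a b * arg (dgz p e (u b a))) := by
      rw [Finset.sum_comm]
      refine Finset.sum_congr rfl fun a _ => Finset.sum_congr rfl fun b _ => ?_
      rw [hc.anti a b]; ring
    have e3 : ∑ a, ∑ b, - (c a b * arg (dgz p e (u b a))) = - ∑ a, ∑ b, c a b * arg (dgz p e (u a b)) -
        ∑ a, ∑ b, c a b * (Real.pi + 2 * Real.pi * m a b) := by
      simp only [← Finset.sum_neg_distrib, ← Finset.sum_sub_distrib]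
      refine Finset.sum_congr rfl fun a _ => Finset.sum_congr rfl fun b _ => ?_
      by_cases hab : Adj a b
      · rw [hm a b hab]; ring
      · rw [hc.supp a b hab]; ring
    have e4 : ∑ a, ∑ b, c a b * arg (dgz p e (u a b)) = - (1/2) * ∑ a, ∑ b, c a b * (Real.pi + 2 * Real.pi * m a b) := by
      linarith
    rw [e1, e4]
    simp only [Finset.mul_sum, ← Finset.sum_add_distrib]
    refine Finset.sum_congr rfl fun a _ => Finset.sum_congr rfl fun b _ => ?_
    push_cast
    ring
  · push Not at hex
    refine ⟨0, ?_⟩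
    simp only [dgW, LinearMap.coe_mk, AddHom.coe_mk]
    refine Finset.sum_congr rfl fun a _ => Finset.sum_congr rfl fun b _ => ?_
    rw [hc.supp a b (hex a b)]; simp

theorem dgW_const {S : Set (Fin 3 → ℝ)} (hS : IsPreconnected S) {c : V → V → ℝ}
    (hanti : ∀ a b, u b a = - u a b) (hc : DGFlow Adj c)
    (hp : ∀ p ∈ S, DGGood Adj u p) {p q : Fin 3 → ℝ} (hpS : p ∈ S) (hqS : q ∈ S) :
    dgW Adj u p c = dgW Adj u q c := by
  have hcont : ContinuousOn (fun p => dgW Adj u p c) S := by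
    simp only [dgW, LinearMap.coe_mk, AddHom.coe_mk]
    refine continuousOn_finsetSum _ fun a _ => continuousOn_finsetSum _ fun b _ => ?_
    by_cases hab : Adj a b
    · intro p hpS
      refine ContinuousAt.continuousWithinAt ?_
      exact ContinuousAt.mul continuousAt_const
        (ContinuousAt.comp (f := fun p => dgz p (dgr Adj u a) (u a b)) (Complex.continuousAt_arg (hp p hpS a b hab)) (dgz_cont _ _).continuousAt)
    · rw [hc.supp a b hab]; simp only [zero_mul]; exact continuousOn_const
  have himg := hS.image _ hcont
  have hcount : ((fun p => dgW Adj u p c) '' S).Countable := by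
    refine (Set.countable_range fun n : V → V → ℤ => ∑ a, ∑ b, c a b * (Real.pi / 2 * n a b)).mono ?_
    rintro _ ⟨p, hpS, rfl⟩
    obtain ⟨n, hn⟩ := dgW_vals hanti hc (hp p hpS)
    exact ⟨n, hn.symm⟩
  exact hcount.isTotallyDisconnected _ subset_rfl himg ⟨p, hpS, rfl⟩ ⟨q, hqS, rfl⟩

end topo

section topo2
open Complex
set_option linter.unusedSectionVars false
variable {V : Type} [Fintype V] {Adj : V → V → Prop} {u : V → V → (Fin 3 → ℝ)}

theorem dg_single (x y : V) (t : ℝ) : ∑ b, (if b = y then t else 0) • u x b = t • u x y := by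
  rw [Finset.sum_eq_single y]
  · simp
  · intro b _ hb; simp [hb]
  · simp

theorem dg_face (H : DGConf Adj u) {x y : V} (hxy : Adj x y) {a : V → ℝ} (ha : ∀ b, 0 ≤ a b)
    (hs : ∀ b, ¬ Adj x b → a b = 0) {t : ℝ} (he : ∑ b, a b • u x b = t • u x y) :
    ∀ b, b ≠ y → a b = 0 := by
  by_cases ht : t ≤ a y
  · intro b hb
    have h1 := H.pointed x (fun b => a b + if b = y then - t else 0) ?_ ?_ ?_ b
    · simpa [hb] using h1
    · intro k
      by_cases hk : k = y
      · subst hk; simp; exact ht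
      · simp [hk, ha k]
    · intro k hk
      have : k ≠ y := by rintro rfl; exact hk hxy
      simp [this, hs k hk]
    · simp only [add_smul, Finset.sum_add_distrib, dg_single, he]; simp
  · push Not at ht
    exfalso
    have hpos : 0 < t - a y := by linarith
    refine H.extr x y (fun b => if b = y then 0 else (t - a y)⁻¹ * a b) hxy ?_ ?_ (by simp) ?_
    · intro b
      by_cases hb : b = y
      · simp [hb]
      · simp only [hb, if_false]; exact mul_nonneg (inv_nonneg.2 hpos.le) (ha b)
    · intro b hb
      simp [hs b hb]
    · have h1 : ∑ b, (if b = y then 0 else (t - a y)⁻¹ * a b) • u x b =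
          (t - a y)⁻¹ • (∑ b, a b • u x b - ∑ b, (if b = y then a y else 0) • u x b) := by
        rw [← Finset.sum_sub_distrib, Finset.smul_sum]
        refine Finset.sum_congr rfl fun b _ => ?_
        by_cases hb : b = y
        · subst hb; simp
        · simp [hb, smul_smul]
      rw [h1, he, dg_single, ← sub_smul, smul_smul, inv_mul_cancel₀ hpos.ne', one_smul]

/-- weights of a r + b u_y -/
theorem dg_wts (x y : V) (s t : ℝ) :
    ∑ b, (s * (if Adj x b then (1:ℝ) else 0) + if b = y then t else 0) • u x b = s • dgr Adj u x + t • u x y := by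
  simp only [add_smul, Finset.sum_add_distrib, dg_single, dgr, Finset.smul_sum, smul_smul]

theorem dg_wts_nonneg (x y : V) {s t : ℝ} (hs : 0 ≤ s) (ht : 0 ≤ t) (b : V) :
    0 ≤ (s * (if Adj x b then (1:ℝ) else 0) + if b = y then t else 0) := by
  split_ifs <;> simp <;> positivity

theorem dg_wts_supp {x y : V} (hxy : Adj x y) (s t : ℝ) (b : V) (hb : ¬ Adj x b) :
    (s * (if Adj x b then (1:ℝ) else 0) + if b = y then t else 0) = 0 := by
  have : b ≠ y := by rintro rfl; exact hb hxy
  simp [this, hb]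

theorem dgC_K {x y : V} (hxy : Adj x y) {p : Fin 3 → ℝ} (h : DGC (dgr Adj u x) (u x y) p) :
    DGK Adj u x p := by
  obtain ⟨s, t, hs, ht, rfl⟩ := h
  exact ⟨_, dg_wts_nonneg x y hs ht, dg_wts_supp hxy s t, (dg_wts x y s t).symm⟩

theorem dgK_edge {x y : V} (hxy : Adj x y) : DGK Adj u x (u x y) :=
  dgC_K hxy ⟨0, 1, le_rfl, zero_le_one, by simp⟩

/-- if s r + t u_b is a multiple of u_y then s = 0 -/
theorem dg_face_r (H : DGConf Adj u) {x y b : V} (hxy : Adj x y) (hxb : Adj x b) {s t k : ℝ}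
    (hs : 0 ≤ s) (ht : 0 ≤ t) (he : s • dgr Adj u x + t • u x b = k • u x y) :
    s = 0 ∧ (b ≠ y → t = 0) := by
  rw [← dg_wts] at he
  have h := dg_face H hxy (dg_wts_nonneg x b hs ht) (dg_wts_supp hxb s t) he
  have hs0 : s = 0 := by
    obtain ⟨d, hd, hdy, hdb⟩ := H.deg x y b
    simpa [hd, hdb] using h d hdy
  refine ⟨hs0, fun hb => ?_⟩
  simpa [hs0] using h b hb

theorem dg_une (H : DGConf Adj u) {x y : V} (hxy : Adj x y) : u x y ≠ 0 := by
  intro h0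
  have h := H.pointed x (fun b => if b = y then 1 else 0) ?_ ?_ ?_ y
  · simp at h
  · intro b; split_ifs <;> simp
  · intro b hb
    have : b ≠ y := by rintro rfl; exact hb hxy
    simp [this]
  · rw [dg_single, h0, smul_zero]

theorem dg_K_neg (H : DGConf Adj u) {x : V} {p : Fin 3 → ℝ} (h1 : DGK Adj u x p) (h2 : DGK Adj u x (-p)) :
    p = 0 := by
  obtain ⟨a, ha, hs, rfl⟩ := h1
  obtain ⟨b, hb, hs', he⟩ := h2
  have h := H.pointed x (fun k => a k + b k) (fun k => add_nonneg (ha k) (hb k))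
    (fun k hk => by rw [hs k hk, hs' k hk, add_zero]) (by
      simp only [add_smul, Finset.sum_add_distrib]
      rw [← he]; simp)
  refine Finset.sum_eq_zero fun k _ => ?_
  have := h k
  have : a k = 0 := by linarith [ha k, hb k]
  rw [this, zero_smul]

theorem dg_x_zero {v w : Fin 3 → ℝ} (h : dgx v w = 0) : dgd w w • v = dgd v w • w := by
  have h0 := congrFun h 0
  have h1 := congrFun h 1
  have h2 := congrFun h 2
  simp [dgx] at h0 h1 h2
  ext i
  fin_cases i <;> simp [dgd]
  · linear_combination w 1 * h2 - w 2 * h1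
  · linear_combination - w 0 * h2 + w 2 * h0
  · linear_combination w 0 * h1 - w 1 * h0

theorem dg_indep (H : DGConf Adj u) {x y : V} (hxy : Adj x y) : dgx (dgr Adj u x) (u x y) ≠ 0 := by
  intro h
  have h1 := dg_x_zero h
  have hpos := dgd_self_pos (dg_une H hxy)
  have := (dg_face_r H hxy hxy hpos.le le_rfl (k := dgd (dgr Adj u x) (u x y)) (by rw [zero_smul, add_zero]; exact h1)).1
  linarith

/-- all terms other than the two of the edge are good at the edge -/
theorem dg_good_edge (H : DGConf Adj u) {x y a b : V} (hxy : Adj x y) (hab : Adj a b)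
    (h1 : ¬ (a = x ∧ b = y)) (h2 : ¬ (a = y ∧ b = x)) :
    dgz (u x y) (dgr Adj u a) (u a b) ∈ slitPlane := by
  have hu := dg_une H hxy
  refine dg_slit (dg_indep H hab) ?_ ?_
  · intro hC
    by_cases hax : a = x
    · subst hax
      have hby : b ≠ y := fun h => h1 ⟨rfl, h⟩
      obtain ⟨s, t, hs, ht, he⟩ := hC
      have := dg_face_r H hxy hab hs ht (k := 1) (by rw [← he, one_smul])
      rw [this.1, this.2 hby] at he
      simp at he
      exact hu he
    · exact hu (H.disj a x _ hax (dgC_K hab hC) (dgK_edge hxy))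
  · intro hC
    by_cases hax : a = x
    · subst hax
      exact hu (dg_K_neg H (dgK_edge hxy) (dgC_K hab hC))
    · rcases H.opp x a _ (Ne.symm hax) (dgK_edge hxy) (dgC_K hab hC) with h | ⟨hxa, t, ht, he⟩
      · exact hu h
      · have hay : a = y := by
          by_contra hay
          have := (dg_face_r H hxa hxy le_rfl zero_le_one (k := t) (by rw [zero_smul, zero_add, one_smul]; exact he)).2 (Ne.symm hay)
          linarith
        subst hay
        have hbx : b ≠ x := fun h => h2 ⟨rfl, h⟩
        rw [← H.anti] at hC
        obtain ⟨s, t, hs, ht, he⟩ := hC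
        have := dg_face_r H (H.symm _ _ hxa) hab hs ht (k := 1) (by rw [← he, one_smul])
        rw [this.1, this.2 hbx] at he
        simp at he
        rw [H.anti] at he
        exact hu (neg_eq_zero.1 he)

theorem dg_three (H : DGConf Adj u) {x b0 b1 b2 : V} (h0 : Adj x b0) (h1 : Adj x b1) (h2 : Adj x b2)
    (n01 : b0 ≠ b1) (n02 : b0 ≠ b2) (n12 : b1 ≠ b2) {k0 k1 k2 : ℝ}
    (he : k0 • u x b0 + k1 • u x b1 + k2 • u x b2 = 0) : k1 = 0 ∧ k2 = 0 := by
  have F : ∀ {y b b' : V} {α β t : ℝ}, Adj x y → Adj x b → Adj x b' → b ≠ y → b' ≠ y → b ≠ b' → 0 ≤ α → 0 ≤ β →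
      α • u x b + β • u x b' = t • u x y → α = 0 ∧ β = 0 := by
    intro y b b' α β t hy hb hb' n1 n2 n3 hα hβ h
    have := dg_face H hy (a := fun k => (if k = b then α else 0) + (if k = b' then β else 0)) ?_ ?_ (t := t) ?_
    · have q1 := this b n1
      have q2 := this b' n2
      simp [n3, n3.symm] at q1 q2
      exact ⟨q1, q2⟩
    · intro k; split_ifs <;> linarith
    · intro k hk
      have m1 : k ≠ b := by rintro rfl; exact hk hb
      have m2 : k ≠ b' := by rintro rfl; exact hk hb'
      simp [m1, m2]
    · simp only [add_smul, Finset.sum_add_distrib, dg_single]; exact h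
  rcases le_total 0 k1 with p1 | p1 <;> rcases le_total 0 k2 with p2 | p2
  · exact F (t := -k0) h0 h1 h2 n01.symm n02.symm n12 p1 p2 (by
      rw [neg_smul, eq_neg_iff_add_eq_zero, ← he]; abel)
  · rcases le_total 0 k0 with p0 | p0
    · have := F (t := -k2) h2 h0 h1 n02 n12 n01 p0 p1 (by
        rw [neg_smul, eq_neg_iff_add_eq_zero, ← he])
      have hk := this.2
      refine ⟨hk, ?_⟩
      rw [hk, this.1] at he
      simp only [zero_smul, zero_add] at he
      exact (smul_eq_zero.1 he).resolve_right (dg_une H h2)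
    · have := F (t := k1) h1 h0 h2 n01 n12.symm n02 (neg_nonneg.2 p0) (neg_nonneg.2 p2) (by
        rw [← sub_eq_zero, ← neg_eq_zero, ← he, neg_smul, neg_smul]; abel)
      have hk : k2 = 0 := by linarith [this.2]
      refine ⟨?_, hk⟩
      rw [hk, neg_eq_zero.1 this.1] at he
      simp only [zero_smul, zero_add, add_zero] at he
      exact (smul_eq_zero.1 he).resolve_right (dg_une H h1)
  · rcases le_total 0 k0 with p0 | p0
    · have := F (t := -k1) h1 h0 h2 n01 n12.symm n02 p0 p2 (by
        rw [neg_smul, eq_neg_iff_add_eq_zero, ← he]; abel)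
      have hk := this.2
      refine ⟨?_, hk⟩
      rw [hk, this.1] at he
      simp only [zero_smul, zero_add, add_zero] at he
      exact (smul_eq_zero.1 he).resolve_right (dg_une H h1)
    · have := F (t := k2) h2 h0 h1 n02 n12 n01 (neg_nonneg.2 p0) (neg_nonneg.2 p1) (by
        rw [← sub_eq_zero, ← neg_eq_zero, ← he, neg_smul, neg_smul]; abel)
      have hk : k1 = 0 := by linarith [this.2]
      refine ⟨hk, ?_⟩
      rw [hk, neg_eq_zero.1 this.1] at he
      simp only [zero_smul, zero_add] at he
      exact (smul_eq_zero.1 he).resolve_right (dg_une H h2)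
  · have := F (t := k0) h0 h1 h2 n01.symm n02.symm n12 (neg_nonneg.2 p1) (neg_nonneg.2 p2) (by
      rw [← sub_eq_zero, ← neg_eq_zero, ← he, neg_smul, neg_smul]; abel)
    exact ⟨neg_eq_zero.1 this.1, neg_eq_zero.1 this.2⟩

end topo2

section topo3
open Complex
variable {V : Type} [Fintype V] {Adj : V → V → Prop} {u : V → V → (Fin 3 → ℝ)}

/-- component orthogonal to u (scaled) -/
def dgo (u r : Fin 3 → ℝ) : Fin 3 → ℝ := dgd u u • r - dgd r u • u

noncomputable def dgN (Adj : V → V → Prop) (u : V → V → (Fin 3 → ℝ)) (x y : V) : Fin 3 → ℝ :=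
  √(dgd (dgo (u x y) (dgr Adj u y)) (dgo (u x y) (dgr Adj u y))) • dgo (u x y) (dgr Adj u x) +
  √(dgd (dgo (u x y) (dgr Adj u x)) (dgo (u x y) (dgr Adj u x))) • dgo (u x y) (dgr Adj u y)

theorem dgo_neg (u r : Fin 3 → ℝ) : dgo (-u) r = dgo u r := by
  ext i; simp [dgo, dgd]; ring

theorem dgN_symm (H : DGConf Adj u) (x y : V) : dgN Adj u y x = dgN Adj u x y := by
  unfold dgN
  rw [H.anti x y]
  simp only [dgo_neg]
  rw [add_comm]

theorem dgN_u (x y : V) : dgd (dgN Adj u x y) (u x y) = 0 := by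
  unfold dgN
  generalize √_ = s
  generalize √_ = t
  simp [dgo, dgd]; ring

theorem dgo_ne (H : DGConf Adj u) {x y : V} (hxy : Adj x y) : dgo (u x y) (dgr Adj u x) ≠ 0 := by
  intro h
  have hpos := dgd_self_pos (dg_une H hxy)
  have := (dg_face_r H hxy hxy hpos.le le_rfl (k := dgd (dgr Adj u x) (u x y)) (by
    rw [zero_smul, add_zero]; exact sub_eq_zero.1 h)).1
  linarith

theorem dg_vec_aux {a b : Fin 3 → ℝ} {s t : ℝ} (hs : 0 < s) (ht : 0 < t) (hs2 : s * s = dgd a a)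
    (ht2 : t * t = dgd b b) (h : dgd (t • a + s • b) a ≤ 0) : t • a + s • b = 0 := by
  by_contra hne
  have h1 := dgd_self_pos hne
  have e1 : dgd (t • a + s • b) a = s * (t * s + dgd a b) := by
    have : dgd (t • a + s • b) a = t * dgd a a + s * dgd a b := by simp [dgd]; ring
    rw [this, ← hs2]; ring
  have e2 : dgd (t • a + s • b) (t • a + s • b) = 2 * (t * s) * (t * s + dgd a b) := by
    have : dgd (t • a + s • b) (t • a + s • b) = t * t * dgd a a + s * s * dgd b b + 2 * (t * s) * dgd a b := by
      simp [dgd]; ring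
    rw [this, ← hs2, ← ht2]; ring
  rw [e1] at h
  rw [e2] at h1
  have h2 : 0 < t * s + dgd a b := pos_of_mul_pos_right h1 (by positivity)
  have := mul_pos hs h2
  linarith

theorem dgN_pos (H : DGConf Adj u) {x y : V} (hxy : Adj x y) : 0 < dgd (dgN Adj u x y) (dgr Adj u x) := by
  have hyx := H.symm _ _ hxy
  have hu := dgd_self_pos (dg_une H hxy)
  have ha := dgd_self_pos (dgo_ne H hxy)
  have hb := dgd_self_pos (dgo_ne H hyx)
  rw [H.anti x y, dgo_neg] at hb
  have hN := dgN_u (Adj := Adj) (u := u) x y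
  have hneq : dgd (dgN Adj u x y) (dgo (u x y) (dgr Adj u x)) = dgd (u x y) (u x y) * dgd (dgN Adj u x y) (dgr Adj u x) := by
    have : dgd (dgN Adj u x y) (dgo (u x y) (dgr Adj u x)) = dgd (u x y) (u x y) * dgd (dgN Adj u x y) (dgr Adj u x) -
      dgd (dgr Adj u x) (u x y) * dgd (dgN Adj u x y) (u x y) := by
      generalize dgN Adj u x y = N
      simp only [dgo, dgd, Pi.sub_apply, Pi.smul_apply, smul_eq_mul]; ring
    rw [this, hN]; ring
  have hs := Real.sqrt_pos.2 ha
  have ht := Real.sqrt_pos.2 hb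
  by_contra hcon
  push Not at hcon
  have h0 := dg_vec_aux hs ht (dg_sqrt _) (dg_sqrt _) (by
    change dgd (dgN Adj u x y) _ ≤ 0
    rw [hneq]; exact mul_nonpos_of_nonneg_of_nonpos hu.le hcon)
  set s := √(dgd (dgo (u x y) (dgr Adj u x)) (dgo (u x y) (dgr Adj u x)))
  set t := √(dgd (dgo (u x y) (dgr Adj u y)) (dgo (u x y) (dgr Adj u y)))
  set q := dgd (u x y) (u x y)
  set k := t * dgd (dgr Adj u x) (u x y) + s * dgd (dgr Adj u y) (u x y) with hk
  have h1 : (t * q) • dgr Adj u x + (s * q) • dgr Adj u y = k • u x y := by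
    rw [← sub_eq_zero, ← h0, hk]
    simp only [dgo, smul_sub, smul_smul, add_smul]
    abel
  have htq : 0 < t * q := mul_pos ht hu
  have hsq : 0 < s * q := mul_pos hs hu
  have hK1 : DGK Adj u x ((t * q) • dgr Adj u x + |k| • u x y) :=
    dgC_K hxy ⟨_, _, htq.le, abs_nonneg k, rfl⟩
  have hK2 : DGK Adj u y (-((t * q) • dgr Adj u x + |k| • u x y)) :=
    dgC_K hyx ⟨s * q, k + |k|, hsq.le, by linarith [neg_abs_le k], by
      have h2 : (s * q) • dgr Adj u y = k • u x y - (t * q) • dgr Adj u x := by rw [← h1]; abel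
      rw [h2, H.anti x y]
      clear_value k
      rw [smul_neg, add_smul]; abel⟩
  rcases H.opp x y _ (fun h => H.irr x (by rw [← h] at hxy; exact hxy)) hK1 hK2 with h | ⟨-, τ, -, h⟩
  · have := (dg_face_r H hxy hxy htq.le (abs_nonneg k) (k := 0) (by rw [h, zero_smul])).1
    linarith
  · have := (dg_face_r H hxy hxy htq.le (abs_nonneg k) (k := τ) h).1
    linarith

noncomputable def dgn (Adj : V → V → Prop) (u : V → V → (Fin 3 → ℝ)) (x y : V) : Fin 3 → ℝ :=
  dgx (u x y) (dgN Adj u x y)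

theorem dgn_symm (H : DGConf Adj u) (x y : V) : dgn Adj u y x = - dgn Adj u x y := by
  unfold dgn
  rw [dgN_symm H, H.anti x y]
  ext i; fin_cases i <;> simp [dgx] <;> ring

theorem dg_slit_im {p v w : Fin 3 → ℝ} (hp : p ≠ 0) (h : dgt p v w ≠ 0) : dgz p v w ∈ slitPlane := by
  rw [mem_slitPlane_iff]
  right
  simp only [dgz]
  exact mul_ne_zero (Real.sqrt_pos.2 (dgd_self_pos hp)).ne' h

theorem dg_alg1 (U N : Fin 3 → ℝ) (k : ℝ) : dgd N (U + k • dgx U N) = dgd N U := by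
  have h0 : dgx U N 0 = U 1 * N 2 - U 2 * N 1 := rfl
  have h1 : dgx U N 1 = U 2 * N 0 - U 0 * N 2 := rfl
  have h2 : dgx U N 2 = U 0 * N 1 - U 1 * N 0 := rfl
  simp only [dgd, Pi.add_apply, Pi.smul_apply, smul_eq_mul, h0, h1, h2]; ring

theorem dg_alg2 (U N R : Fin 3 → ℝ) (k : ℝ) : dgt (U + k • dgx U N) U R =
    k * (dgd U U * dgd N R - dgd U R * dgd N U) := by
  have h0 : dgx U N 0 = U 1 * N 2 - U 2 * N 1 := rfl
  have h1 : dgx U N 1 = U 2 * N 0 - U 0 * N 2 := rfl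
  have h2 : dgx U N 2 = U 0 * N 1 - U 1 * N 0 := rfl
  simp only [dgd, dgt, Pi.add_apply, Pi.smul_apply, smul_eq_mul, h0, h1, h2]; ring

/-- the good convex half neighbourhood -/
theorem dg_local (H : DGConf Adj u) {x y : V} (hxy : Adj x y) {σ : ℝ} (hσ : σ ≠ 0) :
    ∃ S : Set (Fin 3 → ℝ), Convex ℝ S ∧ (∀ p ∈ S, DGGood Adj u p) ∧
      (∃ ε > 0, ∀ t, 0 < t → t ≤ ε → u x y + (t * σ) • dgn Adj u x y ∈ S) ∧
      (∀ v, 0 < σ * dgt v (u x y) (dgr Adj u x) → ∃ t > 0, u x y + (t : ℝ) • dgr Adj u x + (t * t) • v ∈ S) := by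
  have hyx := H.symm _ _ hxy
  have hNx := dgN_pos H hxy
  have hNy := dgN_pos H hyx
  rw [dgN_symm H] at hNy
  have hNu := dgN_u (Adj := Adj) (u := u) x y
  set N := dgN Adj u x y with hN
  set U := u x y with hU
  set R := dgr Adj u x with hR
  set R' := dgr Adj u y with hR'
  have hUU : 0 < dgd U U := dgd_self_pos (dg_une H hxy)
  let D : (Fin 3 → ℝ) → ℝ := fun p => dgt p U R
  let hh : (Fin 3 → ℝ) → ℝ := fun p => dgd p (dgd R' R' • U - dgd U R' • R')
  have hhU : 0 < hh U := by
    have h1 := dgo_ne H hyx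
    have h2 : hh U = dgd R' R' * dgd U U - dgd R' U * dgd R' U := by
      simp [hh, dgd]; ring
    have h3 : dgd (dgx R' (u y x)) (dgx R' (u y x)) = dgd R' R' * dgd U U - dgd R' U * dgd R' U := by
      rw [H.anti x y]; simp [dgd, dgx]; ring
    rw [h2, ← h3]
    exact dgd_self_pos (dg_indep H hyx)
  have hcontD : Continuous D := by simp only [D, dgt]; fun_prop
  have hconth : Continuous hh := by simp only [hh, dgd]; fun_prop
  have hev : ∀ᶠ p in nhds U, 0 < hh p ∧ ∀ a b, Adj a b → ¬ (a = x ∧ b = y) → ¬ (a = y ∧ b = x) →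
      dgz p (dgr Adj u a) (u a b) ∈ slitPlane := by
    refine Filter.Eventually.and (hconth.continuousAt.eventually_mem (isOpen_Ioi.mem_nhds hhU)) ?_
    rw [Filter.eventually_all]; intro a
    rw [Filter.eventually_all]; intro b
    by_cases hab : Adj a b
    · by_cases h1 : a = x ∧ b = y
      · exact Filter.Eventually.of_forall fun p _ h => absurd h1 h
      · by_cases h2 : a = y ∧ b = x
        · exact Filter.Eventually.of_forall fun p _ _ h => absurd h2 h
        · have := (dgz_cont (dgr Adj u a) (u a b)).continuousAt.eventually_mem
            (isOpen_slitPlane.mem_nhds (dg_good_edge H hxy hab h1 h2))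
          filter_upwards [this] with p hp _ _ _
          exact hp
    · exact Filter.Eventually.of_forall fun p h => absurd h hab
  obtain ⟨δ, hδ, hball⟩ := Metric.eventually_nhds_iff_ball.1 hev
  have hballn : Metric.ball U δ ∈ nhds U := Metric.ball_mem_nhds U hδ
  refine ⟨Metric.ball U δ ∩ {p | 0 ≤ dgd N p ∧ 0 < σ * D p}, ?_, ?_, ?_, ?_⟩
  · refine (convex_ball U δ).inter ?_
    rintro p ⟨hp1, hp2⟩ q ⟨hq1, hq2⟩ a b ha hb hab
    have e1 : dgd N (a • p + b • q) = a * dgd N p + b * dgd N q := by simp [dgd]; ring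
    have e2 : σ * D (a • p + b • q) = a * (σ * D p) + b * (σ * D q) := by simp [D, dgt]; ring
    refine ⟨by rw [e1]; positivity, ?_⟩
    rw [e2]
    rcases eq_or_lt_of_le ha with h | h
    · have : b = 1 := by linarith
      rw [← h, this]; linarith
    · have := mul_pos h hp2
      have := mul_nonneg hb hq2.le
      linarith
  · rintro p ⟨hpb, hp1, hp2⟩ a b hab
    obtain ⟨hp3, hp4⟩ := hball p hpb
    have hD : D p ≠ 0 := by
      intro h0; rw [h0] at hp2; simp at hp2
    by_cases h1 : a = x ∧ b = y
    · obtain ⟨rfl, rfl⟩ := h1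
      refine dg_slit_im ?_ ?_
      · rintro rfl; simp [D, dgt] at hp2
      · intro h0
        apply hD
        have : D p = - dgt p (dgr Adj u a) (u a b) := by simp [D, dgt, hU, hR]; ring
        rw [this, h0, neg_zero]
    · by_cases h2 : a = y ∧ b = x
      · obtain ⟨rfl, rfl⟩ := h2
        refine dg_slit (dg_indep H hyx) ?_ ?_
        · rintro ⟨s, t, hs, ht, rfl⟩
          rw [H.anti b a] at hp3
          have : hh (s • dgr Adj u a + t • -u b a) = - t * hh U := by
            simp [hh, dgd, hU, hR']; ring
          rw [this] at hp3
          have := mul_nonneg ht hhU.le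
          linarith
        · rintro ⟨s, t, hs, ht, he⟩
          rw [H.anti b a] at he
          have hp : p = t • U - s • R' := by
            rw [← neg_inj, he]; simp [hU, hR']; abel
          have e1 : dgd N p = - s * dgd N R' := by
            have : dgd N p = t * dgd N U - s * dgd N R' := by rw [hp]; simp [dgd]; ring
            rw [this, hNu]; ring
          rw [e1] at hp1
          have hs0 : s = 0 := by
            by_contra hs0
            have := mul_pos (lt_of_le_of_ne hs (Ne.symm hs0)) hNy
            linarith
          apply hD
          rw [hp, hs0]; simp [D, dgt]; ring
      · exact hp4 a b hab h1 h2
  · have hc : Filter.Tendsto (fun t : ℝ => U + (t * σ) • dgn Adj u x y) (nhds 0) (nhds U) := by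
      have : Continuous (fun t : ℝ => U + (t * σ) • dgn Adj u x y) := by fun_prop
      simpa using this.tendsto 0
    obtain ⟨ε, hε, hεb⟩ := Metric.eventually_nhds_iff_ball.1 (hc.eventually_mem hballn)
    refine ⟨ε / 2, by positivity, fun t ht htε => ⟨hεb t ?_, ?_, ?_⟩⟩
    · rw [Metric.mem_ball, Real.dist_eq, sub_zero, abs_of_pos ht]; linarith
    · have : dgd N (U + (t * σ) • dgn Adj u x y) = 0 := by
        have : dgd N (U + (t * σ) • dgn Adj u x y) = dgd N U := by
          exact dg_alg1 _ _ _
        rw [this, hNu]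
      rw [this]
    · have : D (U + (t * σ) • dgn Adj u x y) = t * σ * (dgd U U * dgd N R) := by
        have : D (U + (t * σ) • dgn Adj u x y) = t * σ * (dgd U U * dgd N R - dgd U R * dgd N U) := by
          exact dg_alg2 _ _ _ _
        rw [this, hNu]; ring
      rw [this]
      have h3 : 0 < σ * σ := mul_self_pos.2 hσ
      have := mul_pos (mul_pos ht h3) (mul_pos hUU hNx)
      linarith
  · intro v hv
    have hc : Filter.Tendsto (fun t : ℝ => U + t • R + (t * t) • v) (nhds 0) (nhds U) := by
      have : Continuous (fun t : ℝ => U + t • R + (t * t) • v) := by fun_prop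
      simpa using this.tendsto 0
    have hc2 : ∀ᶠ t : ℝ in nhds 0, 0 < dgd N R + t * dgd N v := by
      have : Continuous (fun t : ℝ => dgd N R + t * dgd N v) := by fun_prop
      exact this.continuousAt.eventually_mem (isOpen_Ioi.mem_nhds (by simpa using hNx))
    have h3 := ((hc.eventually_mem hballn).and hc2).filter_mono (nhdsWithin_le_nhds (s := Set.Ioi 0))
    obtain ⟨t, ⟨ht1, ht2⟩, ht3⟩ := (h3.and self_mem_nhdsWithin).exists
    have ht3 : 0 < t := ht3
    refine ⟨t, ht3, ht1, ?_, ?_⟩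
    · have : dgd N (U + t • R + (t * t) • v) = dgd N U + t * (dgd N R + t * dgd N v) := by
        simp [dgd]; ring
      rw [this, hNu, zero_add]
      exact (mul_pos ht3 ht2).le
    · have : σ * D (U + t • R + (t * t) • v) = (t * t) * (σ * dgt v U R) := by
        simp [D, dgt]; ring
      rw [this]; positivity

end topo3

section topo4
open Complex
variable {V : Type} [Fintype V] {Adj : V → V → Prop} {u : V → V → (Fin 3 → ℝ)}

theorem dg_jump1 {U N r : Fin 3 → ℝ} (hu : U ≠ 0) (hNu : dgd N U = 0) (hNr : 0 < dgd N r) :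
    ∃ ζ : ℂ, ζ.im < 0 ∧ ∀ σ : ℝ, σ * σ = 1 →
      Filter.Tendsto (fun ε : ℝ => arg (dgz (U + (ε * σ) • dgx U N) r U)) (nhdsWithin 0 (Set.Ioi 0))
        (nhds (arg (σ * ζ))) ∧
      Filter.Tendsto (fun ε : ℝ => arg (dgz (U + (ε * σ) • dgx U N) r (-U))) (nhdsWithin 0 (Set.Ioi 0))
        (nhds (arg (-(σ * ζ)))) := by
  have hUU := dgd_self_pos hu
  set n := dgx U N with hn
  have hnu : dgd n U = 0 := by simp [hn, dgx, dgd]; ring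
  set ζ : ℂ := ⟨-(dgd r n * dgd U U), -(√(dgd U U) * (dgd U U * dgd N r))⟩ with hζ
  have him : ζ.im < 0 := by
    simp only [hζ]
    have := mul_pos (Real.sqrt_pos.2 hUU) (mul_pos hUU hNr)
    linarith
  refine ⟨ζ, him, fun σ hσ => ?_⟩
  have hσ0 : σ ≠ 0 := by rintro rfl; simp at hσ
  let G : ℝ → ℂ := fun ε => ((ε * dgd r U * dgd n n - σ * (dgd r n * dgd U U) : ℝ) : ℂ) +
    ((-(σ * √(dgd U U + ε * ε * dgd n n) * (dgd U U * dgd N r)) : ℝ) : ℂ) * I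
  have hG0 : G 0 = σ * ζ := by
    apply Complex.ext <;> simp [G, hζ]
    ring
  have hGc : Continuous G := by simp only [G]; fun_prop
  have hz : ∀ ε : ℝ, dgz (U + (ε * σ) • n) r U = (ε : ℂ) * G ε := by
    intro ε
    have e1 : dgd (U + (ε * σ) • n) (U + (ε * σ) • n) = dgd U U + ε * ε * dgd n n := by
      have : dgd (U + (ε * σ) • n) (U + (ε * σ) • n) = dgd U U + 2 * (ε * σ) * dgd n U + ε * ε * (σ * σ) * dgd n n := by
        clear_value n
        simp [dgd]; ring
      rw [this, hnu, hσ]; ring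
    have e2 : dgd r (U + (ε * σ) • n) = dgd r U + ε * σ * dgd r n := by
      clear_value n
      simp [dgd]; ring
    have e3 : dgd U (U + (ε * σ) • n) = dgd U U := by
      have : dgd U (U + (ε * σ) • n) = dgd U U + ε * σ * dgd n U := by
        clear_value n
        simp [dgd]; ring
      rw [this, hnu]; ring
    have e4 : dgt (U + (ε * σ) • n) r U = - (ε * σ * (dgd U U * dgd N r)) := by
      have h1 := dg_alg2 U N r (ε * σ)
      have h2 : dgt (U + (ε * σ) • n) r U = - dgt (U + (ε * σ) • n) U r := by
        simp only [dgt]; ring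
      rw [h2, h1, hNu]; ring
    apply Complex.ext
    · simp only [dgz, e1, e2, e3, G]; simp; ring
    · simp only [dgz, e1, e4, G]; simp; ring
  have hmem : ∀ τ : ℝ, τ ≠ 0 → ((τ : ℂ) * ζ) ∈ slitPlane := by
    intro τ hτ
    rw [mem_slitPlane_iff]; right
    simp only [im_ofReal_mul]
    exact mul_ne_zero hτ him.ne
  constructor
  · have h1 : Filter.Tendsto (fun ε : ℝ => arg (G ε)) (nhds 0) (nhds (arg (σ * ζ))) := by
      rw [← hG0]
      exact (continuousAt_arg (by rw [hG0]; exact hmem σ hσ0)).tendsto.comp (hGc.tendsto 0)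
    refine (h1.mono_left nhdsWithin_le_nhds).congr' ?_
    filter_upwards [self_mem_nhdsWithin] with ε hε
    rw [hz, Complex.arg_real_mul _ hε]
  · have h1 : Filter.Tendsto (fun ε : ℝ => arg (-G ε)) (nhds 0) (nhds (arg (-(σ * ζ)))) := by
      rw [← hG0]
      refine (continuousAt_arg (x := -G 0) ?_).tendsto.comp (hGc.neg.tendsto 0)
      rw [hG0]
      have := hmem (-σ) (neg_ne_zero.2 hσ0)
      simpa using this
    refine (h1.mono_left nhdsWithin_le_nhds).congr' ?_
    filter_upwards [self_mem_nhdsWithin] with ε hε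
    rw [dgz_negw, hz, ← mul_neg, Complex.arg_real_mul _ hε]

theorem dg_jump2 {U N r : Fin 3 → ℝ} (hu : U ≠ 0) (hNu : dgd N U = 0) (hNr : 0 < dgd N r) :
      Filter.Tendsto (fun ε : ℝ => arg (dgz (U + (ε * 1) • dgx U N) r U) -
        arg (dgz (U + (ε * (-1)) • dgx U N) r U)) (nhdsWithin 0 (Set.Ioi 0))
        (nhds (-Real.pi)) ∧
      Filter.Tendsto (fun ε : ℝ => arg (dgz (U + (ε * 1) • dgx U N) r (-U)) -
        arg (dgz (U + (ε * (-1)) • dgx U N) r (-U))) (nhdsWithin 0 (Set.Ioi 0))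
        (nhds (Real.pi)) := by
  obtain ⟨ζ, hζ, h⟩ := dg_jump1 hu hNu hNr
  have h1 := h 1 (by norm_num)
  have h2 := h (-1) (by norm_num)
  have h3 := Complex.arg_neg_eq_arg_add_pi_of_im_neg hζ
  constructor
  · have := h1.1.sub h2.1
    have e : arg (((1:ℝ):ℂ) * ζ) - arg (((-1:ℝ):ℂ) * ζ) = - Real.pi := by
      simp only [ofReal_neg, ofReal_one, neg_mul, one_mul]; rw [h3]; ring
    rwa [e] at this
  · have := h1.2.sub h2.2
    have e : arg (-(((1:ℝ):ℂ) * ζ)) - arg (-(((-1:ℝ):ℂ) * ζ)) = Real.pi := by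
      simp only [ofReal_neg, ofReal_one, neg_mul, one_mul, neg_neg]; rw [h3]; ring
    rwa [e] at this

theorem dg_Jsum {x y : V} (hxy : x ≠ y) (c : V → V → ℝ) (hc : c y x = - c x y) :
    ∑ a, ∑ b, c a b * (if a = x ∧ b = y then -Real.pi else if a = y ∧ b = x then Real.pi else 0) =
      (-2 * Real.pi) * c x y := by
  have h : ∀ a b, c a b * (if a = x ∧ b = y then -Real.pi else if a = y ∧ b = x then Real.pi else 0) =
      (if a = x then (if b = y then - (Real.pi * c x y) else 0) else 0) +
      (if a = y then (if b = x then Real.pi * c y x else 0) else 0) := by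
    intro a b
    by_cases h1 : a = x
    · subst h1
      by_cases h2 : b = y
      · subst h2; simp [hxy]; ring
      · simp [hxy, h2]
    · by_cases h2 : a = y
      · subst h2
        by_cases h3 : b = x
        · subst h3; simp [h1]; ring
        · simp [h1, h3]
      · simp [h1, h2]
  simp only [h, Finset.sum_add_distrib]
  simp [hc]; ring

theorem dg_jump3 (H : DGConf Adj u) {x y : V} (hxy : Adj x y) {c : V → V → ℝ} (hc : DGFlow Adj c) :
    Filter.Tendsto (fun ε : ℝ => dgW Adj u (u x y + (ε * 1) • dgn Adj u x y) c -
      dgW Adj u (u x y + (ε * (-1)) • dgn Adj u x y) c) (nhdsWithin 0 (Set.Ioi 0))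
      (nhds ((-2 * Real.pi) * c x y)) := by
  have hyx := H.symm _ _ hxy
  have hne : x ≠ y := fun h => H.irr x (by rw [← h] at hxy; exact hxy)
  rw [← dg_Jsum hne c (hc.anti x y)]
  simp only [dgW, LinearMap.coe_mk, AddHom.coe_mk, ← Finset.sum_sub_distrib, ← mul_sub]
  refine tendsto_finsetSum _ fun a _ => tendsto_finsetSum _ fun b _ => ?_
  by_cases hab : Adj a b
  · refine Filter.Tendsto.const_mul _ ?_
    by_cases h1 : a = x ∧ b = y
    · rw [if_pos h1]
      obtain ⟨rfl, rfl⟩ := h1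
      exact (dg_jump2 (dg_une H hxy) (dgN_u a b) (dgN_pos H hxy)).1
    · rw [if_neg h1]
      by_cases h2 : a = y ∧ b = x
      · rw [if_pos h2]
        obtain ⟨rfl, rfl⟩ := h2
        have := dgN_pos H hyx
        rw [dgN_symm H] at this
        rw [H.anti b a]
        exact (dg_jump2 (dg_une H hxy) (dgN_u b a) this).2
      · rw [if_neg h2]
        have hz := dg_good_edge H hxy hab h1 h2
        have hA : ∀ σ : ℝ, Filter.Tendsto (fun ε : ℝ => arg (dgz (u x y + (ε * σ) • dgn Adj u x y) (dgr Adj u a) (u a b)))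
            (nhdsWithin 0 (Set.Ioi 0)) (nhds (arg (dgz (u x y) (dgr Adj u a) (u a b)))) := by
          intro σ
          have hcc : Continuous (fun t : ℝ => u x y + (t * σ) • dgn Adj u x y) := by fun_prop
          have h3 := ((dgz_cont (dgr Adj u a) (u a b)).comp hcc).tendsto 0
          simp only [Function.comp_apply, zero_mul, zero_smul, add_zero] at h3
          exact (((continuousAt_arg hz).tendsto.comp h3).mono_left nhdsWithin_le_nhds)
        have := (hA 1).sub (hA (-1))
        rwa [sub_self] at this
  · simp only [hc.supp a b hab, zero_mul]
    exact tendsto_const_nhds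

/-- constancy on small segments, and jump -/
theorem dg_jump (H : DGConf Adj u) {x y : V} (hxy : Adj x y) : ∃ ε0 : ℝ, 0 < ε0 ∧ ∀ ε : ℝ, 0 < ε → ε ≤ ε0 →
    ∀ c, DGFlow Adj c → dgW Adj u (u x y + (ε * 1) • dgn Adj u x y) c -
      dgW Adj u (u x y + (ε * (-1)) • dgn Adj u x y) c = (-2 * Real.pi) * c x y := by
  obtain ⟨S, hS, hg, ⟨ε1, hε1, h1⟩, -⟩ := dg_local H hxy (σ := 1) (by norm_num)
  obtain ⟨S', hS', hg', ⟨ε2, hε2, h2⟩, -⟩ := dg_local H hxy (σ := -1) (by norm_num)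
  refine ⟨min ε1 ε2, lt_min hε1 hε2, fun ε hε hεm c hc => ?_⟩
  refine tendsto_nhds_unique (Filter.Tendsto.congr' ?_ tendsto_const_nhds) (dg_jump3 H hxy hc)
  filter_upwards [Ioc_mem_nhdsGT (lt_min hε1 hε2)] with t ht
  have hl := hεm.trans (min_le_left _ _)
  have hr := hεm.trans (min_le_right _ _)
  have hl2 := ht.2.trans (min_le_left _ _)
  have hr2 := ht.2.trans (min_le_right _ _)
  rw [dgW_const hS.isPreconnected H.anti hc hg (h1 ε hε hl) (h1 t ht.1 hl2),
    dgW_const hS'.isPreconnected H.anti hc hg' (h2 ε hε hr) (h2 t ht.1 hr2)]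

end topo4

section topo5
open Complex
variable {V : Type} [Fintype V] {Adj : V → V → Prop} {u : V → V → (Fin 3 → ℝ)}

theorem dg_exists_side (H : DGConf Adj u) {x y : V} (hxy : Adj x y) {σ : ℝ} (hσ : σ ≠ 0) :
    ∃ b, Adj x b ∧ 0 < σ * dgt (u x b) (u x y) (dgr Adj u x) := by
  by_contra hcon
  push Not at hcon
  have hsum : ∑ b, (if Adj x b then (1:ℝ) else 0) * (σ * dgt (u x b) (u x y) (dgr Adj u x)) = 0 := by
    let L : (Fin 3 → ℝ) →ₗ[ℝ] ℝ :=
      { toFun := fun p => dgt p (u x y) (dgr Adj u x)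
        map_add' := fun p q => by simp [dgt]; ring
        map_smul' := fun k p => by simp [dgt]; ring }
    have h1 : L (dgr Adj u x) = ∑ b, (if Adj x b then (1:ℝ) else 0) * dgt (u x b) (u x y) (dgr Adj u x) := by
      conv_lhs => rw [dgr]
      rw [map_sum]
      refine Finset.sum_congr rfl fun b _ => ?_
      rw [map_smul]; rfl
    have h2 : L (dgr Adj u x) = 0 := by simp [L, dgt]; ring
    rw [h2] at h1
    calc _ = σ * ∑ b, (if Adj x b then (1:ℝ) else 0) * dgt (u x b) (u x y) (dgr Adj u x) := by
          rw [Finset.mul_sum]; exact Finset.sum_congr rfl fun b _ => by ring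
      _ = 0 := by rw [← h1, mul_zero]
  have hz := (Finset.sum_eq_zero_iff_of_nonpos (fun b _ => by
    by_cases hb : Adj x b
    · simpa [hb] using hcon b hb
    · simp [hb])).1 hsum
  have hz' : ∀ b, Adj x b → ∃ α β : ℝ, u x b = α • dgr Adj u x + β • u x y := by
    intro b hb
    have h1 := hz b (Finset.mem_univ b)
    simp only [hb, if_true, one_mul] at h1
    have h2 := (mul_eq_zero.1 h1).resolve_left hσ
    refine dg_decomp _ _ _ ?_ (dgd_self_pos (dg_indep H hxy)).ne'
    have : dgt (u x b) (dgr Adj u x) (u x y) = - dgt (u x b) (u x y) (dgr Adj u x) := by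
      simp only [dgt]; ring
    rw [this, h2, neg_zero]
  obtain ⟨b1, h1, n1, -⟩ := H.deg x y y
  obtain ⟨b2, h2, n2, n12⟩ := H.deg x y b1
  obtain ⟨α1, β1, e1⟩ := hz' b1 h1
  obtain ⟨α2, β2, e2⟩ := hz' b2 h2
  by_cases hα : α1 = 0
  · have := (dg_three H hxy h1 h2 n1.symm n2.symm n12.symm (k0 := -β1) (k1 := 1) (k2 := 0) (by
      rw [e1, hα]; simp)).1
    norm_num at this
  · have := (dg_three H hxy h1 h2 n1.symm n2.symm n12.symm (k0 := α1 * β2 * (-1) + α2 * β1) (k1 := -α2) (k2 := α1) (by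
      rw [e1, e2]; module)).2
    exact hα this

theorem dg_next (H : DGConf Adj u) {x y : V} (hxy : Adj x y) {σ : ℝ} (hσ : σ ≠ 0) (h : (Fin 3 → ℝ) → ℝ) :
    ∃ y', Adj x y' ∧ 0 < σ * dgt (u x y') (u x y) (dgr Adj u x) ∧
      ∀ b, Adj x b → 0 < σ * dgt (u x b) (u x y) (dgr Adj u x) →
        h (u x b) * (σ * dgt (u x y') (u x y) (dgr Adj u x)) ≤ h (u x y') * (σ * dgt (u x b) (u x y) (dgr Adj u x)) := by
  obtain ⟨b0, h0, h0'⟩ := dg_exists_side H hxy hσ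
  obtain ⟨y', hy', hmax⟩ := Finset.exists_max_image
    (Finset.univ.filter fun b => Adj x b ∧ 0 < σ * dgt (u x b) (u x y) (dgr Adj u x))
    (fun b => h (u x b) / (σ * dgt (u x b) (u x y) (dgr Adj u x))) ⟨b0, by simp [h0, h0']⟩
  simp only [Finset.mem_filter, Finset.mem_univ, true_and] at hy' hmax
  refine ⟨y', hy'.1, hy'.2, fun b hb hb' => ?_⟩
  have := hmax b ⟨hb, hb'⟩
  rwa [div_le_div_iff₀ hb' hy'.2] at this

theorem dg_tri_good (H : DGConf Adj u) {x y y' : V} (hxy : Adj x y) (hxy' : Adj x y') {σ : ℝ}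
    (hd : 0 < σ * dgt (u x y') (u x y) (dgr Adj u x))
    (hmax : ∀ b, Adj x b → 0 < σ * dgt (u x b) (u x y) (dgr Adj u x) →
        dgd (u x b) (dgd (dgr Adj u x) (dgr Adj u x) • u x y - dgd (u x y) (dgr Adj u x) • dgr Adj u x) *
          (σ * dgt (u x y') (u x y) (dgr Adj u x)) ≤
        dgd (u x y') (dgd (dgr Adj u x) (dgr Adj u x) • u x y - dgd (u x y) (dgr Adj u x) • dgr Adj u x) *
          (σ * dgt (u x b) (u x y) (dgr Adj u x)))
    {α β γ : ℝ} (hα : 0 < α) (hβ : 0 < β) (hγ : 0 < γ) :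
    DGGood Adj u (α • u x y + β • u x y' + γ • dgr Adj u x) := by
  set p := α • u x y + β • u x y' + γ • dgr Adj u x with hp
  let wt : V → ℝ := fun k => γ * (if Adj x k then (1:ℝ) else 0) + (if k = y then α else 0) + (if k = y' then β else 0)
  have hw0 : ∀ k, 0 ≤ wt k := by
    intro k; simp only [wt]
    have h1 : 0 ≤ (if Adj x k then (1:ℝ) else 0) := by split_ifs <;> norm_num
    have h2 : 0 ≤ (if k = y then α else 0) := by split_ifs <;> linarith
    have h3 : 0 ≤ (if k = y' then β else 0) := by split_ifs <;> linarith
    positivity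
  have hwpos : ∀ k, Adj x k → 0 < wt k := by
    intro k hk; simp only [wt, hk, if_true]
    have h2 : 0 ≤ (if k = y then α else 0) := by split_ifs <;> linarith
    have h3 : 0 ≤ (if k = y' then β else 0) := by split_ifs <;> linarith
    linarith
  have hws : ∀ k, ¬ Adj x k → wt k = 0 := by
    intro k hk
    have h1 : k ≠ y := by rintro rfl; exact hk hxy
    have h2 : k ≠ y' := by rintro rfl; exact hk hxy'
    simp [wt, hk, h1, h2]
  have hwp : ∑ k, wt k • u x k = p := by
    simp only [wt, add_smul, Finset.sum_add_distrib, dg_single, hp, dgr, Finset.smul_sum, smul_smul]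
    abel
  have hK : DGK Adj u x p := ⟨wt, hw0, hws, hwp.symm⟩
  have hface : ∀ z, Adj x z → ∀ t : ℝ, p ≠ t • u x z := by
    intro z hz t h
    obtain ⟨b, hb, hbz, -⟩ := H.deg x z z
    have := dg_face H hz hw0 hws (hwp.trans h) b hbz
    have := hwpos b hb
    linarith
  have hp0 : p ≠ 0 := by
    intro h; exact hface y hxy 0 (by rw [h, zero_smul])
  intro a b hab
  refine dg_slit (dg_indep H hab) ?_ ?_
  · intro hC
    by_cases hax : a = x
    · subst hax
      obtain ⟨s, t, hs, ht, he⟩ := hC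
      set U := u a y with hU
      set U' := u a y' with hU'
      set B := u a b with hB
      set R := dgr Adj u a with hR
      have e1 : σ * dgt p U R = β * (σ * dgt U' U R) := by
        rw [hp]; clear_value U U' R; simp [dgt]; ring
      have e2 : σ * dgt p U R = t * (σ * dgt B U R) := by
        rw [he]; clear_value U B R; simp [dgt]; ring
      set Q := dgd R R • U - dgd U R • R with hQ
      have hRQ : dgd R Q = 0 := by rw [hQ]; clear_value U R; simp [dgd]; ring
      have hUQ : 0 < dgd U Q := by
        have h3 := dgd_self_pos (dg_indep H hxy)
        have : dgd U Q = dgd (dgx R U) (dgx R U) := by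
          rw [hQ]; clear_value U R; simp [dgd, dgx]; ring
        rw [this]; exact h3
      have e3 : dgd p Q = α * dgd U Q + β * dgd U' Q := by
        have : dgd p Q = α * dgd U Q + β * dgd U' Q + γ * dgd R Q := by
          rw [hp]; clear_value U U' R Q; simp [dgd]; ring
        rw [this, hRQ]; ring
      have e4 : dgd p Q = t * dgd B Q := by
        have : dgd p Q = s * dgd R Q + t * dgd B Q := by
          rw [he]; clear_value B R Q; simp [dgd]; ring
        rw [this, hRQ]; ring
      have hpos : 0 < t * (σ * dgt B U R) := by
        rw [← e2, e1]; exact mul_pos hβ hd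
      have hBpos : 0 < σ * dgt B U R := pos_of_mul_pos_right hpos ht
      have hm := hmax b hab hBpos
      have h5 := mul_le_mul_of_nonneg_left hm ht
      have h6 : t * (dgd B Q * (σ * dgt U' U R)) = (α * dgd U Q + β * dgd U' Q) * (σ * dgt U' U R) := by
        rw [← e3, e4]; ring
      have h7 : t * (dgd U' Q * (σ * dgt B U R)) = β * dgd U' Q * (σ * dgt U' U R) := by
        have : t * (dgd U' Q * (σ * dgt B U R)) = dgd U' Q * (t * (σ * dgt B U R)) := by ring
        rw [this, ← e2, e1]; ring
      rw [h6, h7] at h5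
      have h8 := mul_pos (mul_pos hα hUQ) hd
      linarith
    · exact hp0 (H.disj x a p (Ne.symm hax) hK (dgC_K hab hC))
  · intro hC
    have hK2 := dgC_K hab hC
    by_cases hax : a = x
    · subst hax
      exact hp0 (dg_K_neg H hK hK2)
    · rcases H.opp x a p (Ne.symm hax) hK hK2 with h | ⟨hxa, t, -, h⟩
      · exact hp0 h
      · exact hface a hxa t h

theorem dg_C (H : DGConf Adj u) {x y : V} (hxy : Adj x y) {σ : ℝ} (hσ : σ ≠ 0) :
    ∃ y', Adj x y' ∧ y' ≠ y ∧ ∀ᶠ ε : ℝ in nhdsWithin 0 (Set.Ioi 0), ∀ c, DGFlow Adj c →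
      dgW Adj u (u x y + (ε * σ) • dgn Adj u x y) c = dgW Adj u (u x y' + (ε * (-σ)) • dgn Adj u x y') c := by
  obtain ⟨y', hxy', hd, hmax⟩ := dg_next H hxy hσ
    (fun p => dgd p (dgd (dgr Adj u x) (dgr Adj u x) • u x y - dgd (u x y) (dgr Adj u x) • dgr Adj u x))
  refine ⟨y', hxy', ?_, ?_⟩
  · rintro rfl
    have : dgt (u x y') (u x y') (dgr Adj u x) = 0 := by simp only [dgt]; ring
    rw [this] at hd; simp at hd
  obtain ⟨S, hS, hg, ⟨ε1, hε1, h1⟩, hq⟩ := dg_local H hxy hσ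
  obtain ⟨S', hS', hg', ⟨ε2, hε2, h2⟩, hq'⟩ := dg_local H hxy' (neg_ne_zero.2 hσ)
  obtain ⟨t, ht, hqt⟩ := hq _ hd
  obtain ⟨t', ht', hqt'⟩ := hq' (u x y) (by
    have : -σ * dgt (u x y) (u x y') (dgr Adj u x) = σ * dgt (u x y') (u x y) (dgr Adj u x) := by
      simp only [dgt]; ring
    rw [this]; exact hd)
  let T : Set (Fin 3 → ℝ) := {p | ∃ α β γ : ℝ, 0 < α ∧ 0 < β ∧ 0 < γ ∧ p = α • u x y + β • u x y' + γ • dgr Adj u x}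
  have hT : Convex ℝ T := by
    rw [convex_iff_forall_pos]
    rintro p ⟨α, β, γ, hα, hβ, hγ, rfl⟩ q ⟨α', β', γ', hα', hβ', hγ', rfl⟩ a b ha hb -
    refine ⟨a * α + b * α', a * β + b * β', a * γ + b * γ', by positivity, by positivity, by positivity, ?_⟩
    module
  have hTg : ∀ p ∈ T, DGGood Adj u p := by
    rintro p ⟨α, β, γ, hα, hβ, hγ, rfl⟩
    exact dg_tri_good H hxy hxy' hd hmax hα hβ hγ
  have hqT : u x y + t • dgr Adj u x + (t * t) • u x y' ∈ T :=
    ⟨1, t * t, t, one_pos, by positivity, ht, by module⟩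
  have hqT' : u x y' + t' • dgr Adj u x + (t' * t') • u x y ∈ T :=
    ⟨t' * t', 1, t', by positivity, one_pos, ht', by module⟩
  filter_upwards [Ioc_mem_nhdsGT (lt_min hε1 hε2)] with ε hε c hc
  have hl := hε.2.trans (min_le_left _ _)
  have hr := hε.2.trans (min_le_right _ _)
  rw [dgW_const hS.isPreconnected H.anti hc hg (h1 ε hε.1 hl) hqt,
    dgW_const hS'.isPreconnected H.anti hc hg' (h2 ε hε.1 hr) hqt',
    dgW_const hT.isPreconnected H.anti hc hTg hqT hqT']

theorem dg_main [LinearOrder V] [Nonempty V] (H : DGConf Adj u) :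
    Nat.card {p : V × V // p.1 < p.2 ∧ Adj p.1 p.2} + 2 ≤ 2 * Fintype.card V := by
  let sg : Bool → ℝ := fun s => if s then 1 else -1
  have hsg : ∀ s, sg s ≠ 0 := by intro s; cases s <;> simp [sg]
  have hsgn : ∀ s, sg (!s) = - sg s := by intro s; cases s <;> simp [sg]
  have hJ : ∀ᶠ ε : ℝ in nhdsWithin 0 (Set.Ioi 0), ∀ x y, Adj x y → ∀ c, DGFlow Adj c →
      dgW Adj u (u x y + (ε * 1) • dgn Adj u x y) c -
      dgW Adj u (u x y + (ε * (-1)) • dgn Adj u x y) c = (-2 * Real.pi) * c x y := by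
    rw [Filter.eventually_all]; intro x
    rw [Filter.eventually_all]; intro y
    by_cases hxy : Adj x y
    · obtain ⟨ε0, h0, h⟩ := dg_jump H hxy
      filter_upwards [Ioc_mem_nhdsGT h0] with ε hε _
      exact h ε hε.1 hε.2
    · exact Filter.Eventually.of_forall fun ε h => absurd h hxy
  have hG : ∀ᶠ ε : ℝ in nhdsWithin 0 (Set.Ioi 0), ∀ x y s, Adj x y →
      DGGood Adj u (u x y + (ε * sg s) • dgn Adj u x y) := by
    rw [Filter.eventually_all]; intro x
    rw [Filter.eventually_all]; intro y
    rw [Filter.eventually_all]; intro s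
    by_cases hxy : Adj x y
    · obtain ⟨S, hS, hg, ⟨ε1, hε1, h1⟩, -⟩ := dg_local H hxy (hsg s)
      filter_upwards [Ioc_mem_nhdsGT hε1] with ε hε _
      exact hg _ (h1 ε hε.1 hε.2)
    · exact Filter.Eventually.of_forall fun ε h => absurd h hxy
  have hC : ∀ᶠ ε : ℝ in nhdsWithin 0 (Set.Ioi 0), ∀ x y s, Adj x y → ∃ y', Adj x y' ∧ y' ≠ y ∧
      ∀ c, DGFlow Adj c → dgW Adj u (u x y + (ε * sg s) • dgn Adj u x y) c =
        dgW Adj u (u x y' + (ε * (-sg s)) • dgn Adj u x y') c := by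
    rw [Filter.eventually_all]; intro x
    rw [Filter.eventually_all]; intro y
    rw [Filter.eventually_all]; intro s
    by_cases hxy : Adj x y
    · obtain ⟨y', h1, h2, h3⟩ := dg_C H hxy (hsg s)
      filter_upwards [h3] with ε hε _
      exact ⟨y', h1, h2, hε⟩
    · exact Filter.Eventually.of_forall fun ε h => absurd h hxy
  obtain ⟨ε, hJ, hG, hC⟩ := (hJ.and (hG.and hC)).exists
  refine dg_count Adj H.symm H.irr (fun x y s => dgW Adj u (u x y + (ε * sg s) • dgn Adj u x y))
    (-2 * Real.pi) (by have := Real.pi_pos; intro h; linarith) ?_ ?_ ?_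
  · intro x y hxy c hc
    exact hJ x y hxy c hc
  · intro x y s hxy c hc
    rw [← dgW_neg hc (hG x y s hxy), H.anti x y, dgn_symm H x y]
    congr 2
    rw [smul_neg]; abel
  · intro x y s hxy
    obtain ⟨y', h1, h2, h3⟩ := hC x y s hxy
    refine ⟨y', h1, h2, fun c hc => ?_⟩
    simp only [hsgn]
    exact h3 c hc

end topo5

theorem dg_mem_unitPairs {X : Finset (EuclideanSpace ℝ (Fin 4))} {s : Finset (EuclideanSpace ℝ (Fin 4))}
    (h : s ∈ unitPairs X) : ∃ x y, x ∈ X ∧ y ∈ X ∧ x ≠ y ∧ ‖x - y‖ = 1 ∧ s = {x, y} := by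
  simp only [unitPairs, Finset.mem_filter, Finset.mem_powersetCard] at h
  obtain ⟨⟨h1, h2⟩, h3⟩ := h
  obtain ⟨x, y, hxy, rfl⟩ := Finset.card_eq_two.1 h2
  exact ⟨x, y, h1 (by simp), h1 (by simp), hxy, h3 x (by simp) y (by simp) hxy, rfl⟩

theorem dg_unitPairs_mem {X : Finset (EuclideanSpace ℝ (Fin 4))} {x y : EuclideanSpace ℝ (Fin 4)}
    (hx : x ∈ X) (hy : y ∈ X) (hne : x ≠ y) (h : ‖x - y‖ = 1) : {x, y} ∈ unitPairs X := by
  simp only [unitPairs, Finset.mem_filter, Finset.mem_powersetCard]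
  refine ⟨⟨?_, Finset.card_pair hne⟩, ?_⟩
  · intro z hz
    simp only [Finset.mem_insert, Finset.mem_singleton] at hz
    rcases hz with rfl | rfl <;> assumption
  · intro a ha b hb hab
    simp only [Finset.mem_insert, Finset.mem_singleton] at ha hb
    rcases ha with rfl | rfl <;> rcases hb with rfl | rfl
    · exact absurd rfl hab
    · exact h
    · rw [norm_sub_rev]; exact h
    · exact absurd rfl hab

theorem dg_remove (X : Finset (EuclideanSpace ℝ (Fin 4))) (x : EuclideanSpace ℝ (Fin 4)) :
    (unitPairs X).card ≤ (unitPairs (X.erase x)).card + (X.filter fun y => ‖x - y‖ = 1).card := by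
  have hsub : unitPairs X ⊆ unitPairs (X.erase x) ∪
      (X.filter fun y => ‖x - y‖ = 1).image (fun y => {x, y}) := by
    intro s hs
    obtain ⟨a, b, ha, hb, hab, h, rfl⟩ := dg_mem_unitPairs hs
    rw [Finset.mem_union, Finset.mem_image]
    by_cases hax : a = x
    · subst hax
      right
      exact ⟨b, by simp [hb, h], rfl⟩
    · by_cases hbx : b = x
      · subst hbx
        right
        exact ⟨a, by rw [Finset.mem_filter, norm_sub_rev]; exact ⟨ha, h⟩, Finset.pair_comm _ _⟩
      · left
        exact dg_unitPairs_mem (Finset.mem_erase.2 ⟨hax, ha⟩) (Finset.mem_erase.2 ⟨hbx, hb⟩) hab h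
  refine (Finset.card_le_card hsub).trans ((Finset.card_union_le _ _).trans ?_)
  exact Nat.add_le_add_left Finset.card_image_le _

theorem dg_dense (r : ℝ) (hr : r > 1 / Real.sqrt 2)
    (X : Finset (EuclideanSpace ℝ (Fin 4))) (hX : 0 < X.card)
    (hsphere : ∀ x ∈ X, ‖x‖ = r)
    (hdiam : ∀ x ∈ X, ∀ y ∈ X, ‖x - y‖ ≤ 1)
    (hdeg : ∀ x ∈ X, 3 ≤ (X.filter fun y => ‖x - y‖ = 1).card) :
    (unitPairs X).card + 2 ≤ 2 * X.card := by
  have hr0 : 0 < r := lt_trans (by positivity) hr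
  have hr2 : 1 < 2 * (r * r) := by
    have h2 : 0 < Real.sqrt 2 := by positivity
    have h3 : 1 < r * Real.sqrt 2 := by rwa [gt_iff_lt, div_lt_iff₀ h2] at hr
    have h4 : Real.sqrt 2 * Real.sqrt 2 = 2 := Real.mul_self_sqrt (by norm_num)
    have h5 : 1 < (r * Real.sqrt 2) * (r * Real.sqrt 2) := by nlinarith
    calc (1:ℝ) < (r * Real.sqrt 2) * (r * Real.sqrt 2) := h5
      _ = (Real.sqrt 2 * Real.sqrt 2) * (r * r) := by ring
      _ = 2 * (r * r) := by rw [h4]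
  let φ := X.equivFin
  let pt : Fin X.card → EuclideanSpace ℝ (Fin 4) := fun i => (φ.symm i : EuclideanSpace ℝ (Fin 4))
  have hpt : ∀ i, pt i ∈ X := fun i => (φ.symm i).2
  have hinj : ∀ i j, pt i = pt j → i = j := fun i j h => φ.symm.injective (Subtype.ext h)
  have hsurj : ∀ x ∈ X, ∃ i, pt i = x := fun x hx => ⟨φ ⟨x, hx⟩, by simp [pt]⟩
  let Adj : Fin X.card → Fin X.card → Prop := fun a b => ‖pt a - pt b‖ = 1
  let e : Fin X.card → EuclideanSpace ℝ (Fin 4) := fun i => r⁻¹ • pt i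
  have hin : ∀ a b, inner ℝ (e a) (e b) = 1 - ‖pt a - pt b‖ * ‖pt a - pt b‖ / (2 * (r * r)) := by
    intro a b
    simp only [e]
    rw [real_inner_smul_left, real_inner_smul_right,
      real_inner_eq_norm_mul_self_add_norm_mul_self_sub_norm_sub_mul_self_div_two,
      hsphere _ (hpt a), hsphere _ (hpt b)]
    field_simp
    ring
  have : Nonempty (Fin X.card) := ⟨⟨0, hX⟩⟩
  have hsys : DGSys Adj e (1 - 1 / (2 * (r * r))) := by
    have hpos : 0 < 2 * (r * r) := by positivity
    refine ⟨?_, ?_, ?_, ?_, ?_, ?_⟩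
    · have : 1 / (2 * (r * r)) < 1 := by rw [div_lt_one hpos]; exact hr2
      linarith
    · have : 0 < 1 / (2 * (r * r)) := by positivity
      linarith
    · intro a; rw [hin]; simp
    · intro a b
      rw [hin]
      have h1 := hdiam _ (hpt a) _ (hpt b)
      have h2 := norm_nonneg (pt a - pt b)
      have h3 : ‖pt a - pt b‖ * ‖pt a - pt b‖ ≤ 1 := by nlinarith
      have := div_le_div_of_nonneg_right h3 hpos.le
      linarith
    · intro a b hab
      rw [hin]
      have h1 : 0 < ‖pt a - pt b‖ := norm_pos_iff.2 (sub_ne_zero.2 fun h => hab (hinj _ _ h))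
      have : 0 < ‖pt a - pt b‖ * ‖pt a - pt b‖ / (2 * (r * r)) := by positivity
      linarith
    · intro a b
      rw [hin]
      constructor
      · intro h
        have h : ‖pt a - pt b‖ = 1 := h
        refine ⟨?_, by rw [h]; norm_num⟩
        rintro rfl; simp at h
      · rintro ⟨-, h⟩
        have h1 : ‖pt a - pt b‖ * ‖pt a - pt b‖ / (2 * (r * r)) = 1 / (2 * (r * r)) := by linarith
        rw [div_left_inj' hpos.ne'] at h1
        have h2 := norm_nonneg (pt a - pt b)
        change ‖pt a - pt b‖ = 1
        nlinarith
  obtain ⟨u, hu⟩ := dg_conf hsys (by simp) (by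
    intro x y z
    have h1 := hdeg (pt x) (hpt x)
    have h2 : ((({pt y, pt z} : Finset (EuclideanSpace ℝ (Fin 4))))).card ≤ 2 := Finset.card_le_two
    obtain ⟨w, hw, hw'⟩ := Finset.exists_mem_notMem_of_card_lt_card (lt_of_le_of_lt h2 (Nat.lt_of_succ_le h1))
    rw [Finset.mem_filter] at hw
    obtain ⟨b, rfl⟩ := hsurj w hw.1
    simp only [Finset.mem_insert, Finset.mem_singleton, not_or] at hw'
    exact ⟨b, hw.2, fun h => hw'.1 (by rw [h]), fun h => hw'.2 (by rw [h])⟩)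
  have hmain := dg_main hu
  rw [Fintype.card_fin, Nat.card_eq_fintype_card, Fintype.card_subtype] at hmain
  refine le_trans (Nat.add_le_add_right ?_ 2) hmain
  have hsub : unitPairs X ⊆ (Finset.univ.filter fun p : Fin X.card × Fin X.card => p.1 < p.2 ∧ Adj p.1 p.2).image
      (fun p => {pt p.1, pt p.2}) := by
    intro s hs
    obtain ⟨x, y, hx, hy, hne, h, rfl⟩ := dg_mem_unitPairs hs
    obtain ⟨a, rfl⟩ := hsurj x hx
    obtain ⟨b, rfl⟩ := hsurj y hy
    rw [Finset.mem_image]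
    rcases lt_trichotomy a b with hab | hab | hab
    · exact ⟨(a, b), by simp only [Finset.mem_filter, Finset.mem_univ, true_and]; exact ⟨hab, h⟩, rfl⟩
    · exact absurd (by rw [hab]) hne
    · refine ⟨(b, a), ?_, Finset.pair_comm _ _⟩
      simp only [Finset.mem_filter, Finset.mem_univ, true_and]
      exact ⟨hab, by change ‖pt b - pt a‖ = 1; rw [norm_sub_rev]; exact h⟩
  exact (Finset.card_le_card hsub).trans Finset.card_image_le

theorem dg_all (r : ℝ) (hr : r > 1 / Real.sqrt 2) (n : ℕ) :
    ∀ (X : Finset (EuclideanSpace ℝ (Fin 4))), X.card = n → (∀ x ∈ X, ‖x‖ = r) →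
    (∀ x ∈ X, ∀ y ∈ X, ‖x - y‖ ≤ 1) → (unitPairs X).card ≤ 2 * n - 2 := by
  induction n with
  | zero =>
    intro X hX _ _
    rw [Finset.card_eq_zero] at hX
    subst hX
    simp [unitPairs]
  | succ m ih =>
    intro X hX hs hd
    by_cases hdeg : ∀ x ∈ X, 3 ≤ (X.filter fun y => ‖x - y‖ = 1).card
    · have := dg_dense r hr X (by omega) hs hd hdeg
      omega
    · push Not at hdeg
      obtain ⟨x, hx, hlt⟩ := hdeg
      have h1 := dg_remove X x
      have hc : (X.erase x).card = m := by rw [Finset.card_erase_of_mem hx, hX]; rfl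
      have h2 := ih (X.erase x) hc (fun y hy => hs y (Finset.mem_of_mem_erase hy))
        (fun y hy z hz => hd y (Finset.mem_of_mem_erase hy) z (Finset.mem_of_mem_erase hz))
      rcases Nat.eq_zero_or_pos m with rfl | hm
      · have h3 : unitPairs X = ∅ := by
          rw [unitPairs, Finset.powersetCard_eq_empty.2 (by omega)]; rfl
        rw [h3]; simp
      · omega

theorem diameter_graph_sphere_edges (r : ℝ) (hr : r > 1 / Real.sqrt 2)
    (X : Finset (EuclideanSpace ℝ (Fin 4))) (n : ℕ) (hn : X.card = n)
    (hsphere : ∀ x ∈ X, ‖x‖ = r)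
    (hdiam : ∀ x ∈ X, ∀ y ∈ X, ‖x - y‖ ≤ 1) :
    (unitPairs X).card ≤ 2 * n - 2 := by
  exact dg_all r hr n X hn hsphere hdiam
end

section
/- For every n ≥ 52, the maximum, over all sets X of n points in Euclidean 4-space with all pairwise distances at most 1, of the number of unordered pairs {x, y} ⊆ X with ‖x − y‖ = 1, equals F₂(n), where F₂(n) = ⌊n/2⌋·⌈n/2⌉ + ⌈n/2⌉ + 1 if n is not congruent to 3 modulo 4, and F₂(n) = ⌊n/2⌋·⌈n/2⌉ + ⌈n/2⌉ if n is congruent to 3 modulo 4. In other words, every such X has at most F₂(n) unit-distance pairs, and some such X attains exactly F₂(n) unit-distance pairs. -/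
attribute [local instance] Classical.propDecidable

/-- `F₂ n = t₂(n) + ⌈n/2⌉ (+ 1 if n ≢ 3 mod 4)`, where `t₂(n) = ⌊n/2⌋⌈n/2⌉`. -/
def F₂ (n : ℕ) : ℕ :=
  if n % 4 = 3 then n / 2 * ((n + 1) / 2) + (n + 1) / 2
  else n / 2 * ((n + 1) / 2) + (n + 1) / 2 + 1

/-! Circle lemmas in the complex plane -/

lemma circ_norm_sub (z w : ℂ) : ‖z - w‖ ^ 2 = ‖z‖ ^ 2 + ‖w‖ ^ 2 - 2 * (w * star z).re := by
  rw [Complex.sq_norm, Complex.sq_norm, Complex.sq_norm]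
  simp [Complex.normSq_apply]
  ring

lemma circ_sq (z w : ℂ) : (w * star z).re ^ 2 + (w * star z).im ^ 2 = ‖z‖ ^ 2 * ‖w‖ ^ 2 := by
  rw [Complex.sq_norm, Complex.sq_norm]
  simp [Complex.normSq_apply]
  ring

lemma circ_eq (z v w : ℂ) (hz : z ≠ 0) (h1 : (v * star z).re = (w * star z).re)
    (h2 : (v * star z).im = (w * star z).im) : v = w := by
  have h : v * star z = w * star z := Complex.ext h1 h2
  have : star z ≠ 0 := by simpa using hz
  exact mul_right_cancel₀ this h

/-- sign lemma -/
lemma circ_sign (q s D c d : ℝ) (hD : 0 < D) (h1 : s ^ 2 + D ^ 2 = q ^ 2)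
    (h2 : c ^ 2 + d ^ 2 = q ^ 2) (hc : s ≤ c) (hd : 0 ≤ d) : s * d ≤ D * c := by
  rcases le_total 0 s with hs | hs
  · have : d ≤ D := by
      apply le_of_sq_le_sq _ hD.le
      nlinarith
    nlinarith
  · rcases le_total 0 c with hc0 | hc0
    · nlinarith
    · have : D ≤ d := by
        apply le_of_sq_le_sq _ hd
        nlinarith
      nlinarith

lemma circ_odd (S : Finset ℂ) (r : ℝ) (hne : S.Nonempty) (hr : ∀ z ∈ S, ‖z‖ = r)
    (hdiam : ∀ z ∈ S, ∀ w ∈ S, ‖z - w‖ ≤ 1)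
    (hnb : ∀ z ∈ S, ∃ v ∈ S, ∃ w ∈ S, v ≠ w ∧ ‖z - v‖ = 1 ∧ ‖z - w‖ = 1) : Odd S.card := by
  obtain ⟨u, hu⟩ := hne
  have hr0 : 0 < r := by
    obtain ⟨v, hv, w, hw, hvw, -, -⟩ := hnb u hu
    rcases (norm_nonneg u).lt_or_eq with h | h
    · rw [← hr u hu]; exact h
    · exfalso; apply hvw
      have h0 : r = 0 := by rw [← hr u hu, ← h]
      rw [norm_eq_zero.1 ((hr v hv).trans h0), norm_eq_zero.1 ((hr w hw).trans h0)]
  have hz0 : ∀ z ∈ S, z ≠ 0 := by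
    intro z hz h
    have := hr z hz
    rw [h, norm_zero] at this
    linarith
  set s : ℝ := r ^ 2 - 1 / 2 with hs
  set q : ℝ := r ^ 2 with hq
  have hq0 : 0 < q := by positivity
  have hre : ∀ z ∈ S, ∀ w ∈ S, s ≤ (w * star z).re := by
    intro z hz w hw
    have h1 := circ_norm_sub z w
    have h2 := hdiam z hz w hw
    rw [hr z hz, hr w hw] at h1
    nlinarith [norm_nonneg (z - w)]
  have hre1 : ∀ z ∈ S, ∀ w ∈ S, ‖z - w‖ = 1 → (w * star z).re = s := by
    intro z hz w hw h
    have h1 := circ_norm_sub z w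
    rw [hr z hz, hr w hw, h] at h1
    linarith
  have hsq : ∀ z ∈ S, ∀ w ∈ S, (w * star z).re ^ 2 + (w * star z).im ^ 2 = q ^ 2 := by
    intro z hz w hw
    rw [circ_sq, hr z hz, hr w hw]; ring
  set D : ℝ := √(q ^ 2 - s ^ 2) with hD
  have key : ∀ z ∈ S, 0 < D ∧ s ^ 2 + D ^ 2 = q ^ 2 ∧ (∃ v ∈ S, (v * star z).re = s ∧ (v * star z).im = D) ∧
      (∃ v ∈ S, (v * star z).re = s ∧ (v * star z).im = -D) := by
    intro z hz
    obtain ⟨v, hv, w, hw, hvw, h1, h2⟩ := hnb z hz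
    have a1 := hsq z hz v hv
    have a2 := hsq z hz w hw
    have b1 := hre1 z hz v hv h1
    have b2 := hre1 z hz w hw h2
    have hD2 : D ^ 2 = q ^ 2 - s ^ 2 := by
      rw [hD, Real.sq_sqrt]
      rw [b1] at a1
      nlinarith [sq_nonneg (v * star z).im]
    have hDn : 0 ≤ D := Real.sqrt_nonneg _
    have c1 : (v * star z).im ^ 2 = D ^ 2 := by rw [hD2, ← a1, b1]; ring
    have c2 : (w * star z).im ^ 2 = D ^ 2 := by rw [hD2, ← a2, b2]; ring
    have hne : (v * star z).im ≠ (w * star z).im := by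
      intro h
      exact hvw (circ_eq z v w (hz0 z hz) (b1.trans b2.symm) h)
    have hDp : 0 < D := by
      rcases hDn.lt_or_eq with h | h
      · exact h
      · exfalso; apply hne
        rw [← h] at c1 c2
        simp only [ne_eq, OfNat.ofNat_ne_zero, not_false_eq_true, zero_pow, pow_eq_zero_iff] at c1 c2
        rw [c1, c2]
    refine ⟨hDp, by linarith, ?_⟩
    rcases sq_eq_sq_iff_eq_or_eq_neg.1 c1 with e1 | e1 <;>
    rcases sq_eq_sq_iff_eq_or_eq_neg.1 c2 with e2 | e2
    · exact absurd (e1.trans e2.symm) hne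
    · exact ⟨⟨v, hv, b1, e1⟩, ⟨w, hw, b2, e2⟩⟩
    · exact ⟨⟨w, hw, b2, e2⟩, ⟨v, hv, b1, e1⟩⟩
    · exact absurd (e1.trans e2.symm) hne
  obtain ⟨hDp, hsD, -, -⟩ := key u hu
  have hzz : ∀ z ∈ S, z * star z = (q : ℂ) := by
    intro z hz
    have : z * star z = ((Complex.normSq z : ℝ) : ℂ) := Complex.mul_conj z
    rw [this, Complex.normSq_eq_norm_sq, hr z hz]
  set ρ : ℂ := ⟨s / q, D / q⟩ with hρ
  have hρq : ρ * q = ⟨s, D⟩ := by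
    apply Complex.ext <;> simp [hρ] <;> field_simp
  have hρq' : star ρ * q = ⟨s, -D⟩ := by
    apply Complex.ext <;> simp [hρ] <;> field_simp
  have hρ1 : ρ ≠ 0 := by
    intro h
    have := congrArg Complex.im h
    simp [hρ] at this
    rcases this with h | h <;> linarith
  have mem1 : ∀ z ∈ S, ρ * z ∈ S := by
    intro z hz
    obtain ⟨-, -, ⟨v, hv, h1, h2⟩, -⟩ := key z hz
    have : ρ * z = v := by
      have hs0 : star z ≠ 0 := by simpa using hz0 z hz
      apply mul_right_cancel₀ hs0
      rw [mul_assoc, hzz z hz, hρq]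
      exact Complex.ext h1.symm h2.symm
    rwa [this]
  have mem2 : ∀ z ∈ S, star ρ * z ∈ S := by
    intro z hz
    obtain ⟨-, -, -, ⟨v, hv, h1, h2⟩⟩ := key z hz
    have : star ρ * z = v := by
      have hs0 : star z ≠ 0 := by simpa using hz0 z hz
      apply mul_right_cancel₀ hs0
      rw [mul_assoc, hzz z hz, hρq']
      exact Complex.ext h1.symm h2.symm
    rwa [this]
  have hu0 : ∀ x ∈ S, (x * star u).im = 0 → x = u := by
    intro x hx h
    have a := hsq u hu x hx
    have b := hre u hu x hx
    have huu := hzz u hu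
    apply circ_eq u x u (hz0 u hu)
    · rw [huu]
      have hh : ((x * star u).re - q) * ((x * star u).re + q) = 0 := by rw [h] at a; linarith
      rcases mul_eq_zero.1 hh with h' | h'
      · rw [Complex.ofReal_re]; linarith
      · nlinarith
    · rw [h, huu]; simp
  set L := S.filter (fun x => 0 < (x * star u).im) with hL
  set R := S.filter (fun x => (x * star u).im < 0) with hR
  have huim : (u * star u).im = 0 := by rw [hzz u hu]; simp
  have huL : u ∉ L := fun h => (Finset.mem_filter.1 h).2.ne' huim
  have huR : u ∉ R := fun h => (Finset.mem_filter.1 h).2.ne huim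
  have hS : S = insert u (L ∪ R) := by
    ext x
    simp only [hL, hR, Finset.mem_insert, Finset.mem_union, Finset.mem_filter]
    constructor
    · intro hx
      rcases lt_trichotomy (x * star u).im 0 with h | h | h
      · exact Or.inr (Or.inr ⟨hx, h⟩)
      · exact Or.inl (hu0 x hx h)
      · exact Or.inr (Or.inl ⟨hx, h⟩)
    · rintro (h | h | h)
      · rw [h]; exact hu
      · exact h.1
      · exact h.1
  have hLR : Disjoint L R := by
    rw [Finset.disjoint_left]
    intro x h1 h2
    simp only [hL, hR, Finset.mem_filter] at h1 h2
    linarith [h1.2, h2.2]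
  have hcard : S.card = L.card + R.card + 1 := by
    conv_lhs => rw [hS]
    rw [Finset.card_insert_of_notMem (by simp [huL, huR]), Finset.card_union_of_disjoint hLR]
  have le1 : (insert u R).card ≤ (insert u L).card := by
    apply Finset.card_le_card_of_injOn (fun x => ρ * x)
    · intro x hx
      have hxS : x ∈ S := by
        rw [hS]; simp only [Finset.coe_insert, Set.mem_insert_iff, Finset.mem_coe] at hx
        simp only [Finset.mem_insert, Finset.mem_union]; tauto
      have hxi : (x * star u).im ≤ 0 := by
        simp only [Finset.coe_insert, Set.mem_insert_iff, Finset.mem_coe] at hx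
        rcases hx with h | h
        · rw [h, huim]
        · exact (Finset.mem_filter.1 h).2.le
      have hsg := circ_sign q s D (x * star u).re (-(x * star u).im) hDp hsD
        (by rw [neg_sq]; exact hsq u hu x hxS) (hre u hu x hxS) (by linarith)
      have him : 0 ≤ (ρ * x * star u).im := by
        rw [mul_assoc, Complex.mul_im]
        have : ρ.re * (x * star u).im + ρ.im * (x * star u).re =
          (D * (x * star u).re - s * (-(x * star u).im)) / q := by
          simp only [hρ]; field_simp; ring
        rw [this]
        apply div_nonneg _ hq0.le
        linarith
      simp only [Finset.coe_insert, Set.mem_insert_iff, Finset.mem_coe]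
      rcases him.lt_or_eq with h | h
      · right; exact Finset.mem_filter.2 ⟨mem1 x hxS, h⟩
      · left; exact hu0 _ (mem1 x hxS) h.symm
    · intro x _ y _ h
      exact mul_left_cancel₀ hρ1 h
  have le2 : (insert u L).card ≤ (insert u R).card := by
    apply Finset.card_le_card_of_injOn (fun x => star ρ * x)
    · intro x hx
      have hxS : x ∈ S := by
        rw [hS]; simp only [Finset.coe_insert, Set.mem_insert_iff, Finset.mem_coe] at hx
        simp only [Finset.mem_insert, Finset.mem_union]; tauto
      have hxi : 0 ≤ (x * star u).im := by
        simp only [Finset.coe_insert, Set.mem_insert_iff, Finset.mem_coe] at hx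
        rcases hx with h | h
        · rw [h, huim]
        · exact (Finset.mem_filter.1 h).2.le
      have hsg := circ_sign q s D (x * star u).re ((x * star u).im) hDp hsD
        (hsq u hu x hxS) (hre u hu x hxS) (by linarith)
      have him : (star ρ * x * star u).im ≤ 0 := by
        rw [mul_assoc, Complex.mul_im]
        have : (star ρ).re * (x * star u).im + (star ρ).im * (x * star u).re =
          -((D * (x * star u).re - s * ((x * star u).im)) / q) := by
          have e1 : (star ρ).re = s / q := by simp [hρ]
          have e2 : (star ρ).im = - (D / q) := by simp [hρ]
          rw [e1, e2]; field_simp; ring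
        rw [this]
        have : 0 ≤ (D * (x * star u).re - s * ((x * star u).im)) / q := by
          apply div_nonneg _ hq0.le
          linarith
        linarith
      simp only [Finset.coe_insert, Set.mem_insert_iff, Finset.mem_coe]
      rcases him.lt_or_eq with h | h
      · right; exact Finset.mem_filter.2 ⟨mem2 x hxS, h⟩
      · left; exact hu0 _ (mem2 x hxS) h
    · intro x _ y _ h
      exact mul_left_cancel₀ (by simpa using hρ1) h
  rw [Finset.card_insert_of_notMem huL, Finset.card_insert_of_notMem huR] at le1 le2
  exact ⟨L.card, by omega⟩

/-- coefficients of a point of the arc -/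
lemma circ_coef (r s : ℝ) (hr : 0 < r) (hs0 : 0 ≤ s) (hs1 : s < r ^ 2) (z w u : ℂ) (hz : ‖z‖ = r) (hw : ‖w‖ = r)
    (hu : ‖u‖ = r) (hzw : (w * star z).re = s) (huz : s ≤ (u * star z).re)
    (huw : s ≤ (u * star w).re) :
    ∃ α β : ℝ, 0 ≤ α ∧ 0 ≤ β ∧ 1 ≤ α + β ∧ u = α * z + β * w ∧ (β = 0 → u = z) ∧ (α = 0 → u = w) := by
  have hz2 : z.re ^ 2 + z.im ^ 2 = r ^ 2 := by
    rw [← hz, Complex.sq_norm, Complex.normSq_apply]; ring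
  have hw2 : w.re ^ 2 + w.im ^ 2 = r ^ 2 := by
    rw [← hw, Complex.sq_norm, Complex.normSq_apply]; ring
  have hu2 : u.re ^ 2 + u.im ^ 2 = r ^ 2 := by
    rw [← hu, Complex.sq_norm, Complex.normSq_apply]; ring
  have e1 : w.re * z.re + w.im * z.im = s := by rw [← hzw]; simp
  have e2 : s ≤ u.re * z.re + u.im * z.im := by convert huz using 1; simp
  have e3 : s ≤ u.re * w.re + u.im * w.im := by convert huw using 1; simp
  set p := z.re * w.im - z.im * w.re with hp
  have hpp : p ^ 2 = r ^ 4 - s ^ 2 := by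
    have : p ^ 2 = (z.re ^ 2 + z.im ^ 2) * (w.re ^ 2 + w.im ^ 2) - (w.re * z.re + w.im * z.im) ^ 2 := by
      rw [hp]; ring
    rw [this, hz2, hw2, e1]; ring
  have hp0 : p ≠ 0 := by
    intro h
    rw [h] at hpp
    nlinarith
  set α := (u.re * w.im - u.im * w.re) / p with hα
  set β := (z.re * u.im - z.im * u.re) / p with hβ
  have ure : u.re = α * z.re + β * w.re := by
    rw [hα, hβ]; field_simp; rw [hp]; ring
  have uim : u.im = α * z.im + β * w.im := by
    rw [hα, hβ]; field_simp; rw [hp]; ring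
  clear_value α β p
  have f1 : u.re * z.re + u.im * z.im = α * r ^ 2 + β * s := by
    rw [ure, uim, ← e1, ← hz2]; ring
  have f2 : u.re * w.re + u.im * w.im = α * s + β * r ^ 2 := by
    rw [ure, uim, ← e1, ← hw2]; ring
  have f3 : α ^ 2 * r ^ 2 + β ^ 2 * r ^ 2 + 2 * α * β * s = r ^ 2 := by
    rw [← e1]; conv_rhs => rw [← hu2, ure, uim]
    have : α ^ 2 * r ^ 2 + β ^ 2 * r ^ 2 = α ^ 2 * (z.re ^ 2 + z.im ^ 2) + β ^ 2 * (w.re ^ 2 + w.im ^ 2) := by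
      rw [hz2, hw2]
    rw [this]; ring
  have g1 : u.re * z.re + u.im * z.im ≤ r ^ 2 := by
    nlinarith [sq_nonneg (u.re - z.re), sq_nonneg (u.im - z.im)]
  have g2 : u.re * w.re + u.im * w.im ≤ r ^ 2 := by
    nlinarith [sq_nonneg (u.re - w.re), sq_nonneg (u.im - w.im)]
  rw [f1] at e2 g1
  rw [f2] at e3 g2
  have hq : 0 < r ^ 2 := by positivity
  generalize hqd : r ^ 2 = q at *
  clear hz hw hu hzw huz huw hz2 hw2 hu2 e1 hpp hp0 hα hβ hp f1 f2
  have hsq : 0 < q ^ 2 - s ^ 2 := by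
    have := mul_pos (sub_pos.2 hs1) (add_pos_of_pos_of_nonneg hq hs0)
    linarith
  have hβ0 : 0 ≤ β := by
    by_contra hneg
    push Not at hneg
    have h1 := mul_le_mul_of_nonneg_right g1 hs0
    have h2 := mul_le_mul_of_nonneg_right e3 hq.le
    have h3 := mul_neg_of_neg_of_pos hneg hsq
    linarith
  have hα0 : 0 ≤ α := by
    by_contra hneg
    push Not at hneg
    have h1 := mul_le_mul_of_nonneg_right g2 hs0
    have h2 := mul_le_mul_of_nonneg_right e2 hq.le
    have h3 := mul_neg_of_neg_of_pos hneg hsq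
    linarith
  have hu' : u = α * z + β * w := by
    apply Complex.ext <;> simp [ure, uim]
  refine ⟨α, β, hα0, hβ0, ?_, hu', ?_, ?_⟩
  · by_contra h
    push Not at h
    have h3 : (α + β) ^ 2 < 1 := by nlinarith
    have h5 := mul_lt_mul_of_pos_right h3 hq
    have h4 : α * β * s ≤ α * β * q := mul_le_mul_of_nonneg_left hs1.le (mul_nonneg hα0 hβ0)
    linarith
  · intro h
    rw [h] at f3 hu'
    have : α ^ 2 = 1 := by
      have : (α ^ 2 - 1) * q = 0 := by linarith
      rcases mul_eq_zero.1 this with h | h <;> linarith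
    have : α = 1 := by nlinarith
    rw [hu', this]; simp
  · intro h
    rw [h] at f3 hu'
    have : β ^ 2 = 1 := by
      have : (β ^ 2 - 1) * q = 0 := by linarith
      rcases mul_eq_zero.1 this with h | h <;> linarith
    have : β = 1 := by nlinarith
    rw [hu', this]; simp

lemma circ_one (r : ℝ) (hr : 0 ≤ r) (hr2 : 1 / 2 ≤ r ^ 2) (z w u v : ℂ) (hz : ‖z‖ = r) (hw : ‖w‖ = r)
    (hu : ‖u‖ = r) (hv : ‖v‖ = r) (hzw : ‖z - w‖ = 1) (huv : ‖u - v‖ = 1)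
    (h1 : ‖z - u‖ ≤ 1) (h2 : ‖z - v‖ ≤ 1) (h3 : ‖w - u‖ ≤ 1) (h4 : ‖w - v‖ ≤ 1) :
    (u = z ∧ v = w) ∨ (u = w ∧ v = z) := by
  have hr0 : 0 < r := by
    rcases hr.lt_or_eq with h | h
    · exact h
    · rw [← h] at hr2; norm_num at hr2
  set s : ℝ := r ^ 2 - 1 / 2 with hs
  have hle : ∀ a b : ℂ, ‖a‖ = r → ‖b‖ = r → ‖a - b‖ ≤ 1 → s ≤ (b * star a).re := by
    intro a b ha hb h
    have := circ_norm_sub a b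
    rw [ha, hb] at this
    nlinarith [norm_nonneg (a - b)]
  have heq : ∀ a b : ℂ, ‖a‖ = r → ‖b‖ = r → ‖a - b‖ = 1 → (b * star a).re = s := by
    intro a b ha hb h
    have := circ_norm_sub a b
    rw [ha, hb, h] at this
    linarith
  obtain ⟨α, β, ha, hb, hab, eu, eu1, eu2⟩ := circ_coef r s hr0 (by linarith) (by linarith) z w u hz hw hu
    (heq z w hz hw hzw) (hle z u hz hu h1) (hle w u hw hu h3)
  obtain ⟨γ, δ, hc, hd, hcd, ev, ev1, ev2⟩ := circ_coef r s hr0 (by linarith) (by linarith) z w v hz hw hv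
    (heq z w hz hw hzw) (hle z v hz hv h2) (hle w v hw hv h4)
  have hz2 : z.re ^ 2 + z.im ^ 2 = r ^ 2 := by
    rw [← hz, Complex.sq_norm, Complex.normSq_apply]; ring
  have hw2 : w.re ^ 2 + w.im ^ 2 = r ^ 2 := by
    rw [← hw, Complex.sq_norm, Complex.normSq_apply]; ring
  have e1 : w.re * z.re + w.im * z.im = s := by rw [← heq z w hz hw hzw]; simp
  have e2 : v.re * u.re + v.im * u.im = s := by rw [← heq u v hu hv huv]; simp
  have e3 : v.re * u.re + v.im * u.im = (α * γ + β * δ) * r ^ 2 + (α * δ + β * γ) * s := by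
    have : v.re * u.re + v.im * u.im = α * γ * (z.re ^ 2 + z.im ^ 2) + β * δ * (w.re ^ 2 + w.im ^ 2)
       + (α * δ + β * γ) * (w.re * z.re + w.im * z.im) := by
      rw [eu, ev]; simp; ring
    rw [this, hz2, hw2, e1]; ring
  have h5 : (α * γ + β * δ) * (1 / 2) + (α + β) * (γ + δ) * s = s := by
    rw [e2] at e3
    have : r ^ 2 = s + 1 / 2 := by rw [hs]; ring
    rw [this] at e3
    linarith
  have h6 : 1 ≤ (α + β) * (γ + δ) := by nlinarith
  have h7 : 0 ≤ α * γ := mul_nonneg ha hc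
  have h8 : 0 ≤ β * δ := mul_nonneg hb hd
  have h9 : s ≤ (α + β) * (γ + δ) * s := by nlinarith
  have h10 : α * γ = 0 := by linarith
  have h11 : β * δ = 0 := by linarith
  rcases mul_eq_zero.1 h10 with h | h
  · right
    refine ⟨eu2 h, ?_⟩
    rcases mul_eq_zero.1 h11 with h' | h'
    · rw [h, h'] at hab; norm_num at hab
    · exact ev1 h'
  · left
    refine ⟨?_, ev2 h⟩
    rcases mul_eq_zero.1 h11 with h' | h'
    · exact eu1 h'
    · rw [h, h'] at hcd; norm_num at hcd

/-! Geometry in dimension four -/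

lemma geo_ip (a a' x y : EuclideanSpace ℝ (Fin 4)) (h1 : ‖x - a‖ = 1) (h2 : ‖x - a'‖ = 1)
    (h3 : ‖y - a‖ = 1) (h4 : ‖y - a'‖ = 1) : inner ℝ (a' - a) (x - y) = 0 := by
  have e1 := norm_sub_sq_real x a
  have e2 := norm_sub_sq_real x a'
  have e3 := norm_sub_sq_real y a
  have e4 := norm_sub_sq_real y a'
  rw [h1] at e1; rw [h2] at e2; rw [h3] at e3; rw [h4] at e4
  rw [inner_sub_left, inner_sub_right, inner_sub_right, real_inner_comm x a', real_inner_comm y a',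
    real_inner_comm x a, real_inner_comm y a]
  linarith

lemma geo_indep (a b c p : EuclideanSpace ℝ (Fin 4)) (hab : a ≠ b) (hac : a ≠ c) (hbc : b ≠ c)
    (h1 : ‖p - a‖ = 1) (h2 : ‖p - b‖ = 1) (h3 : ‖p - c‖ = 1) :
    LinearIndependent ℝ ![b - a, c - a] := by
  have hx : b - a ≠ 0 := sub_ne_zero.2 hab.symm
  rw [LinearIndependent.pair_iff' hx]
  intro t ht
  have e2 := norm_sub_sq_real (p - a) (b - a)
  have e3 := norm_sub_sq_real (p - a) (c - a)
  rw [sub_sub_sub_cancel_right, h1, h2] at e2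
  rw [sub_sub_sub_cancel_right, h1, h3, ← ht, inner_smul_right, norm_smul, mul_pow, Real.norm_eq_abs, sq_abs] at e3
  have hn : 0 < ‖b - a‖ ^ 2 := by positivity
  have : t * (t - 1) * ‖b - a‖ ^ 2 = 0 := by
    have h5 : 2 * inner ℝ (p - a) (b - a) = ‖b - a‖ ^ 2 := by linarith
    linear_combination (-1 : ℝ) * e3 + t * h5
  rcases mul_eq_zero.1 this with h | h
  · rcases mul_eq_zero.1 h with h | h
    · rw [h, zero_smul] at ht
      exact hac (sub_eq_zero.1 ht.symm).symm
    · have h' : t = 1 := by linarith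
      rw [h', one_smul] at ht
      exact hbc (sub_left_injective ht)
  · linarith

lemma geo_planes (a b : Fin 3 → EuclideanSpace ℝ (Fin 4)) (ha : Function.Injective a)
    (hb : Function.Injective b) (h : ∀ i j, ‖a i - b j‖ = 1) :
    ∃ U : Submodule ℝ (EuclideanSpace ℝ (Fin 4)), Module.finrank ℝ U = 2 ∧ Module.finrank ℝ Uᗮ = 2 ∧
      (∀ x, (∀ i, ‖x - a i‖ = 1) → x - b 0 ∈ Uᗮ) ∧ (∀ y, (∀ j, ‖y - b j‖ = 1) → y - a 0 ∈ U) := by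
  have h' : ∀ i j, ‖b j - a i‖ = 1 := fun i j => by rw [norm_sub_rev]; exact h i j
  have ia := geo_indep (a 0) (a 1) (a 2) (b 0) (ha.ne (by decide)) (ha.ne (by decide))
    (ha.ne (by decide)) (h' _ _) (h' _ _) (h' _ _)
  have ib := geo_indep (b 0) (b 1) (b 2) (a 0) (hb.ne (by decide)) (hb.ne (by decide))
    (hb.ne (by decide)) (h _ _) (h _ _) (h _ _)
  set U := Submodule.span ℝ (Set.range ![a 1 - a 0, a 2 - a 0]) with hU
  set V := Submodule.span ℝ (Set.range ![b 1 - b 0, b 2 - b 0]) with hV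
  have fU : Module.finrank ℝ U = 2 := by rw [hU, finrank_span_eq_card ia]; simp
  have fV : Module.finrank ℝ V = 2 := by rw [hV, finrank_span_eq_card ib]; simp
  have f4 : Module.finrank ℝ (EuclideanSpace ℝ (Fin 4)) = 4 := by simp
  have fU' : Module.finrank ℝ Uᗮ = 2 := by
    have := U.finrank_add_finrank_orthogonal
    omega
  have fV' : Module.finrank ℝ Vᗮ = 2 := by
    have := V.finrank_add_finrank_orthogonal
    omega
  have key : ∀ x, (∀ i, ‖x - a i‖ = 1) → x - b 0 ∈ Uᗮ := by
    intro x hx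
    rw [hU, Submodule.mem_orthogonal]
    intro u hu
    induction hu using Submodule.span_induction with
    | mem u hu =>
      obtain ⟨i, rfl⟩ := hu
      fin_cases i
      · exact geo_ip _ _ _ _ (hx 0) (hx 1) (h' _ _) (h' _ _)
      · exact geo_ip _ _ _ _ (hx 0) (hx 2) (h' _ _) (h' _ _)
    | zero => simp
    | add u v _ _ h1 h2 => rw [inner_add_left, h1, h2, add_zero]
    | smul c u _ h1 => rw [inner_smul_left, h1, mul_zero]
  have key2 : ∀ y, (∀ j, ‖y - b j‖ = 1) → y - a 0 ∈ Vᗮ := by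
    intro x hx
    rw [hV, Submodule.mem_orthogonal]
    intro u hu
    induction hu using Submodule.span_induction with
    | mem u hu =>
      obtain ⟨i, rfl⟩ := hu
      fin_cases i
      · exact geo_ip _ _ _ _ (hx 0) (hx 1) (h _ _) (h _ _)
      · exact geo_ip _ _ _ _ (hx 0) (hx 2) (h _ _) (h _ _)
    | zero => simp
    | add u v _ _ h1 h2 => rw [inner_add_left, h1, h2, add_zero]
    | smul c u _ h1 => rw [inner_smul_left, h1, mul_zero]
  have hUV : U = Vᗮ := by
    apply Submodule.eq_of_le_of_finrank_eq
    · rw [hU, Submodule.span_le]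
      rintro _ ⟨i, rfl⟩
      fin_cases i
      · exact key2 _ (fun j => h 1 j)
      · exact key2 _ (fun j => h 2 j)
    · omega
  refine ⟨U, fU, fU', key, ?_⟩
  rw [hUV]; exact key2

lemma geo_adj (a b : Fin 3 → EuclideanSpace ℝ (Fin 4)) (ha : Function.Injective a)
    (hb : Function.Injective b) (h : ∀ i j, ‖a i - b j‖ = 1) (x y : EuclideanSpace ℝ (Fin 4))
    (hx : ∀ i, ‖x - a i‖ = 1) (hy : ∀ i, ‖y - b i‖ = 1) : ‖x - y‖ = 1 := by
  obtain ⟨U, -, -, h1, h2⟩ := geo_planes a b ha hb h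
  have e : inner ℝ (y - a 0) (x - b 0) = 0 :=
    Submodule.inner_right_of_mem_orthogonal (h2 y hy) (h1 x hx)
  have e1 := norm_add_sq_real (b 0 - a 0) (x - b 0)
  have e2 := norm_sub_sq_real (b 0 - a 0) (y - a 0)
  have e3 := norm_sub_sq_real ((b 0 - a 0) + (x - b 0)) (y - a 0)
  rw [inner_add_left, real_inner_comm _ (x - b 0), e] at e3
  have g1 : (b 0 - a 0) + (x - b 0) = x - a 0 := by abel
  have g2 : (b 0 - a 0) - (y - a 0) = b 0 - y := by abel
  have g3 : x - a 0 - (y - a 0) = x - y := by abel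
  rw [g1] at e1
  rw [g2, norm_sub_rev (b 0) y, hy, norm_sub_rev, h] at e2
  rw [g1, g3] at e3
  rw [hx, norm_sub_rev (b 0), h] at e1
  rw [hx] at e3
  have : ‖x - y‖ ^ 2 = 1 := by linarith
  nlinarith [norm_nonneg (x - y)]

lemma geo_circles (A B : Finset (EuclideanSpace ℝ (Fin 4))) (hA : 3 ≤ A.card) (hB : 3 ≤ B.card)
    (h : ∀ x ∈ A, ∀ y ∈ B, ‖x - y‖ = 1) :
    ∃ (r₁ r₂ : ℝ) (f g : EuclideanSpace ℝ (Fin 4) → ℂ), 0 ≤ r₁ ∧ 0 ≤ r₂ ∧ r₁ ^ 2 + r₂ ^ 2 = 1 ∧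
      (∀ x ∈ A, ‖f x‖ = r₁) ∧ (∀ x ∈ B, ‖g x‖ = r₂) ∧
      (∀ x ∈ A, ∀ y ∈ A, ‖f x - f y‖ = ‖x - y‖) ∧ (∀ x ∈ B, ∀ y ∈ B, ‖g x - g y‖ = ‖x - y‖) := by
  obtain ⟨A0, hA0, cA⟩ := Finset.exists_subset_card_eq hA
  obtain ⟨B0, hB0, cB⟩ := Finset.exists_subset_card_eq hB
  set a : Fin 3 → EuclideanSpace ℝ (Fin 4) := fun i => (A0.equivFinOfCardEq cA).symm i with ha
  set b : Fin 3 → EuclideanSpace ℝ (Fin 4) := fun i => (B0.equivFinOfCardEq cB).symm i with hb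
  have haA : ∀ i, a i ∈ A := fun i => hA0 ((A0.equivFinOfCardEq cA).symm i).2
  have hbB : ∀ i, b i ∈ B := fun i => hB0 ((B0.equivFinOfCardEq cB).symm i).2
  have ia : Function.Injective a := Subtype.val_injective.comp (A0.equivFinOfCardEq cA).symm.injective
  have ib : Function.Injective b := Subtype.val_injective.comp (B0.equivFinOfCardEq cB).symm.injective
  obtain ⟨U, fU, fU', h1, h2⟩ := geo_planes a b ia ib (fun i j => h _ (haA i) _ (hbB j))
  set p : EuclideanSpace ℝ (Fin 4) := U.starProjection (b 0 - a 0) with hp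
  have hpU : p ∈ U := U.starProjection_apply_mem _
  have hqU : (b 0 - a 0) - p ∈ Uᗮ := U.sub_starProjection_mem_orthogonal _
  set c := a 0 + p with hc
  have hAU : ∀ x ∈ A, x - c ∈ U := by
    intro x hx
    have := h2 x (fun j => h x hx _ (hbB j))
    have e : x - c = (x - a 0) - p := by rw [hc]; abel
    rw [e]; exact U.sub_mem this hpU
  have hBU : ∀ x ∈ B, x - c ∈ Uᗮ := by
    intro x hx
    have := h1 x (fun j => by rw [norm_sub_rev]; exact h _ (haA j) x hx)
    have e : x - c = (x - b 0) + ((b 0 - a 0) - p) := by rw [hc]; abel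
    rw [e]; exact Uᗮ.add_mem this hqU
  have hsum : ∀ x ∈ A, ∀ y ∈ B, ‖x - c‖ ^ 2 + ‖y - c‖ ^ 2 = 1 := by
    intro x hx y hy
    have e := norm_sub_sq_real (x - c) (y - c)
    rw [sub_sub_sub_cancel_right, h x hx y hy,
      Submodule.inner_right_of_mem_orthogonal (hAU x hx) (hBU y hy)] at e
    linarith
  let φ : U ≃ₗᵢ[ℝ] ℂ := (stdOrthonormalBasis ℝ U).equiv Complex.orthonormalBasisOneI (finCongr fU)
  let ψ : Uᗮ ≃ₗᵢ[ℝ] ℂ := (stdOrthonormalBasis ℝ Uᗮ).equiv Complex.orthonormalBasisOneI (finCongr fU')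
  refine ⟨‖a 0 - c‖, ‖b 0 - c‖, fun x => if hx : x - c ∈ U then φ ⟨x - c, hx⟩ else 0,
    fun x => if hx : x - c ∈ Uᗮ then ψ ⟨x - c, hx⟩ else 0, norm_nonneg _, norm_nonneg _,
    hsum _ (haA 0) _ (hbB 0), ?_, ?_, ?_, ?_⟩
  · intro x hx
    simp only [dif_pos (hAU x hx), LinearIsometryEquiv.norm_map, Submodule.coe_norm]
    have e1 := hsum x hx _ (hbB 0)
    have e2 := hsum _ (haA 0) _ (hbB 0)
    rw [← sq_eq_sq₀ (norm_nonneg _) (norm_nonneg _)]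
    linarith
  · intro x hx
    simp only [dif_pos (hBU x hx), LinearIsometryEquiv.norm_map, Submodule.coe_norm]
    have e1 := hsum _ (haA 0) x hx
    have e2 := hsum _ (haA 0) _ (hbB 0)
    rw [← sq_eq_sq₀ (norm_nonneg _) (norm_nonneg _)]
    linarith
  · intro x hx y hy
    simp only [dif_pos (hAU x hx), dif_pos (hAU y hy)]
    rw [← map_sub, LinearIsometryEquiv.norm_map, Submodule.coe_norm]
    congr 1
    simp
  · intro x hx y hy
    simp only [dif_pos (hBU x hx), dif_pos (hBU y hy)]
    rw [← map_sub, LinearIsometryEquiv.norm_map, Submodule.coe_norm]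
    congr 1
    simp

/-! Counting -/

/-- number of neighbours of `x` in `T` -/
noncomputable def dg (T : Finset (EuclideanSpace ℝ (Fin 4))) (x : EuclideanSpace ℝ (Fin 4)) : ℕ :=
  (T.filter (fun y => ‖x - y‖ = 1)).card

/-- number of ordered unit pairs in `S × T` -/
noncomputable def ed (S T : Finset (EuclideanSpace ℝ (Fin 4))) : ℕ := ∑ x ∈ S, dg T x

lemma ed_self (X : Finset (EuclideanSpace ℝ (Fin 4))) : ed X X = 2 * (unitPairs X).card := by
  have h1 : ∀ x ∈ X, dg X x = ((unitPairs X).filter (fun s => x ∈ s)).card := by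
    intro x hx
    unfold dg
    apply Finset.card_bij (fun y _ => {x, y})
    · intro y hy
      obtain ⟨hy, hxy⟩ := Finset.mem_filter.1 hy
      have hne : x ≠ y := by
        rintro rfl; simp at hxy
      simp only [unitPairs, Finset.mem_filter, Finset.mem_powersetCard]
      refine ⟨⟨⟨?_, Finset.card_pair hne⟩, ?_⟩, by simp⟩
      · intro z hz
        simp only [Finset.mem_insert, Finset.mem_singleton] at hz
        rcases hz with rfl | rfl <;> assumption
      · intro u hu v hv huv
        simp only [Finset.mem_insert, Finset.mem_singleton] at hu hv
        rcases hu with rfl | rfl <;> rcases hv with rfl | rfl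
        · exact absurd rfl huv
        · exact hxy
        · rw [norm_sub_rev]; exact hxy
        · exact absurd rfl huv
    · intro y hy z hz h
      have hy' : x ≠ y := by
        rintro rfl; simp at hy
      have hz' : x ≠ z := by
        rintro rfl; simp at hz
      have : y ∈ ({x, z} : Finset (EuclideanSpace ℝ (Fin 4))) := by rw [← h]; simp
      simp only [Finset.mem_insert, Finset.mem_singleton] at this
      rcases this with h | h
      · exact absurd h.symm hy'
      · exact h
    · intro s hs
      simp only [unitPairs, Finset.mem_filter, Finset.mem_powersetCard] at hs
      obtain ⟨⟨⟨hsX, hc⟩, hu⟩, hxs⟩ := hs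
      obtain ⟨u, v, huv, rfl⟩ := Finset.card_eq_two.1 hc
      simp only [Finset.mem_insert, Finset.mem_singleton] at hxs
      rcases hxs with rfl | rfl
      · exact ⟨v, Finset.mem_filter.2 ⟨hsX (by simp), hu x (by simp) v (by simp) huv⟩, rfl⟩
      · exact ⟨u, Finset.mem_filter.2 ⟨hsX (by simp), hu x (by simp) u (by simp) huv.symm⟩,
          Finset.pair_comm _ _⟩
  unfold ed
  rw [Finset.sum_congr rfl h1]
  have h2 := Finset.sum_card_bipartiteAbove_eq_sum_card_bipartiteBelow
    (s := X) (t := unitPairs X) (fun x s => x ∈ s)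
  unfold Finset.bipartiteAbove Finset.bipartiteBelow at h2
  rw [h2]
  have h3 : ∀ s ∈ unitPairs X, (X.filter (fun x => x ∈ s)).card = 2 := by
    intro s hs
    simp only [unitPairs, Finset.mem_filter, Finset.mem_powersetCard] at hs
    rw [← hs.1.2]
    congr 1
    ext x
    simp only [Finset.mem_filter]
    exact ⟨fun h => h.2, fun h => ⟨hs.1.1 h, h⟩⟩
  rw [Finset.sum_congr rfl h3, Finset.sum_const, smul_eq_mul, mul_comm]

lemma ed_union_left (S S' T : Finset (EuclideanSpace ℝ (Fin 4))) (h : Disjoint S S') :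
    ed (S ∪ S') T = ed S T + ed S' T := Finset.sum_union h

lemma ed_comm (S T : Finset (EuclideanSpace ℝ (Fin 4))) : ed S T = ed T S := by
  have h2 := Finset.sum_card_bipartiteAbove_eq_sum_card_bipartiteBelow
    (s := S) (t := T) (fun x y => ‖x - y‖ = 1)
  unfold Finset.bipartiteAbove Finset.bipartiteBelow at h2
  unfold ed dg
  rw [h2]
  simp_rw [norm_sub_rev]

lemma ed_union_right (S S' T : Finset (EuclideanSpace ℝ (Fin 4))) (h : Disjoint S S') :
    ed T (S ∪ S') = ed T S + ed T S' := by
  rw [ed_comm, ed_union_left _ _ _ h, ed_comm S, ed_comm S']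

lemma ed_le (S T : Finset (EuclideanSpace ℝ (Fin 4))) (k : ℕ) (h : ∀ x ∈ S, dg T x ≤ k) :
    ed S T ≤ k * S.card := by
  have := Finset.sum_le_card_nsmul S (dg T) k h
  unfold ed
  rw [smul_eq_mul] at this
  linarith

lemma half_one (A : Finset (EuclideanSpace ℝ (Fin 4))) (r : ℝ) (f : EuclideanSpace ℝ (Fin 4) → ℂ)
    (hr : 0 ≤ r) (hr2 : 1 / 2 ≤ r ^ 2) (hf : ∀ x ∈ A, ‖f x‖ = r)
    (hff : ∀ x ∈ A, ∀ y ∈ A, ‖f x - f y‖ = ‖x - y‖) (hd : ∀ x ∈ A, ∀ y ∈ A, ‖x - y‖ ≤ 1) :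
    (unitPairs A).card ≤ 1 := by
  have hinj : ∀ x ∈ A, ∀ y ∈ A, f x = f y → x = y := by
    intro x hx y hy h
    have := hff x hx y hy
    rw [h, sub_self, norm_zero] at this
    exact sub_eq_zero.1 (norm_eq_zero.1 this.symm)
  rw [Finset.card_le_one]
  intro s hs t ht
  simp only [unitPairs, Finset.mem_filter, Finset.mem_powersetCard] at hs ht
  obtain ⟨⟨hs1, hs2⟩, hs3⟩ := hs
  obtain ⟨⟨ht1, ht2⟩, ht3⟩ := ht
  obtain ⟨z, w, hzw, rfl⟩ := Finset.card_eq_two.1 hs2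
  obtain ⟨u, v, huv, rfl⟩ := Finset.card_eq_two.1 ht2
  have mz : z ∈ A := hs1 (by simp)
  have mw : w ∈ A := hs1 (by simp)
  have mu : u ∈ A := ht1 (by simp)
  have mv : v ∈ A := ht1 (by simp)
  have := circ_one r hr hr2 (f z) (f w) (f u) (f v) (hf z mz) (hf w mw) (hf u mu) (hf v mv)
    (by rw [hff z mz w mw]; exact hs3 z (by simp) w (by simp) hzw)
    (by rw [hff u mu v mv]; exact ht3 u (by simp) v (by simp) huv)
    (by rw [hff _ mz _ mu]; exact hd _ mz _ mu) (by rw [hff _ mz _ mv]; exact hd _ mz _ mv)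
    (by rw [hff _ mw _ mu]; exact hd _ mw _ mu) (by rw [hff _ mw _ mv]; exact hd _ mw _ mv)
  rcases this with ⟨h1, h2⟩ | ⟨h1, h2⟩
  · rw [hinj u mu z mz h1, hinj v mv w mw h2]
  · rw [hinj u mu w mw h1, hinj v mv z mz h2, Finset.pair_comm]

lemma half_two (A : Finset (EuclideanSpace ℝ (Fin 4))) (r : ℝ) (f : EuclideanSpace ℝ (Fin 4) → ℂ)
    (hne : A.Nonempty) (hf : ∀ x ∈ A, ‖f x‖ = r)
    (hff : ∀ x ∈ A, ∀ y ∈ A, ‖f x - f y‖ = ‖x - y‖) (hd : ∀ x ∈ A, ∀ y ∈ A, ‖x - y‖ ≤ 1)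
    (hdg : ∀ x ∈ A, dg A x ≤ 2) :
    (unitPairs A).card ≤ A.card ∧ (Even A.card → (unitPairs A).card + 1 ≤ A.card) := by
  have hinj : ∀ x ∈ A, ∀ y ∈ A, f x = f y → x = y := by
    intro x hx y hy h
    have := hff x hx y hy
    rw [h, sub_self, norm_zero] at this
    exact sub_eq_zero.1 (norm_eq_zero.1 this.symm)
  have h1 := ed_le A A 2 hdg
  rw [ed_self] at h1
  refine ⟨by omega, fun hev => ?_⟩
  by_contra hcon
  have heq : ed A A = 2 * A.card := by rw [ed_self]; omega
  have hall : ∀ x ∈ A, dg A x = 2 := by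
    apply (Finset.sum_eq_sum_iff_of_le hdg).1
    rw [Finset.sum_const, smul_eq_mul, mul_comm]
    exact heq
  have hodd := circ_odd (A.image f) r (hne.image f) (by
      intro z hz
      obtain ⟨x, hx, rfl⟩ := Finset.mem_image.1 hz
      exact hf x hx) (by
      intro z hz w hw
      obtain ⟨x, hx, rfl⟩ := Finset.mem_image.1 hz
      obtain ⟨y, hy, rfl⟩ := Finset.mem_image.1 hw
      rw [hff x hx y hy]; exact hd x hx y hy) (by
      intro z hz
      obtain ⟨x, hx, rfl⟩ := Finset.mem_image.1 hz
      obtain ⟨u, v, huv, he⟩ := Finset.card_eq_two.1 (hall x hx)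
      have hu : u ∈ A.filter (fun y => ‖x - y‖ = 1) := by rw [he]; simp
      have hv : v ∈ A.filter (fun y => ‖x - y‖ = 1) := by rw [he]; simp
      rw [Finset.mem_filter] at hu hv
      refine ⟨f u, Finset.mem_image_of_mem _ hu.1, f v, Finset.mem_image_of_mem _ hv.1,
        fun h => huv (hinj u hu.1 v hv.1 h), ?_, ?_⟩
      · rw [hff x hx u hu.1]; exact hu.2
      · rw [hff x hx v hv.1]; exact hv.2)
  rw [Finset.card_image_of_injOn (fun x hx y hy h => hinj x hx y hy h)] at hodd
  exact (Nat.not_even_iff_odd.2 hodd) hev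

lemma two_circles (A B : Finset (EuclideanSpace ℝ (Fin 4))) (hA : 3 ≤ A.card) (hB : 3 ≤ B.card)
    (h : ∀ x ∈ A, ∀ y ∈ B, ‖x - y‖ = 1) (hdA : ∀ x ∈ A, ∀ y ∈ A, ‖x - y‖ ≤ 1)
    (hdB : ∀ x ∈ B, ∀ y ∈ B, ‖x - y‖ ≤ 1)
    (hgA : ∀ x ∈ A, dg A x ≤ 2) (hgB : ∀ x ∈ B, dg B x ≤ 2) :
    ((unitPairs B).card ≤ 1 ∧ (unitPairs A).card ≤ A.card ∧
      (Even A.card → (unitPairs A).card + 1 ≤ A.card)) ∨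
    ((unitPairs A).card ≤ 1 ∧ (unitPairs B).card ≤ B.card ∧
      (Even B.card → (unitPairs B).card + 1 ≤ B.card)) := by
  obtain ⟨r₁, r₂, f, g, h1, h2, h12, hf, hg, hff, hgg⟩ := geo_circles A B hA hB h
  rcases le_total (1 / 2) (r₂ ^ 2) with hr | hr
  · left
    exact ⟨half_one B r₂ g h2 hr hg hgg hdB,
      half_two A r₁ f (Finset.card_pos.1 (by omega)) hf hff hdA hgA⟩
  · right
    exact ⟨half_one A r₁ f h1 (by linarith) hf hff hdA,
      half_two B r₂ g (Finset.card_pos.1 (by omega)) hg hgg hdB hgB⟩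

lemma adj_of_triples (A0 B0 : Finset (EuclideanSpace ℝ (Fin 4))) (cA : A0.card = 3) (cB : B0.card = 3)
    (h : ∀ x ∈ A0, ∀ y ∈ B0, ‖x - y‖ = 1) (x y : EuclideanSpace ℝ (Fin 4))
    (hx : ∀ z ∈ A0, ‖x - z‖ = 1) (hy : ∀ z ∈ B0, ‖y - z‖ = 1) : ‖x - y‖ = 1 := by
  apply geo_adj (fun i => (A0.equivFinOfCardEq cA).symm i) (fun i => (B0.equivFinOfCardEq cB).symm i)
  · exact Subtype.val_injective.comp (A0.equivFinOfCardEq cA).symm.injective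
  · exact Subtype.val_injective.comp (B0.equivFinOfCardEq cB).symm.injective
  · intro i j
    exact h _ ((A0.equivFinOfCardEq cA).symm i).2 _ ((B0.equivFinOfCardEq cB).symm j).2
  · intro i; exact hx _ ((A0.equivFinOfCardEq cA).symm i).2
  · intro i; exact hy _ ((B0.equivFinOfCardEq cB).symm i).2

lemma split (X A0 : Finset (EuclideanSpace ℝ (Fin 4))) (hd : ∀ x ∈ X, ∀ y ∈ X, ‖x - y‖ ≤ 1)
    (hA0 : A0 ⊆ X) (cA0 : A0.card = 3) (t : ℕ) (ht : 3 ≤ t)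
    (hB : t ≤ (X.filter (fun y => ∀ a ∈ A0, ‖y - a‖ = 1)).card) :
    ∃ (W : Finset (EuclideanSpace ℝ (Fin 4))) (a b eA eB : ℕ), W ⊆ X ∧ a + b + W.card = X.card ∧
      t + 3 ≤ a + b ∧
      (unitPairs X).card ≤ a * b + eA + eB + 4 * W.card + (unitPairs W).card ∧
      ((eB ≤ 1 ∧ eA ≤ a ∧ (Even a → eA + 1 ≤ a)) ∨ (eA ≤ 1 ∧ eB ≤ b ∧ (Even b → eB + 1 ≤ b))) := by
  set B := X.filter (fun y => ∀ a ∈ A0, ‖y - a‖ = 1) with hBd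
  obtain ⟨B0, hB0, cB0⟩ := Finset.exists_subset_card_eq (ht.trans hB)
  set A := X.filter (fun y => ∀ b ∈ B0, ‖y - b‖ = 1) with hAd
  have hAB0 : ∀ x ∈ A0, ∀ y ∈ B0, ‖x - y‖ = 1 := by
    intro x hx y hy
    rw [norm_sub_rev]
    exact (Finset.mem_filter.1 (hB0 hy)).2 x hx
  have hA0A : A0 ⊆ A := fun x hx => Finset.mem_filter.2 ⟨hA0 hx, hAB0 x hx⟩
  have hAX : A ⊆ X := Finset.filter_subset _ _
  have hBX : B ⊆ X := Finset.filter_subset _ _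
  have hAB : ∀ x ∈ A, ∀ y ∈ B, ‖x - y‖ = 1 := by
    intro x hx y hy
    rw [norm_sub_rev]
    exact adj_of_triples A0 B0 cA0 cB0 hAB0 y x (Finset.mem_filter.1 hy).2 (Finset.mem_filter.1 hx).2
  have hdisj : Disjoint A B := by
    rw [Finset.disjoint_left]
    intro x h1 h2
    have := hAB x h1 x h2
    simp at this
  have hnB : ∀ x ∈ X, x ∉ B → dg A x ≤ 2 := by
    intro x hx hxB
    by_contra hcon
    push Not at hcon
    obtain ⟨T, hT, cT⟩ := Finset.exists_subset_card_eq (Nat.succ_le_of_lt hcon)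
    apply hxB
    refine Finset.mem_filter.2 ⟨hx, fun a ha => ?_⟩
    apply adj_of_triples T B0 cT cB0
    · intro u hu v hv
      exact hAB u (Finset.mem_filter.1 (hT hu)).1 v (hB0 hv)
    · intro z hz
      exact (Finset.mem_filter.1 (hT hz)).2
    · exact hAB0 a ha
  have hnA : ∀ x ∈ X, x ∉ A → dg B x ≤ 2 := by
    intro x hx hxA
    by_contra hcon
    push Not at hcon
    obtain ⟨T, hT, cT⟩ := Finset.exists_subset_card_eq (Nat.succ_le_of_lt hcon)
    apply hxA
    refine Finset.mem_filter.2 ⟨hx, fun b hb => ?_⟩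
    apply adj_of_triples T A0 cT cA0
    · intro u hu v hv
      rw [norm_sub_rev]
      exact hAB v (hA0A hv) u (Finset.mem_filter.1 (hT hu)).1
    · intro z hz
      exact (Finset.mem_filter.1 (hT hz)).2
    · exact (Finset.mem_filter.1 (hB0 hb)).2
  have hcA : 3 ≤ A.card := by rw [← cA0]; exact Finset.card_le_card hA0A
  set W := X \ (A ∪ B) with hW
  have hWX : W ⊆ X := Finset.sdiff_subset
  have hX : X = (A ∪ B) ∪ W := by
    rw [hW, Finset.union_sdiff_of_subset (Finset.union_subset hAX hBX)]
  have hdW : Disjoint (A ∪ B) W := Finset.disjoint_sdiff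
  have hcard : A.card + B.card + W.card = X.card := by
    conv_rhs => rw [hX]
    rw [Finset.card_union_of_disjoint hdW, Finset.card_union_of_disjoint hdisj]
  have hWA : ed W A ≤ 2 * W.card := ed_le _ _ _ (fun x hx => hnB x (hWX hx) (fun h =>
    (Finset.mem_sdiff.1 hx).2 (Finset.mem_union_right _ h)))
  have hWB : ed W B ≤ 2 * W.card := ed_le _ _ _ (fun x hx => hnA x (hWX hx) (fun h =>
    (Finset.mem_sdiff.1 hx).2 (Finset.mem_union_left _ h)))
  have hABe : ed A B ≤ B.card * A.card := ed_le _ _ _ (fun x _ => Finset.card_filter_le _ _)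
  have hmain : (unitPairs X).card ≤ A.card * B.card + (unitPairs A).card + (unitPairs B).card +
      4 * W.card + (unitPairs W).card := by
    have e : ed X X = ed A A + ed B B + 2 * ed A B + 2 * ed W A + 2 * ed W B + ed W W := by
      conv_lhs => rw [hX]
      rw [ed_union_left _ _ _ hdW, ed_union_right _ _ _ hdW, ed_union_right _ _ _ hdW,
        ed_union_left _ _ _ hdisj, ed_union_left _ _ _ hdisj, ed_union_right _ _ _ hdisj,
        ed_union_right _ _ _ hdisj, ed_union_right _ _ _ hdisj, ed_comm B A, ed_comm A W, ed_comm B W]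
      ring
    rw [ed_self, ed_self, ed_self, ed_self] at e
    have : B.card * A.card = A.card * B.card := mul_comm _ _
    omega
  refine ⟨W, A.card, B.card, _, _, hWX, hcard, by omega, hmain, ?_⟩
  exact two_circles A B hcA (ht.trans hB) hAB (fun x hx y hy => hd x (hAX hx) y (hAX hy))
    (fun x hx y hy => hd x (hBX hx) y (hBX hy))
    (fun x hx => hnB x (hAX hx) (fun h => Finset.disjoint_left.1 hdisj hx h))
    (fun x hx => hnA x (hBX hx) (fun h => Finset.disjoint_left.1 hdisj h hx))

lemma kst (X : Finset (EuclideanSpace ℝ (Fin 4))) (t : ℕ)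
    (h : t * X.card.choose 3 < ∑ x ∈ X, (dg X x).choose 3) :
    ∃ A0 ⊆ X, A0.card = 3 ∧ t + 1 ≤ (X.filter (fun y => ∀ a ∈ A0, ‖y - a‖ = 1)).card := by
  by_contra hcon
  push Not at hcon
  have h1 : ∀ x ∈ X, (dg X x).choose 3 =
      ((X.powersetCard 3).filter (fun T => ∀ a ∈ T, ‖x - a‖ = 1)).card := by
    intro x _
    unfold dg
    rw [← Finset.card_powersetCard]
    congr 1
    ext T
    simp only [Finset.mem_powersetCard, Finset.mem_filter]
    constructor
    · rintro ⟨h1, h2⟩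
      exact ⟨⟨fun y hy => (Finset.mem_filter.1 (h1 hy)).1, h2⟩, fun y hy => (Finset.mem_filter.1 (h1 hy)).2⟩
    · rintro ⟨⟨h1, h2⟩, h3⟩
      exact ⟨fun y hy => Finset.mem_filter.2 ⟨h1 hy, h3 y hy⟩, h2⟩
  rw [Finset.sum_congr rfl h1] at h
  have h2 := Finset.sum_card_bipartiteAbove_eq_sum_card_bipartiteBelow
    (s := X) (t := X.powersetCard 3) (fun x T => ∀ a ∈ T, ‖x - a‖ = 1)
  unfold Finset.bipartiteAbove Finset.bipartiteBelow at h2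
  rw [h2] at h
  have h3 := Finset.sum_le_card_nsmul (X.powersetCard 3)
    (fun T => (X.filter (fun y => ∀ a ∈ T, ‖y - a‖ = 1)).card) t (by
      intro T hT
      rw [Finset.mem_powersetCard] at hT
      exact Nat.lt_succ_iff.1 (hcon T hT.1 hT.2))
  rw [Finset.card_powersetCard, smul_eq_mul] at h3
  linarith

lemma choose3 (d : ℕ) : (6 * (d.choose 3 : ℝ)) = d * (d - 1) * (d - 2) := by
  have h : 6 * d.choose 3 = d.descFactorial 3 := by
    rw [Nat.descFactorial_eq_factorial_mul_choose]; rfl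
  rcases d with _ | _ | d
  · simp
  · simp [Nat.choose]
  · have h' : (d + 2).descFactorial 3 = d * ((d + 1) * (d + 2)) := by
      simp [Nat.descFactorial]
    rw [h'] at h
    have h2 : (6 * ((d + 2).choose 3 : ℝ)) = d * ((d + 1) * (d + 2)) := by exact_mod_cast h
    push_cast
    rw [h2]; ring

lemma jensen (X : Finset (EuclideanSpace ℝ (Fin 4))) (p : ℝ) (hp : 3 / 2 ≤ p) :
    X.card * (p * (p - 1) * (p - 2)) + (3 * p ^ 2 - 6 * p + 2) * (2 * (unitPairs X).card - X.card * p) ≤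
      6 * ((∑ x ∈ X, (dg X x).choose 3 : ℕ) : ℝ) := by
  obtain ⟨K, hK⟩ : ∃ K, K = p * (p - 1) * (p - 2) := ⟨_, rfl⟩
  obtain ⟨K', hK'⟩ : ∃ K', K' = 3 * p ^ 2 - 6 * p + 2 := ⟨_, rfl⟩
  rw [← hK, ← hK']
  have h1 : ∀ x ∈ X, K + K' * ((dg X x : ℝ) - p) ≤
      6 * ((dg X x).choose 3 : ℝ) := by
    intro x _
    rw [choose3, hK, hK']
    have h0 : (0 : ℝ) ≤ dg X x := Nat.cast_nonneg _
    have := mul_nonneg (sq_nonneg ((dg X x : ℝ) - p)) (by linarith : (0 : ℝ) ≤ dg X x + 2 * p - 3)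
    nlinarith
  have h2 := Finset.sum_le_sum h1
  have h3 : ((ed X X : ℕ) : ℝ) = 2 * (unitPairs X).card := by rw [ed_self]; push_cast; ring
  have h4 : ((ed X X : ℕ) : ℝ) = ∑ x ∈ X, (dg X x : ℝ) := by unfold ed; push_cast; rfl
  rw [Finset.sum_add_distrib, ← Finset.mul_sum, Finset.sum_sub_distrib, ← Finset.mul_sum, ← h4, h3,
    Finset.sum_const, Finset.sum_const, nsmul_eq_mul, nsmul_eq_mul] at h2
  push_cast
  exact h2

lemma arith_sq (a b eA eB : ℕ)
    (h : (eB ≤ 1 ∧ eA ≤ a ∧ (Even a → eA + 1 ≤ a)) ∨ (eA ≤ 1 ∧ eB ≤ b ∧ (Even b → eB + 1 ≤ b))) :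
    4 * (a * b + eA + eB) ≤ (a + b + 1) ^ 2 + 4 := by
  zify at *
  rcases h with ⟨h1, h2, -⟩ | ⟨h1, h2, -⟩
  · nlinarith [sq_nonneg ((a : ℤ) - (b + 1))]
  · nlinarith [sq_nonneg ((b : ℤ) - (a + 1))]

lemma F2_cases (n : ℕ) : ∃ k, (n = 4 * k ∧ F₂ n = 2 * k * (2 * k + 1) + 1) ∨
    (n = 4 * k + 1 ∧ F₂ n = (2 * k + 1) ^ 2 + 1) ∨
    (n = 4 * k + 2 ∧ F₂ n = (2 * k + 1) * (2 * k + 2) + 1) ∨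
    (n = 4 * k + 3 ∧ F₂ n = (2 * k + 2) ^ 2) := by
  refine ⟨n / 4, ?_⟩
  have h : n % 4 = 0 ∨ n % 4 = 1 ∨ n % 4 = 2 ∨ n % 4 = 3 := by omega
  unfold F₂
  rcases h with h | h | h | h
  · have e1 : n / 2 = 2 * (n / 4) := by omega
    have e2 : (n + 1) / 2 = 2 * (n / 4) := by omega
    left; refine ⟨by omega, ?_⟩
    rw [if_neg (by omega), e1, e2]; ring
  · have e1 : n / 2 = 2 * (n / 4) := by omega
    have e2 : (n + 1) / 2 = 2 * (n / 4) + 1 := by omega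
    right; left; refine ⟨by omega, ?_⟩
    rw [if_neg (by omega), e1, e2]; ring
  · have e1 : n / 2 = 2 * (n / 4) + 1 := by omega
    have e2 : (n + 1) / 2 = 2 * (n / 4) + 1 := by omega
    right; right; left; refine ⟨by omega, ?_⟩
    rw [if_neg (by omega), e1, e2]; ring
  · have e1 : n / 2 = 2 * (n / 4) + 1 := by omega
    have e2 : (n + 1) / 2 = 2 * (n / 4) + 2 := by omega
    right; right; right; refine ⟨by omega, ?_⟩
    rw [if_pos (by omega), e1, e2]; ring

lemma F2_lower (n : ℕ) : (n + 1) ^ 2 ≤ 4 * F₂ n := by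
  obtain ⟨k, ⟨h1, h2⟩ | ⟨h1, h2⟩ | ⟨h1, h2⟩ | ⟨h1, h2⟩⟩ := F2_cases n <;> rw [h2, h1] <;> nlinarith

lemma F2_upper_aux (a b e : ℕ) (h2 : e ≤ a) (h3 : Even a → e + 1 ≤ a) :
    a * b + e + 1 ≤ F₂ (a + b) := by
  have hc : ∀ d : ℤ, 0 ≤ d * (d - 1) := by
    intro d
    rcases le_or_gt d 0 with h | h
    · nlinarith
    · nlinarith [show 1 ≤ d from h]
  obtain ⟨k, ⟨h1, hF⟩ | ⟨h1, hF⟩ | ⟨h1, hF⟩ | ⟨h1, hF⟩⟩ := F2_cases (a + b) <;> rw [hF] <;> zify at *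
  · have hb : (b : ℤ) = 4 * k - a := by linarith
    have := hc (a - 2 * k)
    rw [hb]; nlinarith
  · have hb : (b : ℤ) = 4 * k + 1 - a := by linarith
    rw [hb]; nlinarith [sq_nonneg ((a : ℤ) - (2 * k + 1))]
  · have hb : (b : ℤ) = 4 * k + 2 - a := by linarith
    have := hc (a - (2 * k + 1))
    rw [hb]; nlinarith
  · have hb : (b : ℤ) = 4 * k + 3 - a := by linarith
    rcases Nat.even_or_odd a with ha | ha
    · have := h3 ha
      rw [hb]; nlinarith [sq_nonneg ((a : ℤ) - (2 * k + 2))]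
    · obtain ⟨j, hj⟩ := ha
      have := hc (j - k)
      have hj' : (a : ℤ) = 2 * j + 1 := by exact_mod_cast hj
      rw [hb]; rw [hj'] at *; nlinarith

lemma F2_upper (a b eA eB : ℕ)
    (h : (eB ≤ 1 ∧ eA ≤ a ∧ (Even a → eA + 1 ≤ a)) ∨ (eA ≤ 1 ∧ eB ≤ b ∧ (Even b → eB + 1 ≤ b))) :
    a * b + eA + eB ≤ F₂ (a + b) := by
  rcases h with ⟨h1, h2, h3⟩ | ⟨h1, h2, h3⟩
  · have := F2_upper_aux a b eA h2 h3; omega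
  · have := F2_upper_aux b a eB h2 h3
    rw [add_comm b a, mul_comm b a] at this; omega

lemma pairs_le_choose (X : Finset (EuclideanSpace ℝ (Fin 4))) :
    (unitPairs X).card ≤ X.card.choose 2 := by
  rw [← Finset.card_powersetCard]
  exact Finset.card_le_card (Finset.filter_subset _ _)

lemma crude (n : ℕ) : 1 ≤ n → ∀ X : Finset (EuclideanSpace ℝ (Fin 4)), X.card = n →
    (∀ x ∈ X, ∀ y ∈ X, ‖x - y‖ ≤ 1) → 4 * (unitPairs X).card + 4 ≤ n ^ 2 + 6 * n := by
  induction n using Nat.strong_induction_on with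
  | _ n ih =>
  intro hn X hX hd
  by_contra hcon
  push Not at hcon
  have h8 : 8 ≤ n := by
    by_contra h
    push Not at h
    have := pairs_le_choose X
    rw [hX] at this
    interval_cases n <;> simp only [Nat.choose] at this <;> omega
  have hk : 4 * X.card.choose 3 < ∑ x ∈ X, (dg X x).choose 3 := by
    have h8' : (8 : ℝ) ≤ n := by exact_mod_cast h8
    have hj := jensen X (n / 2 + 3) (by linarith)
    have hc3 := choose3 n
    have hcon' : (n : ℝ) ^ 2 + 6 * n + 1 ≤ 4 * (unitPairs X).card + 4 := by exact_mod_cast hcon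
    rw [hX] at hj ⊢
    suffices hh : (4 : ℝ) * (n.choose 3 : ℝ) < ((∑ x ∈ X, (dg X x).choose 3 : ℕ) : ℝ) by exact_mod_cast hh
    generalize ((∑ x ∈ X, (dg X x).choose 3 : ℕ) : ℝ) = S at *
    generalize (n.choose 3 : ℝ) = C at *
    generalize ((unitPairs X).card : ℝ) = e at *
    generalize (n : ℝ) = w at *
    have hm : (3 * (w / 2 + 3) ^ 2 - 6 * (w / 2 + 3) + 2) * (-2) ≤
      (3 * (w / 2 + 3) ^ 2 - 6 * (w / 2 + 3) + 2) * (2 * e - w * (w / 2 + 3)) := by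
      apply mul_le_mul_of_nonneg_left
      · linarith
      · nlinarith
    have hpoly : 0 < w ^ 2 * (w - 10) ^ 2 / 8 + 3.5 * w ^ 2 - 14 * w - 22 := by
      have : 0 ≤ w ^ 2 * (w - 10) ^ 2 / 8 := by positivity
      nlinarith
    nlinarith
  obtain ⟨A0, hA0, cA0, hB⟩ := kst X 4 hk
  obtain ⟨W, a, b, eA, eB, hWX, hc, hab, hle, hP⟩ := split X A0 hd hA0 cA0 5 (by norm_num) hB
  have h4 := arith_sq a b eA eB hP
  rw [hX] at hc
  rcases Nat.eq_zero_or_pos W.card with h0 | h0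
  · have hW0 : (unitPairs W).card = 0 := by
      have := pairs_le_choose W
      rw [h0] at this; simpa using this
    rw [h0, hW0] at hle
    rw [h0] at hc
    have : a + b = n := by omega
    rw [this] at h4
    nlinarith
  · have hi := ih W.card (by omega) h0 W rfl (fun x hx y hy => hd x (hWX hx) y (hWX hy))
    generalize W.card = w at *
    generalize (unitPairs W).card = eW at *
    generalize (unitPairs X).card = eX at *
    generalize a * b + eA + eB = q at *
    obtain ⟨m, hm⟩ : ∃ m, a + b = m := ⟨_, rfl⟩
    have hab' : 8 ≤ m := by omega
    rw [hm] at h4 hc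
    subst hc
    have : 8 * w ≤ m * w := Nat.mul_le_mul_right w hab'
    nlinarith

lemma upper (n : ℕ) (hn : n ≥ 52) (X : Finset (EuclideanSpace ℝ (Fin 4))) (hX : X.card = n)
    (hd : ∀ x ∈ X, ∀ y ∈ X, ‖x - y‖ ≤ 1) : (unitPairs X).card ≤ F₂ n := by
  by_contra hcon
  push Not at hcon
  have hl := F2_lower n
  have hk : 6 * X.card.choose 3 < ∑ x ∈ X, (dg X x).choose 3 := by
    have h8' : (52 : ℝ) ≤ n := by exact_mod_cast hn
    have hj := jensen X (n / 2 + 1) (by linarith)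
    have hc3 := choose3 n
    have hcon' : ((n : ℝ) + 1) ^ 2 ≤ 4 * (unitPairs X).card := by
      have : (n + 1) ^ 2 ≤ 4 * (unitPairs X).card := by omega
      exact_mod_cast this
    rw [hX] at hj ⊢
    suffices hh : (6 : ℝ) * (n.choose 3 : ℝ) < ((∑ x ∈ X, (dg X x).choose 3 : ℕ) : ℝ) by exact_mod_cast hh
    generalize ((∑ x ∈ X, (dg X x).choose 3 : ℕ) : ℝ) = S at *
    generalize (n.choose 3 : ℝ) = C at *
    generalize ((unitPairs X).card : ℝ) = e at *
    generalize (n : ℝ) = w at *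
    have hm : 0 ≤
      (3 * (w / 2 + 1) ^ 2 - 6 * (w / 2 + 1) + 2) * (2 * e - w * (w / 2 + 1)) := by
      apply mul_nonneg
      · nlinarith
      · nlinarith
    have hpoly : 0 < w * (w ^ 2 * (w - 48) / 8 + 17.5 * w - 12) := by
      have : 0 ≤ w ^ 2 * (w - 48) / 8 := by
        apply div_nonneg (mul_nonneg (by positivity) (by linarith)) (by norm_num)
      apply mul_pos (by linarith) (by linarith)
    nlinarith
  obtain ⟨A0, hA0, cA0, hB⟩ := kst X 6 hk
  obtain ⟨W, a, b, eA, eB, hWX, hc, hab, hle, hP⟩ := split X A0 hd hA0 cA0 7 (by norm_num) hB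
  have h4 := arith_sq a b eA eB hP
  rw [hX] at hc
  rcases Nat.eq_zero_or_pos W.card with h0 | h0
  · have hW0 : (unitPairs W).card = 0 := by
      have := pairs_le_choose W
      rw [h0] at this; simpa using this
    rw [h0, hW0] at hle
    rw [h0] at hc
    have h5 : a + b = n := by omega
    have := F2_upper a b eA eB hP
    rw [h5] at this
    omega
  · have hi := crude W.card h0 W rfl (fun x hx y hy => hd x (hWX hx) y (hWX hy))
    generalize W.card = w at *
    generalize (unitPairs W).card = eW at *
    generalize (unitPairs X).card = eX at *
    generalize a * b + eA + eB = q at *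
    obtain ⟨m, hm⟩ : ∃ m, a + b = m := ⟨_, rfl⟩
    have hab' : 10 ≤ m := by omega
    rw [hm] at h4 hc
    subst hc
    have : 10 * w ≤ m * w := Nat.mul_le_mul_right w hab'
    nlinarith

/-! The construction -/

/-- embedding of the product of two complex planes -/
noncomputable def emb (z w : ℂ) : EuclideanSpace ℝ (Fin 4) := !₂[z.re, z.im, w.re, w.im]

lemma emb_norm (z w z' w' : ℂ) : ‖emb z w - emb z' w'‖ ^ 2 = ‖z - z'‖ ^ 2 + ‖w - w'‖ ^ 2 := by
  rw [EuclideanSpace.norm_sq_eq, Complex.sq_norm, Complex.sq_norm, Complex.normSq_apply, Complex.normSq_apply]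
  simp [emb, Fin.sum_univ_four]
  ring

lemma emb_norm_left (z z' : ℂ) : ‖emb z 0 - emb z' 0‖ = ‖z - z'‖ := by
  have := emb_norm z 0 z' 0
  rw [← sq_eq_sq₀ (norm_nonneg _) (norm_nonneg _), this]; simp

lemma emb_norm_right (z z' : ℂ) : ‖emb 0 z - emb 0 z'‖ = ‖z - z'‖ := by
  have := emb_norm 0 z 0 z'
  rw [← sq_eq_sq₀ (norm_nonneg _) (norm_nonneg _), this]; simp

lemma build (P Q : Finset ℂ) (r₁ r₂ : ℝ) (h12 : r₁ ^ 2 + r₂ ^ 2 = 1)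
    (hP : ∀ z ∈ P, ‖z‖ = r₁) (hQ : ∀ z ∈ Q, ‖z‖ = r₂)
    (dP : ∀ z ∈ P, ∀ w ∈ P, ‖z - w‖ ≤ 1) (dQ : ∀ z ∈ Q, ∀ w ∈ Q, ‖z - w‖ ≤ 1)
    (nP : ∀ z ∈ P, ∃ v ∈ P, ∃ w ∈ P, v ≠ w ∧ ‖z - v‖ = 1 ∧ ‖z - w‖ = 1)
    (nQ : ∃ z ∈ Q, ∃ w ∈ Q, ‖z - w‖ = 1) :
    ∃ X : Finset (EuclideanSpace ℝ (Fin 4)), X.card = P.card + Q.card ∧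
      (∀ x ∈ X, ∀ y ∈ X, ‖x - y‖ ≤ 1) ∧ P.card * Q.card + P.card + 1 ≤ (unitPairs X).card := by
  have ileft : Function.Injective (fun z => emb z 0) := by
    intro z z' h
    have := emb_norm_left z z'
    simp only at h
    rw [h, sub_self, norm_zero] at this
    exact sub_eq_zero.1 (norm_eq_zero.1 this.symm)
  have iright : Function.Injective (fun z => emb 0 z) := by
    intro z z' h
    have := emb_norm_right z z'
    simp only at h
    rw [h, sub_self, norm_zero] at this
    exact sub_eq_zero.1 (norm_eq_zero.1 this.symm)
  set A := P.image (fun z => emb z 0) with hA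
  set B := Q.image (fun z => emb 0 z) with hB
  have cA : A.card = P.card := Finset.card_image_of_injective _ ileft
  have cB : B.card = Q.card := Finset.card_image_of_injective _ iright
  have hAB : ∀ x ∈ A, ∀ y ∈ B, ‖x - y‖ = 1 := by
    intro x hx y hy
    obtain ⟨z, hz, rfl⟩ := Finset.mem_image.1 hx
    obtain ⟨w, hw, rfl⟩ := Finset.mem_image.1 hy
    have := emb_norm z 0 0 w
    rw [sub_zero, zero_sub, norm_neg, hP z hz, hQ w hw, h12] at this
    nlinarith [norm_nonneg (emb z 0 - emb 0 w)]
  have hAA : ∀ x ∈ A, ∀ y ∈ A, ‖x - y‖ ≤ 1 := by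
    intro x hx y hy
    obtain ⟨z, hz, rfl⟩ := Finset.mem_image.1 hx
    obtain ⟨w, hw, rfl⟩ := Finset.mem_image.1 hy
    rw [emb_norm_left]; exact dP z hz w hw
  have hBB : ∀ x ∈ B, ∀ y ∈ B, ‖x - y‖ ≤ 1 := by
    intro x hx y hy
    obtain ⟨z, hz, rfl⟩ := Finset.mem_image.1 hx
    obtain ⟨w, hw, rfl⟩ := Finset.mem_image.1 hy
    rw [emb_norm_right]; exact dQ z hz w hw
  have hdisj : Disjoint A B := by
    rw [Finset.disjoint_left]
    intro x h1 h2
    have := hAB x h1 x h2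
    simp at this
  refine ⟨A ∪ B, by rw [Finset.card_union_of_disjoint hdisj, cA, cB], ?_, ?_⟩
  · intro x hx y hy
    rcases Finset.mem_union.1 hx with hx | hx <;> rcases Finset.mem_union.1 hy with hy | hy
    · exact hAA x hx y hy
    · exact (hAB x hx y hy).le
    · rw [norm_sub_rev]; exact (hAB y hy x hx).le
    · exact hBB x hx y hy
  · have e := ed_self (A ∪ B)
    rw [ed_union_left _ _ _ hdisj, ed_union_right _ _ _ hdisj, ed_union_right _ _ _ hdisj, ed_comm B A] at e
    have e1 : ed A B = P.card * Q.card := by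
      unfold ed
      rw [Finset.sum_congr rfl (g := fun _ => Q.card), Finset.sum_const, cA, smul_eq_mul]
      intro x hx
      unfold dg
      rw [Finset.filter_true_of_mem (fun y hy => hAB x hx y hy), cB]
    have e2 : 2 * P.card ≤ ed A A := by
      have := Finset.card_nsmul_le_sum A (dg A) 2 (by
        intro x hx
        obtain ⟨z, hz, rfl⟩ := Finset.mem_image.1 hx
        obtain ⟨v, hv, w, hw, hvw, h1, h2⟩ := nP z hz
        apply Nat.succ_le_of_lt
        apply Finset.one_lt_card.2
        refine ⟨emb v 0, ?_, emb w 0, ?_, fun h => hvw (ileft h)⟩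
        · exact Finset.mem_filter.2 ⟨Finset.mem_image_of_mem _ hv, by rw [emb_norm_left]; exact h1⟩
        · exact Finset.mem_filter.2 ⟨Finset.mem_image_of_mem _ hw, by rw [emb_norm_left]; exact h2⟩)
      rw [cA, smul_eq_mul] at this
      have h2 : P.card * 2 ≤ ed A A := this
      omega
    have e3 : 1 ≤ (unitPairs B).card := by
      obtain ⟨z, hz, w, hw, h⟩ := nQ
      have hpos : 0 < ed B B := by
        have hzB : emb 0 z ∈ B := Finset.mem_image_of_mem _ hz
        apply lt_of_lt_of_le _ (Finset.single_le_sum (fun x _ => Nat.zero_le (dg B x)) hzB)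
        apply Finset.card_pos.2
        exact ⟨emb 0 w, Finset.mem_filter.2 ⟨Finset.mem_image_of_mem _ hw, by rw [emb_norm_right]; exact h⟩⟩
      rw [ed_self] at hpos
      omega
    have e4 := ed_self B
    omega

lemma unit_of_sq (x : ℂ) (h : ‖x‖ ^ 2 = 1) : ‖x‖ = 1 := by nlinarith [norm_nonneg x]

lemma exp_norm_sub (r s t : ℝ) :
    ‖(r : ℂ) * Complex.exp (s * Complex.I) - r * Complex.exp (t * Complex.I)‖ ^ 2 =
      2 * r ^ 2 * (1 - Real.cos (s - t)) := by
  rw [Complex.sq_norm, Complex.normSq_apply, Real.cos_sub]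
  simp [Complex.exp_ofReal_mul_I_re, Complex.exp_ofReal_mul_I_im]
  nlinarith [Real.sin_sq_add_cos_sq s, Real.sin_sq_add_cos_sq t]

lemma exp_norm (r t : ℝ) (hr : 0 ≤ r) : ‖(r : ℂ) * Complex.exp (t * Complex.I)‖ = r := by
  rw [norm_mul, Complex.norm_exp_ofReal_mul_I, mul_one, Complex.norm_real, Real.norm_eq_abs, abs_of_nonneg hr]

lemma arc (b : ℕ) (hb : 2 ≤ b) (r : ℝ) (hr : 0 < r) (hr2 : 1 / 2 ≤ r ^ 2) :
    ∃ Q : Finset ℂ, Q.card = b ∧ (∀ z ∈ Q, ‖z‖ = r) ∧ (∀ z ∈ Q, ∀ w ∈ Q, ‖z - w‖ ≤ 1) ∧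
      (∃ z ∈ Q, ∃ w ∈ Q, ‖z - w‖ = 1) := by
  set c : ℝ := 1 - 1 / (2 * r ^ 2) with hc
  have hc0 : 0 ≤ c := by
    have : 1 / (2 * r ^ 2) ≤ 1 := by rw [div_le_one (by positivity)]; linarith
    linarith
  have hc1 : c < 1 := by
    have : 0 < 1 / (2 * r ^ 2) := by positivity
    linarith
  have hcr : 2 * r ^ 2 * (1 - c) = 1 := by rw [hc]; field_simp; ring
  set φ := Real.arccos c with hφ
  have hφ0 : 0 < φ := Real.arccos_pos.2 hc1
  have hφπ : φ ≤ Real.pi := Real.arccos_le_pi c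
  have hcos : Real.cos φ = c := Real.cos_arccos (by linarith) hc1.le
  have hb1 : (0 : ℝ) < b - 1 := by
    have : (2 : ℝ) ≤ b := by exact_mod_cast hb
    linarith
  set θ : ℕ → ℝ := fun j => φ * (j / (b - 1)) with hθ
  set p : ℕ → ℂ := fun j => (r : ℂ) * Complex.exp ((θ j : ℝ) * Complex.I) with hp
  have hdiff : ∀ i < b, ∀ j < b, |θ i - θ j| ≤ φ := by
    intro i hi j hj
    have h1 : (i : ℝ) ≤ b - 1 := by
      have : ((i + 1 : ℕ) : ℝ) ≤ b := by exact_mod_cast hi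
      push_cast at this; linarith
    have h2 : (j : ℝ) ≤ b - 1 := by
      have : ((j + 1 : ℕ) : ℝ) ≤ b := by exact_mod_cast hj
      push_cast at this; linarith
    have b1 : ∀ x : ℝ, 0 ≤ x → x ≤ b - 1 → 0 ≤ φ * (x / (b - 1)) ∧ φ * (x / (b - 1)) ≤ φ := by
      intro x h0 h1
      have : x / (b - 1) ≤ 1 := by rw [div_le_one hb1]; exact h1
      have h3 : 0 ≤ x / (b - 1) := div_nonneg h0 hb1.le
      constructor
      · positivity
      · nlinarith
    have := b1 i (Nat.cast_nonneg _) h1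
    have := b1 j (Nat.cast_nonneg _) h2
    rw [abs_le]; constructor <;> simp only [hθ] <;> linarith
  have hinj : Set.InjOn p (Finset.range b : Finset ℕ) := by
    intro i hi j hj h
    simp only [Finset.coe_range, Set.mem_Iio] at hi hj
    have e := exp_norm_sub r (θ i) (θ j)
    have h' : (r : ℂ) * Complex.exp ((θ i : ℝ) * Complex.I) = r * Complex.exp ((θ j : ℝ) * Complex.I) := h
    rw [h', sub_self, norm_zero] at e
    have e1 : Real.cos (θ i - θ j) = 1 := by
      have : 0 < 2 * r ^ 2 := by positivity
      have e2 : (2 * r ^ 2) * (1 - Real.cos (θ i - θ j)) = 0 := by rw [← e]; norm_num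
      rcases mul_eq_zero.1 e2 with h | h <;> linarith
    have hd := hdiff i hi j hj
    have hz : θ i - θ j = 0 := by
      rw [← Real.cos_eq_one_iff_of_lt_of_lt]
      · exact e1
      · have := (abs_le.1 hd).1; linarith [Real.pi_pos]
      · have := (abs_le.1 hd).2; linarith [Real.pi_pos]
    have h4 : φ * (i / (b - 1)) = φ * (j / (b - 1)) := by
      have := sub_eq_zero.1 hz
      exact this
    have h5 := mul_left_cancel₀ hφ0.ne' h4
    rw [div_left_inj' hb1.ne'] at h5
    exact_mod_cast h5
  refine ⟨(Finset.range b).image p, ?_, ?_, ?_, ?_⟩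
  · rw [Finset.card_image_of_injOn hinj, Finset.card_range]
  · intro z hz
    obtain ⟨j, -, rfl⟩ := Finset.mem_image.1 hz
    exact exp_norm r _ hr.le
  · intro z hz w hw
    obtain ⟨i, hi, rfl⟩ := Finset.mem_image.1 hz
    obtain ⟨j, hj, rfl⟩ := Finset.mem_image.1 hw
    have hd := hdiff i (Finset.mem_range.1 hi) j (Finset.mem_range.1 hj)
    have e := exp_norm_sub r (θ i) (θ j)
    have h1 : c ≤ Real.cos (θ i - θ j) := by
      rw [← Real.cos_abs (θ i - θ j), ← hcos]
      exact Real.cos_le_cos_of_nonneg_of_le_pi (abs_nonneg _) hφπ hd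
    have h2 : ‖p i - p j‖ ^ 2 ≤ 1 := by
      simp only [hp]
      rw [e, ← hcr]
      apply mul_le_mul_of_nonneg_left _ (by positivity)
      linarith
    nlinarith [norm_nonneg (p i - p j)]
  · refine ⟨p (b - 1), Finset.mem_image_of_mem _ (Finset.mem_range.2 (by omega)), p 0,
      Finset.mem_image_of_mem _ (Finset.mem_range.2 (by omega)), ?_⟩
    apply unit_of_sq
    have e := exp_norm_sub r (θ (b - 1)) (θ 0)
    simp only [hp]
    rw [e]
    have h0 : θ 0 = 0 := by simp [hθ]
    have h1 : θ (b - 1) = φ := by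
      simp only [hθ]
      rw [Nat.cast_sub (by omega), Nat.cast_one, div_self hb1.ne', mul_one]
    rw [h0, h1, sub_zero, hcos, hcr]

lemma polygon (m : ℕ) (hm : 1 ≤ m) :
    ∃ (P : Finset ℂ) (r : ℝ), 0 < r ∧ r ^ 2 ≤ 1 / 2 ∧ P.card = 2 * m + 1 ∧ (∀ z ∈ P, ‖z‖ = r) ∧
      (∀ z ∈ P, ∀ w ∈ P, ‖z - w‖ ≤ 1) ∧
      (∀ z ∈ P, ∃ v ∈ P, ∃ w ∈ P, v ≠ w ∧ ‖z - v‖ = 1 ∧ ‖z - w‖ = 1) := by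
  obtain ⟨a, ha⟩ : ∃ a, a = 2 * m + 1 := ⟨_, rfl⟩
  have haR : (a : ℝ) = 2 * m + 1 := by rw [ha]; push_cast; ring
  have hmR : (1 : ℝ) ≤ m := by exact_mod_cast hm
  have ha0 : a ≠ 0 := by omega
  have haR0 : (0 : ℝ) < a := by linarith
  have hπ := Real.pi_pos
  set κ := Real.cos (Real.pi / a) with hκ
  have hπa : Real.pi / a ≤ Real.pi / 2 := by
    apply div_le_div_of_nonneg_left hπ.le (by norm_num); linarith
  have hκ0 : 0 ≤ κ := Real.cos_nonneg_of_neg_pi_div_two_le_of_le (by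
    have : 0 < Real.pi / a := by positivity
    linarith) hπa
  set r := √(1 / (2 + 2 * κ)) with hr
  have hr2 : r ^ 2 = 1 / (2 + 2 * κ) := Real.sq_sqrt (by positivity)
  have hr0 : 0 < r := Real.sqrt_pos.2 (by positivity)
  have hrr : 2 * r ^ 2 * (1 + κ) = 1 := by rw [hr2]; field_simp
  set p : ℤ → ℂ := fun j => (r : ℂ) * Complex.exp (((2 * Real.pi * j / a : ℝ) : ℂ) * Complex.I) with hp
  have hdist : ∀ i j : ℤ, ‖p i - p j‖ ^ 2 = 2 * r ^ 2 * (1 - Real.cos (2 * Real.pi * (i - j : ℤ) / a)) := by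
    intro i j
    simp only [hp]
    rw [exp_norm_sub]
    congr 3
    push_cast; ring
  have hper : ∀ j : ℤ, p (j % a) = p j := by
    intro j
    have : ‖p (j % a) - p j‖ ^ 2 = 0 := by
      rw [hdist]
      have h1 : (j % a - j : ℤ) = a * (-(j / a)) := by
        have := Int.emod_add_mul_ediv j a
        linarith
      rw [h1]
      have h2 : 2 * Real.pi * ((a * (-(j / a)) : ℤ) : ℝ) / a = ((-(j / a) : ℤ) : ℝ) * (2 * Real.pi) := by
        push_cast; field_simp
      rw [h2, Real.cos_int_mul_two_pi]; ring
    have h0 : ‖p (j % a) - p j‖ = 0 := by simpa using this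
    exact sub_eq_zero.1 (norm_eq_zero.1 h0)
  set P := (Finset.Ico (0 : ℤ) a).image p with hP
  have hmem : ∀ j : ℤ, p j ∈ P := by
    intro j
    rw [← hper]
    apply Finset.mem_image_of_mem
    rw [Finset.mem_Ico]
    exact ⟨Int.emod_nonneg _ (by exact_mod_cast ha0), Int.emod_lt_of_pos _ (by omega)⟩
  have hcosle : ∀ j : ℤ, 0 ≤ j → j < a → -κ ≤ Real.cos (2 * Real.pi * j / a) := by
    intro j h0 h1
    have e : Real.cos (2 * Real.pi * j / a) = - Real.cos (|Real.pi * (2 * j - a) / a|) := by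
      rw [Real.cos_abs]
      have : Real.pi * (2 * j - a) / a = 2 * Real.pi * j / a - Real.pi := by field_simp
      rw [this, Real.cos_sub_pi]; ring
    rw [e, neg_le_neg_iff, hκ]
    have habs : |Real.pi * (2 * j - a) / a| = Real.pi * |(2 * j - a : ℝ)| / a := by
      rw [abs_div, abs_mul, abs_of_pos hπ, abs_of_pos haR0]
    have i1 : (1 : ℝ) ≤ |(2 * j - a : ℝ)| := by
      have : (1 : ℤ) ≤ |2 * j - a| := by
        rw [le_abs]; omega
      exact_mod_cast this
    have i2 : |(2 * j - a : ℝ)| ≤ a := by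
      have : |2 * j - (a : ℤ)| ≤ a := by
        rw [abs_le]; omega
      exact_mod_cast this
    apply Real.cos_le_cos_of_nonneg_of_le_pi
    · positivity
    · rw [habs, div_le_iff₀ haR0]; exact mul_le_mul_of_nonneg_left i2 hπ.le
    · rw [habs]
      apply div_le_div_of_nonneg_right _ haR0.le
      nlinarith
  have hne : ∀ j : ℤ, 0 < j → j < a → Real.cos (2 * Real.pi * j / a) ≠ 1 := by
    intro j h0 h1 h
    have h0' : (0 : ℝ) < j := by exact_mod_cast h0
    have h1' : (j : ℝ) < a := by exact_mod_cast h1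
    have := (Real.cos_eq_one_iff_of_lt_of_lt (x := 2 * Real.pi * j / a)
      (by have : 0 < 2 * Real.pi * j / a := by positivity
          linarith)
      (by rw [div_lt_iff₀ haR0]; nlinarith)).1 h
    have : 0 < 2 * Real.pi * j / a := by positivity
    linarith
  have hinj : Set.InjOn p (Finset.Ico (0 : ℤ) a : Finset ℤ) := by
    have key : ∀ i j : ℤ, 0 ≤ j → i < a → j < i → p i ≠ p j := by
      intro i j h0 h1 h2 h
      have := hdist i j
      rw [h, sub_self, norm_zero] at this
      apply hne (i - j) (by omega) (by omega)
      have h3 : 2 * r ^ 2 * (1 - Real.cos (2 * Real.pi * (i - j : ℤ) / a)) = 0 := by rw [← this]; norm_num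
      have : 0 < 2 * r ^ 2 := by positivity
      rcases mul_eq_zero.1 h3 with h | h <;> linarith
    intro i hi j hj h
    simp only [Finset.coe_Ico, Set.mem_Ico] at hi hj
    rcases lt_trichotomy i j with h' | h' | h'
    · exact absurd h.symm (key j i hi.1 hj.2 h')
    · exact h'
    · exact absurd h (key i j hj.1 hi.2 h')
  have hhalf : ∀ i j : ℤ, (i - j = m ∨ i - j = -m) → ‖p i - p j‖ = 1 := by
    intro i j hij
    apply unit_of_sq
    rw [hdist]
    refine Eq.trans ?_ hrr
    congr 1
    have e : Real.cos (2 * Real.pi * m / a) = -κ := by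
      have : 2 * Real.pi * m / a = Real.pi - Real.pi / a := by
        field_simp; rw [haR]; ring
      rw [this, Real.cos_pi_sub]
    rcases hij with h | h <;> rw [h]
    · push_cast; rw [e]; ring
    · push_cast
      have : 2 * Real.pi * (-(m : ℝ)) / a = -(2 * Real.pi * m / a) := by ring
      rw [this, Real.cos_neg, e]; ring
  refine ⟨P, r, hr0, ?_, ?_, ?_, ?_, ?_⟩
  · rw [hr2]
    apply one_div_le_one_div_of_le <;> linarith
  · rw [hP, Finset.card_image_of_injOn hinj, Int.card_Ico]; omega
  · intro z hz
    obtain ⟨j, -, rfl⟩ := Finset.mem_image.1 hz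
    exact exp_norm r _ hr0.le
  · have key : ∀ i j : ℤ, 0 ≤ j → i < a → j ≤ i → ‖p i - p j‖ ≤ 1 := by
      intro i j h0 h1 h2
      have h := hdist i j
      have hc := hcosle (i - j) (by omega) (by omega)
      have : ‖p i - p j‖ ^ 2 ≤ 1 := by
        rw [h, ← hrr]
        apply mul_le_mul_of_nonneg_left _ (by positivity)
        linarith
      nlinarith [norm_nonneg (p i - p j)]
    intro z hz w hw
    obtain ⟨i, hi, rfl⟩ := Finset.mem_image.1 hz
    obtain ⟨j, hj, rfl⟩ := Finset.mem_image.1 hw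
    rw [Finset.mem_Ico] at hi hj
    rcases le_total j i with h | h
    · exact key i j hj.1 hi.2 h
    · rw [norm_sub_rev]; exact key j i hi.1 hj.2 h
  · intro z hz
    obtain ⟨i, hi, rfl⟩ := Finset.mem_image.1 hz
    refine ⟨p (i + m), hmem _, p (i - m), hmem _, ?_, hhalf _ _ (by omega), hhalf _ _ (by omega)⟩
    intro h
    have := hdist (i + m) (i - m)
    rw [h, sub_self, norm_zero] at this
    apply hne ((i + m) - (i - m)) (by omega) (by omega)
    have h3 : 2 * r ^ 2 * (1 - Real.cos (2 * Real.pi * ((i + m) - (i - m) : ℤ) / a)) = 0 := by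
      rw [← this]; norm_num
    have : 0 < 2 * r ^ 2 := by positivity
    rcases mul_eq_zero.1 h3 with h | h <;> linarith

lemma lower (n : ℕ) (hn : n ≥ 52) : ∃ X : Finset (EuclideanSpace ℝ (Fin 4)), X.card = n ∧
      (∀ x ∈ X, ∀ y ∈ X, ‖x - y‖ ≤ 1) ∧ F₂ n ≤ (unitPairs X).card := by
  obtain ⟨k, hk⟩ := F2_cases n
  have hk1 : 1 ≤ k := by omega
  obtain ⟨P, r, hr0, hr2, cP, nP, dP, hP⟩ := polygon k hk1
  have h1 : (√(1 - r ^ 2)) ^ 2 = 1 - r ^ 2 := Real.sq_sqrt (by linarith)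
  obtain ⟨Q, cQ, nQ, dQ, hQ⟩ := arc (n - (2 * k + 1)) (by omega) (√(1 - r ^ 2))
    (Real.sqrt_pos.2 (by linarith)) (by rw [h1]; linarith)
  obtain ⟨X, cX, dX, hX⟩ := build P Q r (√(1 - r ^ 2)) (by rw [h1]; ring) nP nQ dP dQ hP hQ
  refine ⟨X, by omega, dX, le_trans ?_ hX⟩
  rw [cP, cQ]
  rcases hk with ⟨h, e⟩ | ⟨h, e⟩ | ⟨h, e⟩ | ⟨h, e⟩ <;> rw [e]
  · obtain ⟨j, rfl⟩ : ∃ j, k = j + 1 := ⟨k - 1, by omega⟩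
    have : n - (2 * (j + 1) + 1) = 2 * j + 1 := by omega
    rw [this]; nlinarith
  · have : n - (2 * k + 1) = 2 * k := by omega
    rw [this]; nlinarith
  · have : n - (2 * k + 1) = 2 * k + 1 := by omega
    rw [this]; nlinarith
  · have : n - (2 * k + 1) = 2 * k + 2 := by omega
    rw [this]; nlinarith


theorem max_edges_diameter_graph_R4 (n : ℕ) (hn : n ≥ 52) :
    (∀ X : Finset (EuclideanSpace ℝ (Fin 4)), X.card = n →
      (∀ x ∈ X, ∀ y ∈ X, ‖x - y‖ ≤ 1) → (unitPairs X).card ≤ F₂ n) ∧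
    (∃ X : Finset (EuclideanSpace ℝ (Fin 4)), X.card = n ∧
      (∀ x ∈ X, ∀ y ∈ X, ‖x - y‖ ≤ 1) ∧ (unitPairs X).card = F₂ n) := by
  refine ⟨fun X hX hd => upper n hn X hX hd, ?_⟩
  obtain ⟨X, hX, hd, hF⟩ := lower n hn
  exact ⟨X, hX, hd, le_antisymm (upper n hn X hX hd) hF⟩
end
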